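/- arXiv:2105.13819 — 12 statements merged into one kernel-verified Lean document; each statement's English description precedes it below -/
import Mathlib

section
/- There is a universal constant C < ∞ with the following property. Let τ⋆ ∈ ℝ, let ρ : (−∞,τ⋆] → [1,∞) be differentiable with −ρ(τ) ≤ ρ′(τ) ≤ 0, let χ : [0,∞) → [0,1] be smooth with χ ≡ 1 on [0,1] and χ ≡ 0 on [2,∞), and let u = u(y,τ) be a C² function defined for τ ≤ τ⋆ and |y| < 3ρ(τ) (y = (y₁,y₂) ∈ ℝ²), with u ≥ −1, satisfying the bubble-sheet graph equation u_τ = 𝓛u − u²/(2√2) − u³/(4 + 2√2·u) − |∇u|²·Δu/(1 + |∇u|²), where ∇ and Δ are taken in the y-variables. Then the truncated function û(y,τ) := u(y,τ)·χ(|y|/ρ(τ)) satisfies ∂_τ û = 𝓛û − û²/(2√2) + E, where the error term E := ∂_τ û − 𝓛û + û²/(2√2) obeys the pointwise bound |E| ≤ C·[ χ·|u|³ + χ·|∇u|²·|∇²u| + |χ′|·ρ⁻¹·(|∇u| + |y|·|u|) + |χ″|·ρ⁻²·|u| + χ(1−χ)·(|u|² + |∇²u|²) ], with χ, χ′, χ″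 evaluated at |y|/ρ(τ). -/
noncomputable section

/-- Partial derivative in the first spatial variable `y₁`. -/
def pd1 (f : ℝ × ℝ × ℝ → ℝ) (p : ℝ × ℝ × ℝ) : ℝ :=
  deriv (fun s => f (s, p.2.1, p.2.2)) p.1

/-- Partial derivative in the second spatial variable `y₂`. -/
def pd2 (f : ℝ × ℝ × ℝ → ℝ) (p : ℝ × ℝ × ℝ) : ℝ :=
  deriv (fun s => f (p.1, s, p.2.2)) p.2.1

/-- Partial derivative in the time variable `τ`. -/
def pdt (f : ℝ × ℝ × ℝ → ℝ) (p : ℝ × ℝ × ℝ) : ℝ :=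
  deriv (fun s => f (p.1, p.2.1, s)) p.2.2

/-- Squared norm `|∇f|²` of the spatial gradient. -/
def gradSq (f : ℝ × ℝ × ℝ → ℝ) (p : ℝ × ℝ × ℝ) : ℝ :=
  (pd1 f p) ^ 2 + (pd2 f p) ^ 2

/-- Spatial Laplacian `Δf`. -/
def lap (f : ℝ × ℝ × ℝ → ℝ) (p : ℝ × ℝ × ℝ) : ℝ :=
  pd1 (pd1 f) p + pd2 (pd2 f) p

/-- Norm `|∇²f|` of the spatial Hessian. -/
def hessNorm (f : ℝ × ℝ × ℝ → ℝ) (p : ℝ × ℝ × ℝ) : ℝ :=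
  Real.sqrt ((pd1 (pd1 f) p) ^ 2 + (pd1 (pd2 f) p) ^ 2 + (pd2 (pd1 f) p) ^ 2
    + (pd2 (pd2 f) p) ^ 2)

/-- The two-dimensional Ornstein–Uhlenbeck operator
`𝓛f = Δf − (y₁/2)f_{y₁} − (y₂/2)f_{y₂} + f`. -/
def OU (f : ℝ × ℝ × ℝ → ℝ) (p : ℝ × ℝ × ℝ) : ℝ :=
  lap f p - p.1 / 2 * pd1 f p - p.2.1 / 2 * pd2 f p + f p

/-- The spatial radius `|y|`. -/
def rad (p : ℝ × ℝ × ℝ) : ℝ := Real.sqrt (p.1 ^ 2 + p.2.1 ^ 2)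

/-- The truncated function `û(y,τ) = u(y,τ)·χ(|y|/ρ(τ))`. -/
def hatu (ρ χ : ℝ → ℝ) (u : ℝ × ℝ × ℝ → ℝ) (p : ℝ × ℝ × ℝ) : ℝ :=
  u p * χ (rad p / ρ p.2.2)

/-- The error term `E = ∂_τ û − 𝓛û + û²/(2√2)`. -/
def Eerr (ρ χ : ℝ → ℝ) (u : ℝ × ℝ × ℝ → ℝ) (p : ℝ × ℝ × ℝ) : ℝ :=
  pdt (hatu ρ χ u) p - OU (hatu ρ χ u) p + (hatu ρ χ u p) ^ 2 / (2 * Real.sqrt 2)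

open Filter Topology Set

/-!
Write `û = u φ` with the cutoff `φ = χ(|y|/ρ)`, and let `P = ∂_τ − Δ + (y/2)·∇`, so that
`∂_τ − 𝓛 = P − 1`. The Leibniz rule `P(uφ) = φ Pu + u Pφ − 2 ∇u·∇φ` gives
`E = φ (∂_τ u − 𝓛u + u²/(2√2)) + u Pφ − 2 ∇u·∇φ − φ(1 − φ) u²/(2√2)`.
The equation for `u` bounds the first bracket by `|u|³ + √2 |∇u|² |∇²u|`. For `|y| < ρ` the
cutoff is locally constant. For `|y| ≥ ρ ≥ 1` one has `|∇φ| = |χ'|/ρ`, and in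
`Pφ = −χ' |y| ρ'/ρ² − χ''/ρ² − χ'/(ρ|y|) + χ' |y|/(2ρ)` the third term is dominated by
`|χ'| |y|/ρ` because `|y| ≥ 1`.
-/

section SecondDerivative

variable {𝕜 : Type*} [NontriviallyNormedField 𝕜] {f g : 𝕜 → 𝕜} {x : 𝕜}

lemma iteratedDeriv_two {F : Type*} [NormedAddCommGroup F] [NormedSpace 𝕜 F] (f : 𝕜 → F) :
    iteratedDeriv 2 f = deriv (deriv f) :=
  iteratedDeriv_eq_iterate

lemma deriv_deriv_mul (hf : ContDiffAt 𝕜 2 f x) (hg : ContDiffAt 𝕜 2 g x) :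
    deriv (deriv fun s => f s * g s) x
      = deriv (deriv f) x * g x + 2 * (deriv f x * deriv g x) + f x * deriv (deriv g) x := by
  simp only [← iteratedDeriv_two]
  rw [iteratedDeriv_fun_mul hf hg]
  simp only [Finset.sum_range_succ, Finset.sum_range_zero, iteratedDeriv_zero, iteratedDeriv_one,
    Nat.choose_zero_right, Nat.choose_self, Nat.choose_one_right, Nat.sub_zero, Nat.sub_self,
    Nat.add_one_sub_one]
  push_cast
  ring

lemma deriv_comp_div (c : 𝕜) : deriv (fun s => g (s / c)) = fun s => deriv g (s / c) / c := by
  funext s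
  simpa only [div_eq_inv_mul, smul_eq_mul] using deriv_comp_mul_left c⁻¹ g s

lemma deriv_deriv_comp_div (c : 𝕜) :
    deriv (deriv fun s => g (s / c)) x = deriv (deriv g) (x / c) / c ^ 2 := by
  rw [deriv_comp_div, deriv_div_const, deriv_comp_div, div_div, sq]

end SecondDerivative

section SqrtSqAdd

variable {g : ℝ → ℝ} {a x : ℝ}

lemma hasDerivAt_sqrt_sq_add (h : 0 < x ^ 2 + a) :
    HasDerivAt (fun s => √(s ^ 2 + a)) (x / √(x ^ 2 + a)) x := by
  have h_inner : HasDerivAt (fun s : ℝ => s ^ 2 + a) (2 * x) x := by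
    simpa using (hasDerivAt_pow 2 x).add_const a
  exact (h_inner.sqrt h.ne').congr_deriv (mul_div_mul_left _ _ two_ne_zero)

lemma deriv_deriv_sqrt_sq_add (h : 0 < x ^ 2 + a) :
    deriv (deriv fun s => √(s ^ 2 + a)) x = a / √(x ^ 2 + a) ^ 3 := by
  have h_pos : ∀ᶠ s in 𝓝 x, 0 < s ^ 2 + a :=
    (by fun_prop : Continuous fun s : ℝ => s ^ 2 + a).continuousAt.eventually (lt_mem_nhds h)
  have h_deriv : deriv (fun s => √(s ^ 2 + a)) =ᶠ[𝓝 x] fun s => s / √(s ^ 2 + a) :=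
    h_pos.mono fun s hs => (hasDerivAt_sqrt_sq_add hs).deriv
  have h_root : 0 < √(x ^ 2 + a) := Real.sqrt_pos.2 h
  rw [h_deriv.deriv_eq, ((hasDerivAt_id' x).fun_div (hasDerivAt_sqrt_sq_add h) h_root.ne').deriv]
  field_simp
  rw [Real.sq_sqrt h.le]
  ring

lemma deriv_comp_sqrt_sq_add (hg : DifferentiableAt ℝ g √(x ^ 2 + a)) (h : 0 < x ^ 2 + a) :
    deriv (fun s => g √(s ^ 2 + a)) x = deriv g √(x ^ 2 + a) * (x / √(x ^ 2 + a)) :=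
  (hg.hasDerivAt.comp x (hasDerivAt_sqrt_sq_add h)).deriv

lemma contDiffAt_sqrt_sq_add {n : WithTop ℕ∞} (h : 0 < x ^ 2 + a) :
    ContDiffAt ℝ n (fun s => √(s ^ 2 + a)) x :=
  ContDiffAt.sqrt (by fun_prop) h.ne'

lemma deriv_deriv_comp_sqrt_sq_add (hg : ContDiffAt ℝ 2 g √(x ^ 2 + a)) (h : 0 < x ^ 2 + a) :
    deriv (deriv fun s => g √(s ^ 2 + a)) x
      = deriv (deriv g) √(x ^ 2 + a) * (x / √(x ^ 2 + a)) ^ 2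
        + deriv g √(x ^ 2 + a) * (a / √(x ^ 2 + a) ^ 3) := by
  have h_chain := iteratedDeriv_comp_two (f := fun s => √(s ^ 2 + a)) hg (contDiffAt_sqrt_sq_add h)
  simp only [iteratedDeriv_two, deriv_deriv_sqrt_sq_add h,
    (hasDerivAt_sqrt_sq_add h).deriv] at h_chain
  exact h_chain

end SqrtSqAdd

lemma abs_cube_div_four_add_le {x : ℝ} (hx : -1 ≤ x) : |x ^ 3 / (4 + 2 * √2 * x)| ≤ |x| ^ 3 := by
  have h_sqrt : √2 ≤ 3 / 2 := by rw [Real.sqrt_le_left] <;> norm_num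
  have h_denom : 1 ≤ 4 + 2 * √2 * x := by nlinarith [Real.sqrt_nonneg 2]
  rw [abs_div, abs_pow, abs_of_pos (zero_lt_one.trans_le h_denom)]
  exact div_le_self (by positivity) h_denom

lemma sq_div_two_mul_sqrt_two_le (x : ℝ) : x ^ 2 / (2 * √2) ≤ x ^ 2 :=
  div_le_self (sq_nonneg x) (by linarith [Real.one_le_sqrt.2 one_le_two])

section SpaceTime

variable {f g : ℝ × ℝ × ℝ → ℝ} {p : ℝ × ℝ × ℝ}

/-- The function `f` is `C²` in the spatial variables at `p`. Only the spatial slice through `p` is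
constrained, because the cutoff is merely differentiable in time. -/
def SpaceContDiffAt (f : ℝ × ℝ × ℝ → ℝ) (p : ℝ × ℝ × ℝ) : Prop :=
  ContDiffAt ℝ 2 (fun y : ℝ × ℝ => f (y.1, y.2, p.2.2)) (p.1, p.2.1)

/-- The inner product `∇f·∇g` of the spatial gradients. -/
def gradInner (f g : ℝ × ℝ × ℝ → ℝ) (p : ℝ × ℝ × ℝ) : ℝ :=
  pd1 f p * pd1 g p + pd2 f p * pd2 g p

/-- The drift heat operator `∂_τ f − Δf + (y/2)·∇f`, that is `∂_τ − 𝓛` without its zeroth-order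
term. -/
def driftHeat (f : ℝ × ℝ × ℝ → ℝ) (p : ℝ × ℝ × ℝ) : ℝ :=
  pdt f p - lap f p + p.1 / 2 * pd1 f p + p.2.1 / 2 * pd2 f p

lemma SpaceContDiffAt.of_contDiffAt (hf : ContDiffAt ℝ 2 f p) : SpaceContDiffAt f p :=
  ContDiffAt.comp (g := f) (f := fun y : ℝ × ℝ => (y.1, y.2, p.2.2)) (p.1, p.2.1) hf (by fun_prop)

lemma SpaceContDiffAt.slice_fst (hf : SpaceContDiffAt f p) :
    ContDiffAt ℝ 2 (fun s => f (s, p.2.1, p.2.2)) p.1 :=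
  ContDiffAt.comp (f := fun s : ℝ => (s, p.2.1)) p.1 hf (by fun_prop)

lemma SpaceContDiffAt.slice_snd (hf : SpaceContDiffAt f p) :
    ContDiffAt ℝ 2 (fun s => f (p.1, s, p.2.2)) p.2.1 :=
  ContDiffAt.comp (f := fun s : ℝ => (p.1, s)) p.2.1 hf (by fun_prop)

lemma pd1_mul (hf : SpaceContDiffAt f p) (hg : SpaceContDiffAt g p) :
    pd1 (fun q => f q * g q) p = pd1 f p * g p + f p * pd1 g p :=
  deriv_fun_mul (hf.slice_fst.differentiableAt two_ne_zero)
    (hg.slice_fst.differentiableAt two_ne_zero)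

lemma pd2_mul (hf : SpaceContDiffAt f p) (hg : SpaceContDiffAt g p) :
    pd2 (fun q => f q * g q) p = pd2 f p * g p + f p * pd2 g p :=
  deriv_fun_mul (hf.slice_snd.differentiableAt two_ne_zero)
    (hg.slice_snd.differentiableAt two_ne_zero)

lemma lap_mul (hf : SpaceContDiffAt f p) (hg : SpaceContDiffAt g p) :
    lap (fun q => f q * g q) p = lap f p * g p + 2 * gradInner f g p + f p * lap g p := by
  have h_fst : pd1 (pd1 fun q => f q * g q) p
      = pd1 (pd1 f) p * g p + 2 * (pd1 f p * pd1 g p) + f p * pd1 (pd1 g) p :=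
    deriv_deriv_mul hf.slice_fst hg.slice_fst
  have h_snd : pd2 (pd2 fun q => f q * g q) p
      = pd2 (pd2 f) p * g p + 2 * (pd2 f p * pd2 g p) + f p * pd2 (pd2 g) p :=
    deriv_deriv_mul hf.slice_snd hg.slice_snd
  rw [lap, h_fst, h_snd, lap, lap, gradInner]
  ring

lemma driftHeat_mul (hf : SpaceContDiffAt f p) (hg : SpaceContDiffAt g p)
    (hft : DifferentiableAt ℝ (fun s => f (p.1, p.2.1, s)) p.2.2)
    (hgt : DifferentiableAt ℝ (fun s => g (p.1, p.2.1, s)) p.2.2) :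
    driftHeat (fun q => f q * g q) p
      = driftHeat f p * g p + f p * driftHeat g p - 2 * gradInner f g p := by
  have h_time : pdt (fun q => f q * g q) p = pdt f p * g p + f p * pdt g p := deriv_fun_mul hft hgt
  rw [driftHeat, h_time, lap_mul hf hg, pd1_mul hf hg, pd2_mul hf hg, driftHeat, driftHeat]
  ring

lemma pdt_sub_OU (f : ℝ × ℝ × ℝ → ℝ) (p : ℝ × ℝ × ℝ) :
    pdt f p - OU f p = driftHeat f p - f p := by
  rw [OU, driftHeat]
  ring

lemma pd1_congr (h : f =ᶠ[𝓝 p] g) : pd1 f =ᶠ[𝓝 p] pd1 g := by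
  filter_upwards [h.eventuallyEq_nhds] with q hq
  have h_slice : Tendsto (fun s => (s, q.2.1, q.2.2)) (𝓝 q.1) (𝓝 q) :=
    Continuous.tendsto' (by fun_prop) _ _ rfl
  exact (hq.comp_tendsto h_slice).deriv_eq

lemma pd2_congr (h : f =ᶠ[𝓝 p] g) : pd2 f =ᶠ[𝓝 p] pd2 g := by
  filter_upwards [h.eventuallyEq_nhds] with q hq
  have h_slice : Tendsto (fun s => (q.1, s, q.2.2)) (𝓝 q.2.1) (𝓝 q) :=
    Continuous.tendsto' (by fun_prop) _ _ rfl
  exact (hq.comp_tendsto h_slice).deriv_eq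

lemma pdt_congr (h : f =ᶠ[𝓝 p] g) : pdt f p = pdt g p := by
  have h_slice : Tendsto (fun s => (p.1, p.2.1, s)) (𝓝 p.2.2) (𝓝 p) :=
    Continuous.tendsto' (by fun_prop) _ _ rfl
  exact (h.comp_tendsto h_slice).deriv_eq

lemma gradSq_congr (h : f =ᶠ[𝓝 p] g) : gradSq f p = gradSq g p := by
  rw [gradSq, gradSq, (pd1_congr h).eq_of_nhds, (pd2_congr h).eq_of_nhds]

lemma driftHeat_congr (h : f =ᶠ[𝓝 p] g) : driftHeat f p = driftHeat g p := by
  rw [driftHeat, driftHeat, lap, lap, pdt_congr h, (pd1_congr h).eq_of_nhds,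
    (pd2_congr h).eq_of_nhds, (pd1_congr (pd1_congr h)).eq_of_nhds,
    (pd2_congr (pd2_congr h)).eq_of_nhds]

lemma gradSq_const (c : ℝ) : gradSq (fun _ => c) p = 0 := by
  simp [gradSq, pd1, pd2]

lemma driftHeat_const (c : ℝ) : driftHeat (fun _ => c) p = 0 := by
  simp [driftHeat, lap, pdt, pd1, pd2]

lemma gradSq_nonneg (f : ℝ × ℝ × ℝ → ℝ) (p : ℝ × ℝ × ℝ) : 0 ≤ gradSq f p :=
  add_nonneg (sq_nonneg _) (sq_nonneg _)

lemma abs_gradInner_le (f g : ℝ × ℝ × ℝ → ℝ) (p : ℝ × ℝ × ℝ) :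
    |gradInner f g p| ≤ √(gradSq f p) * √(gradSq g p) := by
  rw [← Real.sqrt_mul (gradSq_nonneg f p), gradInner, gradSq, gradSq]
  exact Real.abs_le_sqrt (by nlinarith [sq_nonneg (pd1 f p * pd2 g p - pd2 f p * pd1 g p)])

lemma hessNorm_nonneg (f : ℝ × ℝ × ℝ → ℝ) (p : ℝ × ℝ × ℝ) : 0 ≤ hessNorm f p := Real.sqrt_nonneg _

lemma abs_lap_le (f : ℝ × ℝ × ℝ → ℝ) (p : ℝ × ℝ × ℝ) : |lap f p| ≤ √2 * hessNorm f p := by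
  rw [hessNorm, ← Real.sqrt_mul zero_le_two, lap]
  exact Real.abs_le_sqrt (by
    nlinarith [sq_nonneg (pd1 (pd1 f) p - pd2 (pd2 f) p), sq_nonneg (pd1 (pd2 f) p),
      sq_nonneg (pd2 (pd1 f) p)])

end SpaceTime

section Radial

variable {g : ℝ → ℝ → ℝ} {p : ℝ × ℝ × ℝ}

lemma rad_nonneg (p : ℝ × ℝ × ℝ) : 0 ≤ rad p := Real.sqrt_nonneg _

lemma rad_sq (p : ℝ × ℝ × ℝ) : rad p ^ 2 = p.1 ^ 2 + p.2.1 ^ 2 := Real.sq_sqrt (by positivity)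

lemma continuous_rad : Continuous rad := by
  unfold rad
  fun_prop

lemma rad_swap (p : ℝ × ℝ × ℝ) : rad (p.2.1, p.1, p.2.2) = rad p := by
  simp only [rad, add_comm]

lemma sq_add_sq_pos (hp : 0 < rad p) : 0 < p.1 ^ 2 + p.2.1 ^ 2 :=
  rad_sq p ▸ pow_pos hp 2

lemma spaceContDiffAt_radial (hg : ContDiffAt ℝ 2 (g p.2.2) (rad p)) (hp : 0 < rad p) :
    SpaceContDiffAt (fun q => g q.2.2 (rad q)) p := by
  have h_rad : ContDiffAt ℝ 2 (fun y : ℝ × ℝ => √(y.1 ^ 2 + y.2 ^ 2)) (p.1, p.2.1) :=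
    ContDiffAt.sqrt (by fun_prop) (sq_add_sq_pos hp).ne'
  exact ContDiffAt.comp (p.1, p.2.1) hg h_rad

lemma pd1_radial (hg : DifferentiableAt ℝ (g p.2.2) (rad p)) (hp : 0 < rad p) :
    pd1 (fun q => g q.2.2 (rad q)) p = deriv (g p.2.2) (rad p) * (p.1 / rad p) :=
  deriv_comp_sqrt_sq_add hg (sq_add_sq_pos hp)

lemma pd1_pd1_radial (hg : ContDiffAt ℝ 2 (g p.2.2) (rad p)) (hp : 0 < rad p) :
    pd1 (pd1 fun q => g q.2.2 (rad q)) p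
      = deriv (deriv (g p.2.2)) (rad p) * (p.1 / rad p) ^ 2
        + deriv (g p.2.2) (rad p) * (p.2.1 ^ 2 / rad p ^ 3) :=
  deriv_deriv_comp_sqrt_sq_add hg (sq_add_sq_pos hp)

lemma pd2_radial_eq_pd1_swap (g : ℝ → ℝ → ℝ) (p : ℝ × ℝ × ℝ) :
    pd2 (fun q => g q.2.2 (rad q)) p = pd1 (fun q => g q.2.2 (rad q)) (p.2.1, p.1, p.2.2) := by
  simp only [pd1, pd2, rad, add_comm]

lemma pd2_radial (hg : DifferentiableAt ℝ (g p.2.2) (rad p)) (hp : 0 < rad p) :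
    pd2 (fun q => g q.2.2 (rad q)) p = deriv (g p.2.2) (rad p) * (p.2.1 / rad p) := by
  rw [← rad_swap] at hg hp
  rw [pd2_radial_eq_pd1_swap, pd1_radial hg hp, rad_swap]

lemma pd2_pd2_radial (hg : ContDiffAt ℝ 2 (g p.2.2) (rad p)) (hp : 0 < rad p) :
    pd2 (pd2 fun q => g q.2.2 (rad q)) p
      = deriv (deriv (g p.2.2)) (rad p) * (p.2.1 / rad p) ^ 2
        + deriv (g p.2.2) (rad p) * (p.1 ^ 2 / rad p ^ 3) := by
  have h_swap : pd2 (pd2 fun q => g q.2.2 (rad q)) p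
      = pd1 (pd1 fun q => g q.2.2 (rad q)) (p.2.1, p.1, p.2.2) := by
    rw [funext (pd2_radial_eq_pd1_swap g)]
    rfl
  rw [← rad_swap] at hg hp
  rw [h_swap, pd1_pd1_radial hg hp, rad_swap]

lemma gradSq_radial (hg : DifferentiableAt ℝ (g p.2.2) (rad p)) (hp : 0 < rad p) :
    gradSq (fun q => g q.2.2 (rad q)) p = deriv (g p.2.2) (rad p) ^ 2 := by
  rw [gradSq, pd1_radial hg hp, pd2_radial hg hp]
  field_simp
  rw [rad_sq]

lemma lap_radial (hg : ContDiffAt ℝ 2 (g p.2.2) (rad p)) (hp : 0 < rad p) :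
    lap (fun q => g q.2.2 (rad q)) p
      = deriv (deriv (g p.2.2)) (rad p) + deriv (g p.2.2) (rad p) / rad p := by
  rw [lap, pd1_pd1_radial hg hp, pd2_pd2_radial hg hp]
  field_simp
  linear_combination -(deriv (deriv (g p.2.2)) (rad p) * rad p + deriv (g p.2.2) (rad p)) * rad_sq p

lemma driftHeat_radial (hg : ContDiffAt ℝ 2 (g p.2.2) (rad p)) (hp : 0 < rad p) :
    driftHeat (fun q => g q.2.2 (rad q)) p
      = pdt (fun q => g q.2.2 (rad q)) p - deriv (deriv (g p.2.2)) (rad p)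
        - deriv (g p.2.2) (rad p) / rad p + rad p / 2 * deriv (g p.2.2) (rad p) := by
  have hg_diff := hg.differentiableAt two_ne_zero
  rw [driftHeat, lap_radial hg hp, pd1_radial hg_diff hp, pd2_radial hg_diff hp]
  field_simp
  linear_combination -deriv (g p.2.2) (rad p) * rad_sq p

end Radial

section Cutoff

variable {ρ χ : ℝ → ℝ} {p : ℝ × ℝ × ℝ}

/-- The cutoff `χ(|y|/ρ(τ))` that truncates a function to `|y| ≲ ρ(τ)`. -/
def cutoff (ρ χ : ℝ → ℝ) (p : ℝ × ℝ × ℝ) : ℝ := χ (rad p / ρ p.2.2)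

lemma cutoff_eventuallyEq_one (hρ : ContinuousAt ρ p.2.2) (hχ : ∀ s ∈ Icc 0 1, χ s = 1)
    (hp : rad p < ρ p.2.2) : cutoff ρ χ =ᶠ[𝓝 p] fun _ => 1 := by
  have hρ_snd : ContinuousAt (fun q : ℝ × ℝ × ℝ => ρ q.2.2) p :=
    ContinuousAt.comp (f := fun q : ℝ × ℝ × ℝ => q.2.2) hρ (by fun_prop)
  filter_upwards [continuous_rad.continuousAt.eventually_lt hρ_snd hp] with q hq
  have h_pos : 0 < ρ q.2.2 := (rad_nonneg q).trans_lt hq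
  exact hχ _ ⟨div_nonneg (rad_nonneg q) h_pos.le, (div_le_one h_pos).2 hq.le⟩

lemma hasDerivAt_cutoff_time (hρ : DifferentiableAt ℝ ρ p.2.2) (hρ0 : ρ p.2.2 ≠ 0)
    (hχ : DifferentiableAt ℝ χ (rad p / ρ p.2.2)) :
    HasDerivAt (fun s => cutoff ρ χ (p.1, p.2.1, s))
      (deriv χ (rad p / ρ p.2.2) * (-(rad p * deriv ρ p.2.2) / ρ p.2.2 ^ 2)) p.2.2 := by
  have h_scaled : HasDerivAt (fun s => rad p / ρ s)
      (-(rad p * deriv ρ p.2.2) / ρ p.2.2 ^ 2) p.2.2 := by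
    simpa using (hasDerivAt_const p.2.2 (rad p)).fun_div hρ.hasDerivAt hρ0
  exact hχ.hasDerivAt.comp p.2.2 h_scaled

lemma contDiffAt_comp_div {n : WithTop ℕ∞} {c x : ℝ} (hχ : ContDiffAt ℝ n χ (x / c)) :
    ContDiffAt ℝ n (fun s => χ (s / c)) x :=
  ContDiffAt.comp x hχ (by fun_prop)

lemma gradSq_cutoff (hχ : ContDiffAt ℝ 2 χ (rad p / ρ p.2.2)) (hp : 0 < rad p) :
    gradSq (cutoff ρ χ) p = (deriv χ (rad p / ρ p.2.2) / ρ p.2.2) ^ 2 := by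
  have h_radial := gradSq_radial (g := fun τ s => χ (s / ρ τ))
    ((contDiffAt_comp_div hχ).differentiableAt two_ne_zero) hp
  rwa [deriv_comp_div] at h_radial

lemma driftHeat_cutoff (hρ : DifferentiableAt ℝ ρ p.2.2) (hρ0 : ρ p.2.2 ≠ 0)
    (hχ : ContDiffAt ℝ 2 χ (rad p / ρ p.2.2)) (hp : 0 < rad p) :
    driftHeat (cutoff ρ χ) p
      = deriv χ (rad p / ρ p.2.2) / ρ p.2.2
          * (rad p / 2 - rad p * (deriv ρ p.2.2 / ρ p.2.2) - (rad p)⁻¹)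
        - deriv (deriv χ) (rad p / ρ p.2.2) / ρ p.2.2 ^ 2 := by
  have h_radial := driftHeat_radial (g := fun τ s => χ (s / ρ τ)) (contDiffAt_comp_div hχ) hp
  have h_time := (hasDerivAt_cutoff_time hρ hρ0 (hχ.differentiableAt two_ne_zero)).deriv
  change driftHeat (cutoff ρ χ) p = pdt (cutoff ρ χ) p - _ - _ + _ at h_radial
  rw [deriv_deriv_comp_div, deriv_comp_div, pdt, h_time] at h_radial
  rw [h_radial]
  ring

lemma spaceContDiffAt_cutoff (hρ : ContinuousAt ρ p.2.2) (hρ0 : 0 < ρ p.2.2)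
    (hχ : ContDiffAt ℝ 2 χ (rad p / ρ p.2.2)) (hχ1 : ∀ s ∈ Icc 0 1, χ s = 1) :
    SpaceContDiffAt (cutoff ρ χ) p := by
  rcases lt_or_ge (rad p) (ρ p.2.2) with h_inner | h_outer
  · exact .of_contDiffAt (contDiffAt_const.congr_of_eventuallyEq
      (cutoff_eventuallyEq_one hρ hχ1 h_inner))
  · exact spaceContDiffAt_radial (g := fun τ s => χ (s / ρ τ)) (contDiffAt_comp_div hχ)
      (hρ0.trans_le h_outer)

lemma sqrt_gradSq_cutoff_le (hρ : ContinuousAt ρ p.2.2) (hρ0 : 0 < ρ p.2.2)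
    (hχ : ContDiffAt ℝ 2 χ (rad p / ρ p.2.2)) (hχ1 : ∀ s ∈ Icc 0 1, χ s = 1) :
    √(gradSq (cutoff ρ χ) p) ≤ |deriv χ (rad p / ρ p.2.2)| * (ρ p.2.2)⁻¹ := by
  rcases lt_or_ge (rad p) (ρ p.2.2) with h_inner | h_outer
  · rw [gradSq_congr (cutoff_eventuallyEq_one hρ hχ1 h_inner), gradSq_const, Real.sqrt_zero]
    positivity
  · rw [gradSq_cutoff hχ (hρ0.trans_le h_outer), Real.sqrt_sq_eq_abs, abs_div, abs_of_pos hρ0,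
      div_eq_mul_inv]

lemma abs_driftHeat_cutoff_le (hρ : DifferentiableAt ℝ ρ p.2.2) (hρ1 : 1 ≤ ρ p.2.2)
    (hρ' : |deriv ρ p.2.2| ≤ ρ p.2.2)
    (hχ : ContDiffAt ℝ 2 χ (rad p / ρ p.2.2)) (hχ1 : ∀ s ∈ Icc 0 1, χ s = 1) :
    |driftHeat (cutoff ρ χ) p|
      ≤ |deriv χ (rad p / ρ p.2.2)| * (ρ p.2.2)⁻¹ * (5 / 2 * rad p)
        + |deriv (deriv χ) (rad p / ρ p.2.2)| * (ρ p.2.2 ^ 2)⁻¹ := by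
  have hρ0 : 0 < ρ p.2.2 := by linarith
  have h_rad := rad_nonneg p
  rcases lt_or_ge (rad p) (ρ p.2.2) with h_inner | h_outer
  · rw [driftHeat_congr (cutoff_eventuallyEq_one hρ.continuousAt hχ1 h_inner), driftHeat_const,
      abs_zero]
    positivity
  have h_one : 1 ≤ rad p := hρ1.trans h_outer
  have h_inv : |(rad p)⁻¹| ≤ rad p := by
    rw [abs_of_nonneg (by positivity)]
    exact (inv_le_one_of_one_le₀ h_one).trans h_one
  have h_drift : |rad p * (deriv ρ p.2.2 / ρ p.2.2)| ≤ rad p := by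
    rw [abs_mul, abs_of_nonneg h_rad, abs_div, abs_of_pos hρ0]
    exact mul_le_of_le_one_right h_rad ((div_le_one hρ0).2 hρ')
  have h_coeff : |rad p / 2 - rad p * (deriv ρ p.2.2 / ρ p.2.2) - (rad p)⁻¹| ≤ 5 / 2 * rad p := by
    rw [abs_le] at h_inv h_drift ⊢
    constructor <;> linarith
  rw [driftHeat_cutoff hρ hρ0.ne' hχ (hρ0.trans_le h_outer)]
  refine (abs_sub _ _).trans ?_
  rw [abs_mul, abs_div, abs_div, abs_of_pos hρ0, abs_of_pos (by positivity : 0 < ρ p.2.2 ^ 2),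
    div_eq_mul_inv |deriv χ _|, div_eq_mul_inv |deriv (deriv χ) _|]
  gcongr

end Cutoff

section Truncation

variable {ρ χ : ℝ → ℝ} {u : ℝ × ℝ × ℝ → ℝ} {p : ℝ × ℝ × ℝ}

lemma Eerr_eq (hu_space : SpaceContDiffAt u p)
    (hu_time : DifferentiableAt ℝ (fun s => u (p.1, p.2.1, s)) p.2.2)
    (hφ_space : SpaceContDiffAt (cutoff ρ χ) p)
    (hφ_time : DifferentiableAt ℝ (fun s => cutoff ρ χ (p.1, p.2.1, s)) p.2.2) :
    Eerr ρ χ u p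
      = cutoff ρ χ p * (pdt u p - OU u p + u p ^ 2 / (2 * √2))
        + u p * driftHeat (cutoff ρ χ) p - 2 * gradInner u (cutoff ρ χ) p
        - cutoff ρ χ p * (1 - cutoff ρ χ p) * (u p ^ 2 / (2 * √2)) := by
  have h_leibniz : driftHeat (hatu ρ χ u) p = _ :=
    driftHeat_mul (g := cutoff ρ χ) hu_space hφ_space hu_time hφ_time
  have h_value : hatu ρ χ u p = u p * cutoff ρ χ p := rfl
  rw [Eerr, pdt_sub_OU, pdt_sub_OU, h_leibniz, h_value]
  ring

lemma abs_pdt_sub_OU_add_sq_le (hu : -1 ≤ u p)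
    (h_eq : pdt u p = OU u p - u p ^ 2 / (2 * √2) - u p ^ 3 / (4 + 2 * √2 * u p)
      - gradSq u p * lap u p / (1 + gradSq u p)) :
    |pdt u p - OU u p + u p ^ 2 / (2 * √2)| ≤ 5 / 2 * (|u p| ^ 3 + gradSq u p * hessNorm u p) := by
  have h_grad := gradSq_nonneg u p
  have h_hess := hessNorm_nonneg u p
  have h_sqrt : √2 ≤ 5 / 2 := by rw [Real.sqrt_le_left] <;> norm_num
  have h_quasi : |gradSq u p * lap u p / (1 + gradSq u p)|
      ≤ 5 / 2 * (gradSq u p * hessNorm u p) :=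
    calc |gradSq u p * lap u p / (1 + gradSq u p)|
        = gradSq u p * |lap u p| / (1 + gradSq u p) := by
          rw [abs_div, abs_mul, abs_of_nonneg h_grad,
            abs_of_pos (add_pos_of_pos_of_nonneg one_pos h_grad)]
      _ ≤ gradSq u p * |lap u p| := div_le_self (by positivity) (by linarith)
      _ ≤ gradSq u p * (√2 * hessNorm u p) := by gcongr; exact abs_lap_le u p
      _ ≤ gradSq u p * (5 / 2 * hessNorm u p) := by gcongr
      _ = 5 / 2 * (gradSq u p * hessNorm u p) := by ring
  have h_cube : |u p ^ 3 / (4 + 2 * √2 * u p)| ≤ 5 / 2 * |u p| ^ 3 :=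
    (abs_cube_div_four_add_le hu).trans (by linarith [pow_nonneg (abs_nonneg (u p)) 3])
  rw [h_eq]
  rw [abs_le] at h_quasi h_cube ⊢
  constructor <;> linarith

lemma abs_mul_driftHeat_cutoff_sub_gradInner_le (hρ : DifferentiableAt ℝ ρ p.2.2)
    (hρ1 : 1 ≤ ρ p.2.2) (hρ' : |deriv ρ p.2.2| ≤ ρ p.2.2)
    (hχ : ContDiffAt ℝ 2 χ (rad p / ρ p.2.2)) (hχ1 : ∀ s ∈ Icc 0 1, χ s = 1) :
    |u p * driftHeat (cutoff ρ χ) p - 2 * gradInner u (cutoff ρ χ) p|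
      ≤ 5 / 2 * (|deriv χ (rad p / ρ p.2.2)| * (ρ p.2.2)⁻¹ * (√(gradSq u p) + rad p * |u p|)
        + |deriv (deriv χ) (rad p / ρ p.2.2)| * (ρ p.2.2 ^ 2)⁻¹ * |u p|) := by
  have hρ0 : 0 < ρ p.2.2 := by linarith
  set D := |deriv χ (rad p / ρ p.2.2)| * (ρ p.2.2)⁻¹
  set D₂ := |deriv (deriv χ) (rad p / ρ p.2.2)| * (ρ p.2.2 ^ 2)⁻¹
  have h_first : 0 ≤ D * √(gradSq u p) := by positivity
  have h_second : 0 ≤ D₂ * |u p| := by positivity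
  calc |u p * driftHeat (cutoff ρ χ) p - 2 * gradInner u (cutoff ρ χ) p|
      ≤ |u p| * |driftHeat (cutoff ρ χ) p| + 2 * |gradInner u (cutoff ρ χ) p| := by
        simpa only [abs_mul, abs_two] using
          abs_sub (u p * driftHeat (cutoff ρ χ) p) (2 * gradInner u (cutoff ρ χ) p)
    _ ≤ |u p| * (D * (5 / 2 * rad p) + D₂) + 2 * (√(gradSq u p) * D) := by
        gcongr
        · exact abs_driftHeat_cutoff_le hρ hρ1 hρ' hχ hχ1
        · exact (abs_gradInner_le u _ p).trans (mul_le_mul_of_nonneg_left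
            (sqrt_gradSq_cutoff_le hρ.continuousAt hρ0 hχ hχ1) (Real.sqrt_nonneg _))
    _ ≤ 5 / 2 * (D * (√(gradSq u p) + rad p * |u p|) + D₂ * |u p|) := by linarith

end Truncation

theorem stmt_1_general {ρ χ : ℝ → ℝ} {u : ℝ × ℝ × ℝ → ℝ} {p : ℝ × ℝ × ℝ}
    (hρ : DifferentiableAt ℝ ρ p.2.2) (hρ1 : 1 ≤ ρ p.2.2) (hρ' : |deriv ρ p.2.2| ≤ ρ p.2.2)
    (hχ : ContDiffAt ℝ 2 χ (rad p / ρ p.2.2)) (hχ01 : χ (rad p / ρ p.2.2) ∈ Icc 0 1)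
    (hχ1 : ∀ s ∈ Icc 0 1, χ s = 1) (hu_space : SpaceContDiffAt u p)
    (hu_time : DifferentiableAt ℝ (fun s => u (p.1, p.2.1, s)) p.2.2) (hu1 : -1 ≤ u p)
    (h_eq : pdt u p = OU u p - u p ^ 2 / (2 * √2) - u p ^ 3 / (4 + 2 * √2 * u p)
      - gradSq u p * lap u p / (1 + gradSq u p)) :
    |Eerr ρ χ u p| ≤ 5 / 2 *
      (χ (rad p / ρ p.2.2) * |u p| ^ 3
        + χ (rad p / ρ p.2.2) * gradSq u p * hessNorm u p
        + |deriv χ (rad p / ρ p.2.2)| * (ρ p.2.2)⁻¹ * (√(gradSq u p) + rad p * |u p|)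
        + |deriv (deriv χ) (rad p / ρ p.2.2)| * (ρ p.2.2 ^ 2)⁻¹ * |u p|
        + χ (rad p / ρ p.2.2) * (1 - χ (rad p / ρ p.2.2)) * (|u p| ^ 2 + hessNorm u p ^ 2)) := by
  have hρ0 : 0 < ρ p.2.2 := by linarith
  have h_E := Eerr_eq hu_space hu_time
    (spaceContDiffAt_cutoff hρ.continuousAt hρ0 hχ hχ1)
    (hasDerivAt_cutoff_time hρ hρ0.ne' (hχ.differentiableAt two_ne_zero)).differentiableAt
  have h_commutator := abs_mul_driftHeat_cutoff_sub_gradInner_le (u := u) hρ hρ1 hρ' hχ hχ1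
  rw [cutoff] at h_E
  set φ := χ (rad p / ρ p.2.2)
  have h_weight : 0 ≤ φ * (1 - φ) := mul_nonneg hχ01.1 (sub_nonneg.2 hχ01.2)
  have h_reaction : |φ * (pdt u p - OU u p + u p ^ 2 / (2 * √2))|
      ≤ 5 / 2 * (φ * |u p| ^ 3 + φ * gradSq u p * hessNorm u p) := by
    rw [abs_mul, abs_of_nonneg hχ01.1, mul_assoc φ (gradSq u p), ← mul_add, mul_left_comm]
    exact mul_le_mul_of_nonneg_left (abs_pdt_sub_OU_add_sq_le hu1 h_eq) hχ01.1
  have h_quadratic : |φ * (1 - φ) * (u p ^ 2 / (2 * √2))|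
      ≤ 5 / 2 * (φ * (1 - φ) * (|u p| ^ 2 + hessNorm u p ^ 2)) := by
    rw [abs_of_nonneg (by positivity), mul_left_comm, sq_abs]
    gcongr
    linarith [sq_div_two_mul_sqrt_two_le (u p), sq_nonneg (u p), sq_nonneg (hessNorm u p)]
  rw [h_E]
  rw [abs_le] at h_commutator h_reaction h_quadratic ⊢
  constructor <;> linarith

/-- Evolution equation with error estimate for the truncated bubble-sheet graph function. -/
theorem stmt_1 :
    ∃ C : ℝ, 0 < C ∧
      ∀ (τs : ℝ) (ρ χ : ℝ → ℝ) (u : ℝ × ℝ × ℝ → ℝ),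
        (∀ τ ≤ τs, 1 ≤ ρ τ) →
        (∀ τ ≤ τs, DifferentiableAt ℝ ρ τ) →
        (∀ τ ≤ τs, -ρ τ ≤ deriv ρ τ ∧ deriv ρ τ ≤ 0) →
        ContDiff ℝ (⊤ : ℕ∞) χ →
        (∀ s : ℝ, 0 ≤ s → 0 ≤ χ s ∧ χ s ≤ 1) →
        (∀ s : ℝ, 0 ≤ s → s ≤ 1 → χ s = 1) →
        (∀ s : ℝ, 2 ≤ s → χ s = 0) →
        (∀ p : ℝ × ℝ × ℝ, p.2.2 ≤ τs → rad p < 3 * ρ p.2.2 → ContDiffAt ℝ 2 u p) →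
        (∀ p : ℝ × ℝ × ℝ, p.2.2 ≤ τs → rad p < 3 * ρ p.2.2 → -1 ≤ u p) →
        (∀ p : ℝ × ℝ × ℝ, p.2.2 ≤ τs → rad p < 3 * ρ p.2.2 →
          pdt u p = OU u p - (u p) ^ 2 / (2 * Real.sqrt 2)
            - (u p) ^ 3 / (4 + 2 * Real.sqrt 2 * u p)
            - gradSq u p * lap u p / (1 + gradSq u p)) →
        ∀ p : ℝ × ℝ × ℝ, p.2.2 ≤ τs → rad p < 3 * ρ p.2.2 →
          pdt (hatu ρ χ u) p
              = OU (hatu ρ χ u) p - (hatu ρ χ u p) ^ 2 / (2 * Real.sqrt 2) + Eerr ρ χ u p ∧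
          |Eerr ρ χ u p| ≤ C *
            (χ (rad p / ρ p.2.2) * |u p| ^ 3
              + χ (rad p / ρ p.2.2) * gradSq u p * hessNorm u p
              + |deriv χ (rad p / ρ p.2.2)| * (ρ p.2.2)⁻¹
                  * (Real.sqrt (gradSq u p) + rad p * |u p|)
              + |deriv (deriv χ) (rad p / ρ p.2.2)| * ((ρ p.2.2) ^ 2)⁻¹ * |u p|
              + χ (rad p / ρ p.2.2) * (1 - χ (rad p / ρ p.2.2))
                  * (|u p| ^ 2 + (hessNorm u p) ^ 2)) := by
  refine ⟨5 / 2, by norm_num, fun τs ρ χ u hρ1 hρ hρ' hχ hχ01 hχ1 _ hu hu1 h_eq p hτ hp =>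
    ⟨by rw [Eerr]; ring, ?_⟩⟩
  have h_scaled : 0 ≤ rad p / ρ p.2.2 :=
    div_nonneg (rad_nonneg p) (zero_le_one.trans (hρ1 _ hτ))
  have h_slope : |deriv ρ p.2.2| ≤ ρ p.2.2 :=
    abs_le.2 ⟨(hρ' _ hτ).1, by linarith [(hρ' _ hτ).2, hρ1 _ hτ]⟩
  exact stmt_1_general (hρ _ hτ) (hρ1 _ hτ) h_slope (contDiff_infty.1 hχ 2).contDiffAt
    (hχ01 _ h_scaled) (fun s hs => hχ1 s hs.1 hs.2) (.of_contDiffAt (hu p hτ hp))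
    ((hu p hτ hp).differentiableAt two_ne_zero |>.comp p.2.2 (by fun_prop)) (hu1 p hτ hp)
    (h_eq p hτ hp)

end
end

section
/- Suppose U₊, U₀, U₋ : (−∞,τ₀] → ℝ are nonnegative differentiable functions satisfying the Merle–Zaag differential inequalities with parameter ε ∈ (0, 1/100]. If 2ε·(U₊(τ₁) + U₀(τ₁)) ≤ U₋(τ₁) for some τ₁ ≤ τ₀, then 2ε·(U₊(τ) + U₀(τ)) ≤ U₋(τ) for all τ ≤ τ₁. -/
/-!
For `W = U₋ - k (U₊ + U₀)`, the three inequalities combine to `W' ≤ -c W` with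
`c = 1 - ε (1 + 2 k)`, provided `k ≥ 0` and `ε (1 + 2 k) (1 + k) ≤ k`. Hence `exp (c τ) W` is
nonincreasing, so `W` stays nonnegative backward in time. The theorem is the case `k = 2 ε`.
-/

section IntegratingFactor

variable {s : Set ℝ} {f f' : ℝ → ℝ} {c : ℝ}

theorem antitoneOn_exp_mul_of_hasDerivWithinAt_le (hs : Convex ℝ s) (hf : ContinuousOn f s)
    (hf' : ∀ x ∈ interior s, HasDerivWithinAt f (f' x) (interior s) x)
    (hle : ∀ x ∈ interior s, f' x ≤ -(c * f x)) :
    AntitoneOn (fun x ↦ Real.exp (c * x) * f x) s := by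
  have hderiv : ∀ x ∈ interior s, HasDerivWithinAt (fun x ↦ Real.exp (c * x) * f x)
      (Real.exp (c * x) * (c * f x + f' x)) (interior s) x := fun x hx ↦
    ((((hasDerivAt_id x).const_mul c).exp.hasDerivWithinAt).mul (hf' x hx)).congr_deriv
      (by simp only [id_eq]; ring)
  refine antitoneOn_of_hasDerivWithinAt_nonpos hs (by fun_prop) hderiv fun x hx ↦ ?_
  exact mul_nonpos_of_nonneg_of_nonpos (Real.exp_pos _).le (by linarith [hle x hx])

theorem nonneg_of_nonneg_right_of_hasDerivWithinAt_le (hs : Convex ℝ s) (hf : ContinuousOn f s)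
    (hf' : ∀ x ∈ interior s, HasDerivWithinAt f (f' x) (interior s) x)
    (hle : ∀ x ∈ interior s, f' x ≤ -(c * f x))
    {a b : ℝ} (ha : a ∈ s) (hb : b ∈ s) (hab : a ≤ b) (hfb : 0 ≤ f b) : 0 ≤ f a := by
  have hanti : Real.exp (c * b) * f b ≤ Real.exp (c * a) * f a :=
    antitoneOn_exp_mul_of_hasDerivWithinAt_le hs hf hf' hle ha hb hab
  exact nonneg_of_mul_nonneg_right ((mul_nonneg (Real.exp_pos _).le hfb).trans hanti)
    (Real.exp_pos _)

end IntegratingFactor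

section MerleZaag

variable {ε k : ℝ}

theorem merleZaag_sub_const_mul_add_le {p z m p' z' m' : ℝ}
    (hk : 0 ≤ k) (hεk : ε * (1 + 2 * k) * (1 + k) ≤ k) (hp : 0 ≤ p) (hz : 0 ≤ z)
    (hp' : p - ε * (p + z + m) ≤ p') (hz' : -(ε * (p + z + m)) ≤ z')
    (hm' : m' ≤ -m + ε * (p + z + m)) :
    m' - k * (p' + z') ≤ -((1 - ε * (1 + 2 * k)) * (m - k * (p + z))) := by
  have hpz' : k * (p - 2 * (ε * (p + z + m))) ≤ k * (p' + z') :=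
    mul_le_mul_of_nonneg_left (by linarith) hk
  have hsum : ε * (1 + 2 * k) * (1 + k) * (p + z) ≤ k * (p + z) :=
    mul_le_mul_of_nonneg_right hεk (add_nonneg hp hz)
  have hkp : 0 ≤ k * p := mul_nonneg hk hp
  calc m' - k * (p' + z')
      ≤ -m + ε * (p + z + m) - k * (p - 2 * (ε * (p + z + m))) := by linarith
    _ = -((1 - ε * (1 + 2 * k)) * (m - k * (p + z)))
          + (ε * (1 + 2 * k) * (1 + k) * (p + z) - k * (p + z)) - k * p := by ring
    _ ≤ -((1 - ε * (1 + 2 * k)) * (m - k * (p + z))) := by linarith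

theorem stmt_2_general {s : Set ℝ} (hs : Convex ℝ s)
    (hk : 0 ≤ k) (hεk : ε * (1 + 2 * k) * (1 + k) ≤ k) {Up U0 Um Up' U0' Um' : ℝ → ℝ}
    (hUp' : ∀ τ ∈ s, HasDerivWithinAt Up (Up' τ) s τ)
    (hU0' : ∀ τ ∈ s, HasDerivWithinAt U0 (U0' τ) s τ)
    (hUm' : ∀ τ ∈ s, HasDerivWithinAt Um (Um' τ) s τ)
    (hUp : ∀ τ ∈ s, 0 ≤ Up τ) (hU0 : ∀ τ ∈ s, 0 ≤ U0 τ)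
    (hMZp : ∀ τ ∈ s, Up τ - ε * (Up τ + U0 τ + Um τ) ≤ Up' τ)
    (hMZ0 : ∀ τ ∈ s, -(ε * (Up τ + U0 τ + Um τ)) ≤ U0' τ)
    (hMZm : ∀ τ ∈ s, Um' τ ≤ -Um τ + ε * (Up τ + U0 τ + Um τ))
    {τ τ₁ : ℝ} (hτ : τ ∈ s) (hτ₁ : τ₁ ∈ s) (hle : τ ≤ τ₁)
    (hstart : k * (Up τ₁ + U0 τ₁) ≤ Um τ₁) :
    k * (Up τ + U0 τ) ≤ Um τ := by
  have hderiv : ∀ t ∈ s, HasDerivWithinAt (fun t ↦ Um t - k * (Up t + U0 t))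
      (Um' t - k * (Up' t + U0' t)) s t := fun t ht ↦
    (hUm' t ht).sub (((hUp' t ht).add (hU0' t ht)).const_mul k)
  have hdecay : ∀ t ∈ s, Um' t - k * (Up' t + U0' t) ≤
      -((1 - ε * (1 + 2 * k)) * (Um t - k * (Up t + U0 t))) := fun t ht ↦
    merleZaag_sub_const_mul_add_le hk hεk (hUp t ht) (hU0 t ht) (hMZp t ht) (hMZ0 t ht) (hMZm t ht)
  exact sub_nonneg.1 <| nonneg_of_nonneg_right_of_hasDerivWithinAt_le hs
    (HasDerivWithinAt.continuousOn hderiv)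
    (fun t ht ↦ (hderiv t (interior_subset ht)).mono interior_subset)
    (fun t ht ↦ hdecay t (interior_subset ht)) hτ hτ₁ hle (sub_nonneg.2 hstart)

end MerleZaag

/-- Backward invariance for the Merle–Zaag differential inequalities: if the negative mode
dominates at some time `τ₁`, it dominates at all earlier times. -/
theorem stmt_2 (τ₀ ε : ℝ) (hε : 0 < ε) (hε' : ε ≤ 1 / 100)
    (Up U0 Um : ℝ → ℝ)
    (hUpdiff : ∀ τ ≤ τ₀, DifferentiableAt ℝ Up τ)
    (hU0diff : ∀ τ ≤ τ₀, DifferentiableAt ℝ U0 τ)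
    (hUmdiff : ∀ τ ≤ τ₀, DifferentiableAt ℝ Um τ)
    (hUp0 : ∀ τ ≤ τ₀, 0 ≤ Up τ) (hU00 : ∀ τ ≤ τ₀, 0 ≤ U0 τ) (hUm0 : ∀ τ ≤ τ₀, 0 ≤ Um τ)
    (hMZp : ∀ τ ≤ τ₀, Up τ - ε * (Up τ + U0 τ + Um τ) ≤ deriv Up τ)
    (hMZ0 : ∀ τ ≤ τ₀, |deriv U0 τ| ≤ ε * (Up τ + U0 τ + Um τ))
    (hMZm : ∀ τ ≤ τ₀, deriv Um τ ≤ -Um τ + ε * (Up τ + U0 τ + Um τ))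
    (τ₁ : ℝ) (hτ₁ : τ₁ ≤ τ₀)
    (hstart : 2 * ε * (Up τ₁ + U0 τ₁) ≤ Um τ₁) :
    ∀ τ ≤ τ₁, 2 * ε * (Up τ + U0 τ) ≤ Um τ := fun _ hτ ↦
  stmt_2_general (convex_Iic τ₀) (by positivity) (by nlinarith [sq_nonneg ε])
    (fun t ht ↦ (hUpdiff t ht).hasDerivAt.hasDerivWithinAt)
    (fun t ht ↦ (hU0diff t ht).hasDerivAt.hasDerivWithinAt)
    (fun t ht ↦ (hUmdiff t ht).hasDerivAt.hasDerivWithinAt)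
    hUp0 hU00 hMZp (fun t ht ↦ neg_le_of_abs_le (hMZ0 t ht)) hMZm (hτ.trans hτ₁) hτ₁ hτ hstart
end

section
/- Suppose U₊, U₀, U₋ : (−∞,τ₀] → ℝ are nonnegative differentiable functions satisfying the Merle–Zaag differential inequalities with parameter ε ∈ (0, 1/100]. If U₋(τ) < 2ε·(U₀(τ) + U₊(τ)) for every τ ≤ τ₀, and U₊(τ₀) < 8ε·U₀(τ₀), then U₊(τ) < 8ε·U₀(τ) for all τ ≤ τ₀. -/
/-!
At a time where `U₊ = c U₀`, the bound `U₋ ≤ δ (U₀ + U₊)` turns the differential inequalities into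
`U₊' - c U₀' ≥ (c - ε (1 + δ) (1 + c)²) U₀`. This is positive when `ε (1 + δ) (1 + c)² < c`, so
`U₊ - c U₀` can cross zero only upwards. Once nonnegative it therefore stays nonnegative, and if it
is negative at `τ₀`, it was negative at all earlier times. For `δ = 2ε` and `c = 8ε` the smallness
condition reads `(1 + 2ε) (1 + 8ε)² < 8`.
-/

open Set

lemma mul_lt_of_eq_mul_of_sub_le_of_le {κ c x y x' y' : ℝ} (hc : 0 ≤ c)
    (hκ : κ * (1 + c) ^ 2 < c) (hpos : 0 < x + y) (hx' : x - κ * (x + y) ≤ x')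
    (hy' : y' ≤ κ * (x + y)) (hxy : x = c * y) : c * y' < x' := by
  subst hxy
  have hy : 0 < y := pos_of_mul_pos_right (by linarith : 0 < (1 + c) * y) (by linarith)
  calc
    c * y' ≤ c * (κ * (c * y + y)) := mul_le_mul_of_nonneg_left hy' hc
    _ = κ * (1 + c) ^ 2 * y - κ * (c * y + y) := by ring
    _ < c * y - κ * (c * y + y) := by gcongr
    _ ≤ x' := hx'

lemma lt_mul_left_endpoint_of_lt_mul_right_endpoint {κ c a b : ℝ} {x x' y y' : ℝ → ℝ}
    (hab : a ≤ b) (hc : 0 ≤ c) (hκ : κ * (1 + c) ^ 2 < c)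
    (hx : ContinuousOn x (Icc a b)) (hy : ContinuousOn y (Icc a b))
    (hxd : ∀ t ∈ Ico a b, HasDerivWithinAt x (x' t) (Ici t) t)
    (hyd : ∀ t ∈ Ico a b, HasDerivWithinAt y (y' t) (Ici t) t)
    (hpos : ∀ t ∈ Ico a b, 0 < x t + y t)
    (hx' : ∀ t ∈ Ico a b, x t - κ * (x t + y t) ≤ x' t)
    (hy' : ∀ t ∈ Ico a b, y' t ≤ κ * (x t + y t))
    (hb : x b < c * y b) : x a < c * y a := by
  contrapose! hb
  refine image_le_of_deriv_right_lt_deriv_boundary' (hy.const_smul c)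
    (fun t ht => (hyd t ht).const_mul c) hb hx hxd (fun t ht heq => ?_) (right_mem_Icc.mpr hab)
  exact mul_lt_of_eq_mul_of_sub_le_of_le hc hκ (hpos t ht) (hx' t ht) (hy' t ht) heq.symm

theorem stmt_3_general {τ₀ ε δ c : ℝ} {Up U0 Um : ℝ → ℝ} (hε : 0 ≤ ε) (hδ : 0 ≤ δ)
    (hsmall : ε * (1 + δ) * (1 + c) ^ 2 < c)
    (hUpdiff : ∀ τ ≤ τ₀, DifferentiableAt ℝ Up τ)
    (hU0diff : ∀ τ ≤ τ₀, DifferentiableAt ℝ U0 τ)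
    (hUm0 : ∀ τ ≤ τ₀, 0 ≤ Um τ)
    (hMZp : ∀ τ ≤ τ₀, Up τ - ε * (Up τ + U0 τ + Um τ) ≤ deriv Up τ)
    (hMZ0 : ∀ τ ≤ τ₀, deriv U0 τ ≤ ε * (Up τ + U0 τ + Um τ))
    (hdom : ∀ τ ≤ τ₀, Um τ < δ * (U0 τ + Up τ))
    (hstart : Up τ₀ < c * U0 τ₀) :
    ∀ τ ≤ τ₀, Up τ < c * U0 τ := by
  intro τ hτ
  have hc : 0 ≤ c := le_trans (by positivity) hsmall.le
  have hpos : ∀ t ≤ τ₀, 0 < Up t + U0 t := fun t ht => by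
    rw [add_comm]
    exact pos_of_mul_pos_right ((hUm0 t ht).trans_lt (hdom t ht)) hδ
  have htotal : ∀ t ≤ τ₀, ε * (Up t + U0 t + Um t) ≤ ε * (1 + δ) * (Up t + U0 t) :=
    fun t ht => by
      rw [mul_assoc]
      exact mul_le_mul_of_nonneg_left (by linarith [hdom t ht]) hε
  exact lt_mul_left_endpoint_of_lt_mul_right_endpoint hτ hc hsmall
    (fun t ht => (hUpdiff t ht.2).continuousAt.continuousWithinAt)
    (fun t ht => (hU0diff t ht.2).continuousAt.continuousWithinAt)
    (fun t ht => (hUpdiff t ht.2.le).hasDerivAt.hasDerivWithinAt)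
    (fun t ht => (hU0diff t ht.2.le).hasDerivAt.hasDerivWithinAt)
    (fun t ht => hpos t ht.2.le)
    (fun t ht => (sub_le_sub_left (htotal t ht.2.le) _).trans (hMZp t ht.2.le))
    (fun t ht => (hMZ0 t ht.2.le).trans (htotal t ht.2.le)) hstart

lemma mul_one_add_mul_sq_lt {ε : ℝ} (hε : 0 < ε) (hε' : ε ≤ 1 / 6) :
    ε * (1 + 2 * ε) * (1 + 8 * ε) ^ 2 < 8 * ε := by
  have hfactor : (1 + 2 * ε) * (1 + 8 * ε) ^ 2 < 8 := calc
    (1 + 2 * ε) * (1 + 8 * ε) ^ 2 ≤ (1 + 2 * (1 / 6)) * (1 + 8 * (1 / 6)) ^ 2 := by gcongr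
    _ < 8 := by norm_num
  calc
    ε * (1 + 2 * ε) * (1 + 8 * ε) ^ 2 = (1 + 2 * ε) * (1 + 8 * ε) ^ 2 * ε := by ring
    _ < 8 * ε := mul_lt_mul_of_pos_right hfactor hε

/-- Dominance propagation for the Merle–Zaag differential inequalities: if the negative mode is
always dominated and the unstable mode is dominated by the neutral mode at time `τ₀`, then the
unstable mode is dominated by the neutral mode at all earlier times. -/
theorem stmt_3 (τ₀ ε : ℝ) (hε : 0 < ε) (hε' : ε ≤ 1 / 100)
    (Up U0 Um : ℝ → ℝ)
    (hUpdiff : ∀ τ ≤ τ₀, DifferentiableAt ℝ Up τ)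
    (hU0diff : ∀ τ ≤ τ₀, DifferentiableAt ℝ U0 τ)
    (hUmdiff : ∀ τ ≤ τ₀, DifferentiableAt ℝ Um τ)
    (hUp0 : ∀ τ ≤ τ₀, 0 ≤ Up τ) (hU00 : ∀ τ ≤ τ₀, 0 ≤ U0 τ) (hUm0 : ∀ τ ≤ τ₀, 0 ≤ Um τ)
    (hMZp : ∀ τ ≤ τ₀, Up τ - ε * (Up τ + U0 τ + Um τ) ≤ deriv Up τ)
    (hMZ0 : ∀ τ ≤ τ₀, |deriv U0 τ| ≤ ε * (Up τ + U0 τ + Um τ))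
    (hMZm : ∀ τ ≤ τ₀, deriv Um τ ≤ -Um τ + ε * (Up τ + U0 τ + Um τ))
    (hdom : ∀ τ ≤ τ₀, Um τ < 2 * ε * (U0 τ + Up τ))
    (hstart : Up τ₀ < 8 * ε * U0 τ₀) :
    ∀ τ ≤ τ₀, Up τ < 8 * ε * U0 τ := by
  exact stmt_3_general hε.le (by positivity) (mul_one_add_mul_sq_lt hε (by linarith))
    hUpdiff hU0diff hUm0 hMZp (fun τ hτ => (le_abs_self _).trans (hMZ0 τ hτ)) hdom hstart
end

section
/- Let γ > 0 and τ⋆ ∈ ℝ. Let α : (−∞,τ⋆] → ℝ be differentiable and set β(τ) := sup_{σ ≤ τ} |α(σ)|. Assume: β(τ) is finite and strictly positive for every τ ≤ τ⋆; β(τ) → 0 as τ → −∞; and |α′(τ) + γ·α(τ)²| ≤ (γ/10)·β(τ)² for all τ ≤ τ⋆. Then α(τ) = −β(τ) for all τ ≤ τ⋆; in particular α is everywhere negative and |α| is nondecreasing on (−∞,τ⋆]. -/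
open Filter

/-- The running supremum `β(τ) = sup_{σ ≤ τ} |α(σ)|`. -/
noncomputable def runSup (α : ℝ → ℝ) (τ : ℝ) : ℝ :=
  sSup ((fun σ => |α σ|) '' Set.Iic τ)

/-!
Where `|α|` attains its maximum over `(-∞, τ]`, at `σ` say, we have `α(σ)² = β(σ)²`, so the Riccati
inequality forces `α'(σ) < 0` unless `α` vanishes on the whole half-line. Since `σ` also maximises
`α²`, the first-order condition reads `α(σ) α'(σ) (y - σ) ≤ 0` for every `y ≤ τ`. Points `y < σ`
give `α(σ) < 0`, and then `y = τ` gives `σ = τ`; hence `β(τ) = |α(τ)| = -α(τ)`.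
-/

open Set Topology

theorem exists_isMaxOn_Iic_of_tendsto_atBot {X Y : Type*} [LinearOrder X] [TopologicalSpace X]
    [ClosedIicTopology X] [CompactIccSpace X] [NoMaxOrder X] [LinearOrder Y] [TopologicalSpace Y]
    [ClosedIciTopology Y] {g : X → Y} {b x₀ : X} {c : Y} (hg : ContinuousOn g (Iic b))
    (hlim : Tendsto g atBot (𝓝 c)) (hx₀ : x₀ ≤ b) (hle : c ≤ g x₀) :
    ∃ x ≤ b, IsMaxOn g (Iic b) x := by
  by_cases! hbound : ∀ x ≤ b, g x ≤ c
  · exact ⟨x₀, hx₀, fun x hx ↦ (hbound x hx).trans hle⟩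
  · obtain ⟨x₁, hx₁, hlt⟩ := hbound
    have hfar : cocompact X ⊓ 𝓟 (Iic b) ≤ atBot := by
      refine (inf_le_inf_right _ cocompact_le_atBot_atTop).trans ?_
      rw [inf_sup_right, (disjoint_atTop_principal_Iic b).eq_bot, sup_bot_eq]
      exact inf_le_left
    exact hg.exists_isMaxOn' isClosed_Iic hx₁ (hfar (hlim.eventually_le_const hlt))

section FirstOrder

variable {f : ℝ → ℝ} {f' x y : ℝ} {s : Set ℝ}

theorem mul_sub_nonpos_of_isMaxOn (hs : Convex ℝ s) (hx : x ∈ s) (hy : y ∈ s)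
    (hmax : IsMaxOn f s x) (hf : HasDerivWithinAt f f' s x) : f' * (y - x) ≤ 0 := by
  have hcone : y - x ∈ posTangentConeAt s x :=
    sub_mem_posTangentConeAt_of_segment_subset (hs.segment_subset hx hy)
  simpa [mul_comm] using hmax.localize.hasFDerivWithinAt_nonpos hf.hasFDerivWithinAt hcone

theorem mul_mul_sub_nonpos_of_isMaxOn_abs (hs : Convex ℝ s) (hx : x ∈ s) (hy : y ∈ s)
    (hmax : IsMaxOn (fun z ↦ |f z|) s x) (hf : HasDerivWithinAt f f' s x) :
    f x * f' * (y - x) ≤ 0 := by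
  have hmax_sq : IsMaxOn (fun z ↦ f z ^ 2) s x :=
    isMaxOn_iff.2 fun z hz ↦ sq_le_sq.2 (hmax hz)
  have hfirst : 2 * f x * f' * (y - x) ≤ 0 := by
    simpa using mul_sub_nonpos_of_isMaxOn hs hx hy hmax_sq (hf.pow 2)
  linarith

theorem neg_and_eq_of_isMaxOn_abs_Iic_of_deriv_neg {b : ℝ} (hx : x ≤ b)
    (hmax : IsMaxOn (fun z ↦ |f z|) (Iic b) x) (hf : HasDerivWithinAt f f' (Iic b) x)
    (hf' : f' < 0) (hfx : f x ≠ 0) : f x < 0 ∧ x = b := by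
  have hfirst : ∀ y ≤ b, f x * f' * (y - x) ≤ 0 := fun y hy ↦
    mul_mul_sub_nonpos_of_isMaxOn_abs (convex_Iic b) hx hy hmax hf
  have hneg : f x < 0 := by
    have hleft := hfirst (x - 1) (by linarith)
    refine hfx.lt_of_le (le_of_not_gt fun hpos ↦ ?_)
    linarith [mul_neg_of_pos_of_neg hpos hf']
  have hprod : 0 < f x * f' := mul_pos_of_neg_of_neg hneg hf'
  exact ⟨hneg, hx.antisymm (sub_nonpos.1 (nonpos_of_mul_nonpos_right (hfirst b le_rfl) hprod))⟩

end FirstOrder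

section RunSup

variable {α α' : ℝ → ℝ} {σ τ τs : ℝ}

theorem abs_le_runSup (hbdd : BddAbove ((fun ρ ↦ |α ρ|) '' Iic τ)) (hσ : σ ≤ τ) :
    |α σ| ≤ runSup α τ :=
  le_csSup hbdd (mem_image_of_mem _ hσ)

theorem runSup_eq_of_isMaxOn (hσ : σ ≤ τ) (hmax : IsMaxOn (fun ρ ↦ |α ρ|) (Iic τ) σ) :
    runSup α τ = |α σ| :=
  IsGreatest.csSup_eq ⟨mem_image_of_mem _ hσ, forall_mem_image.2 hmax⟩

theorem tendsto_zero_of_tendsto_runSup (hbdd : BddAbove ((fun σ ↦ |α σ|) '' Iic τs))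
    (hlim : Tendsto (runSup α) atBot (𝓝 0)) : Tendsto α atBot (𝓝 0) := by
  refine squeeze_zero_norm' ?_ hlim
  filter_upwards [Iic_mem_atBot τs] with τ hτ
  exact abs_le_runSup (hbdd.mono (image_mono (Iic_subset_Iic.2 hτ))) le_rfl

theorem exists_isMaxOn_abs_Iic (hcont : ContinuousOn α (Iic τ)) (hlim : Tendsto α atBot (𝓝 0)) :
    ∃ σ ≤ τ, IsMaxOn (fun ρ ↦ |α ρ|) (Iic τ) σ :=
  exists_isMaxOn_Iic_of_tendsto_atBot hcont.abs (by simpa using hlim.abs) le_rfl (abs_nonneg _)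

theorem eq_neg_runSup_of_deriv_neg (hderiv : ∀ τ ≤ τs, HasDerivWithinAt α (α' τ) (Iic τs) τ)
    (hlim : Tendsto α atBot (𝓝 0))
    (hneg : ∀ τ ≤ τs, α τ ≠ 0 → |α τ| = runSup α τ → α' τ < 0) (hτ : τ ≤ τs) :
    α τ = -runSup α τ := by
  have hsub : Iic τ ⊆ Iic τs := Iic_subset_Iic.2 hτ
  obtain ⟨σ, hστ, hmax⟩ := exists_isMaxOn_abs_Iic
    (fun ρ hρ ↦ ((hderiv ρ (hsub hρ)).mono hsub).continuousWithinAt) hlim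
  have hsup : runSup α τ = |α σ| := runSup_eq_of_isMaxOn hστ hmax
  rcases eq_or_ne (α σ) 0 with hzero | hne
  · have hατ : |α τ| ≤ |α σ| := hmax self_mem_Iic
    rw [hzero, abs_zero] at hατ hsup
    rw [hsup, neg_zero, abs_nonpos_iff.1 hατ]
  · have hrecord : runSup α σ = |α σ| :=
      runSup_eq_of_isMaxOn le_rfl (hmax.on_subset (Iic_subset_Iic.2 hστ))
    obtain ⟨hασ, rfl⟩ := neg_and_eq_of_isMaxOn_abs_Iic_of_deriv_neg hστ hmax
      ((hderiv σ (hsub hστ)).mono hsub) (hneg σ (hsub hστ) hne hrecord.symm) hne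
    rw [hsup, abs_of_neg hασ, neg_neg]

end RunSup

theorem stmt_4_general {γ c τs : ℝ} (hc : c < γ) {α α' : ℝ → ℝ}
    (hderiv : ∀ τ ≤ τs, HasDerivWithinAt α (α' τ) (Iic τs) τ)
    (hlim : Tendsto α atBot (𝓝 0))
    (hode : ∀ τ ≤ τs, α' τ + γ * α τ ^ 2 ≤ c * runSup α τ ^ 2) :
    (∀ τ ≤ τs, α τ = -runSup α τ) ∧
    (∀ τ ≤ τs, 0 < runSup α τ → α τ < 0) ∧
    (∀ σ τ : ℝ, σ ≤ τ → τ ≤ τs → |α σ| ≤ |α τ|) := by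
  have hneg : ∀ τ ≤ τs, α τ ≠ 0 → |α τ| = runSup α τ → α' τ < 0 := by
    intro τ hτ hne hsup
    have hriccati := hode τ hτ
    rw [← hsup, sq_abs] at hriccati
    linarith [mul_lt_mul_of_pos_right hc (sq_pos_of_ne_zero hne)]
  have heq : ∀ τ ≤ τs, α τ = -runSup α τ := fun τ ↦ eq_neg_runSup_of_deriv_neg hderiv hlim hneg
  refine ⟨heq, fun τ hτ hpos ↦ (heq τ hτ).trans_lt (neg_neg_of_pos hpos), fun σ τ hστ hτ ↦ ?_⟩
  obtain ⟨ρ, -, hmax⟩ := exists_isMaxOn_abs_Iic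
    (fun ρ hρ ↦ (hderiv ρ hρ).continuousWithinAt) hlim
  have hbdd := hmax.bddAbove.mono (image_mono (Iic_subset_Iic.2 hτ))
  calc |α σ| ≤ runSup α τ := abs_le_runSup hbdd hστ
    _ = -α τ := by rw [heq τ hτ, neg_neg]
    _ ≤ |α τ| := neg_le_abs _

/-- Sign and monotonicity step in the proof of inwards quadratic bending: if `α` satisfies the
Riccati-type inequality `|α′ + γα²| ≤ (γ/10)β²` with `β` the running sup of `|α|`, which is
finite, positive and tends to `0` at `−∞`, then `α = −β`; in particular `α` is negative and
`|α|` is nondecreasing. -/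
theorem stmt_4 (γ τs : ℝ) (hγ : 0 < γ) (α : ℝ → ℝ)
    (hdiff : ∀ τ ≤ τs, DifferentiableAt ℝ α τ)
    (hbdd : ∀ τ ≤ τs, BddAbove ((fun σ => |α σ|) '' Set.Iic τ))
    (hpos : ∀ τ ≤ τs, 0 < runSup α τ)
    (hlim : Tendsto (runSup α) atBot (nhds 0))
    (hode : ∀ τ ≤ τs, |deriv α τ + γ * (α τ) ^ 2| ≤ γ / 10 * (runSup α τ) ^ 2) :
    (∀ τ ≤ τs, α τ = -runSup α τ) ∧
    (∀ τ ≤ τs, α τ < 0) ∧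
    (∀ σ τ : ℝ, σ ≤ τ → τ ≤ τs → |α σ| ≤ |α τ|) := by
  obtain ⟨heq, hneg, hmono⟩ := stmt_4_general (by linarith : γ / 10 < γ)
    (fun τ hτ ↦ (hdiff τ hτ).hasDerivAt.hasDerivWithinAt)
    (tendsto_zero_of_tendsto_runSup (hbdd τs le_rfl) hlim) (fun τ hτ ↦ (abs_le.1 (hode τ hτ)).2)
  exact ⟨heq, fun τ hτ ↦ hneg τ hτ (hpos τ hτ), hmono⟩
end

section
/- Let γ > 0 and τ⋆ < 0. Let α : (−∞,τ⋆] → ℝ be differentiable with α(τ) < 0 for all τ ≤ τ⋆, and suppose that for every ε > 0 there exists τ_ε ≤ τ⋆ such that |α′(τ) + γ·α(τ)²| ≤ ε·α(τ)² for all τ ≤ τ_ε. Then τ·α(τ) → 1/γ as τ → −∞. -/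
open Filter

/-!
The substitution `β = 1 / α` linearises the Riccati-type equation: `β' = -α' / α² = γ + o(1)`.
By the mean value inequality `β τ = γ τ + o(τ)`, and `τ α τ` is the inverse of `β τ / τ`.
-/

open Asymptotics Topology

section MeanValue

variable {E : Type*} [NormedAddCommGroup E] [NormedSpace ℝ E] {f f' : ℝ → E}

theorem isLittleO_id_atBot_of_hasDerivAt
    (hf : ∀ᶠ x in atBot, HasDerivAt f (f' x) x) (hf' : Tendsto f' atBot (𝓝 0)) :
    f =o[atBot] (id : ℝ → ℝ) := by
  refine .of_bound fun c hc ↦ ?_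
  have hf'_le : ∀ᶠ x in atBot, ‖f' x‖ ≤ c / 2 :=
    (hf'.norm.eventually_lt_const (by simpa using half_pos hc)).mono fun _ ↦ le_of_lt
  obtain ⟨a, ha⟩ := eventually_atBot.1 ((hf.and hf'_le).and (eventually_le_atBot 0))
  have ha₀ : a ≤ 0 := (ha a le_rfl).2
  filter_upwards [eventually_le_atBot a,
    (isLittleO_const_id_atBot (f a)).bound (half_pos hc)] with x hxa hfa
  have mean_value : ‖f x - f a‖ ≤ c / 2 * ‖x - a‖ :=
    (convex_Iic a).norm_image_sub_le_of_norm_hasDerivWithin_le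
      (fun y hy ↦ (ha y hy).1.1.hasDerivWithinAt) (fun y hy ↦ (ha y hy).1.2)
      Set.self_mem_Iic hxa
  have dist_le : ‖x - a‖ ≤ ‖x‖ := by
    rw [Real.norm_of_nonpos (sub_nonpos.2 hxa), Real.norm_of_nonpos (hxa.trans ha₀)]
    linarith
  calc
    ‖f x‖ ≤ ‖f x - f a‖ + ‖f a‖ := norm_le_norm_sub_add _ _
    _ ≤ c / 2 * ‖x‖ + c / 2 * ‖x‖ := add_le_add (mean_value.trans (by gcongr)) hfa
    _ = c * ‖id x‖ := by rw [id, ← add_mul, add_halves]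

theorem tendsto_inv_smul_atBot_of_hasDerivAt {L : E}
    (hf : ∀ᶠ x in atBot, HasDerivAt f (f' x) x) (hf' : Tendsto f' atBot (𝓝 L)) :
    Tendsto (fun x ↦ x⁻¹ • f x) atBot (𝓝 L) := by
  have hsub : ∀ᶠ x in atBot, HasDerivAt (fun x ↦ f x - x • L) (f' x - L) x :=
    hf.mono fun x hx ↦ by simpa using hx.fun_sub ((hasDerivAt_id x).smul_const L)
  have hlim := (isLittleO_id_atBot_of_hasDerivAt hsub
    (tendsto_sub_nhds_zero_iff.2 hf')).tendsto_inv_smul_nhds_zero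
  refine tendsto_sub_nhds_zero_iff.1 (hlim.congr' ?_)
  filter_upwards [eventually_ne_atBot 0] with x hx
  rw [id, smul_sub, inv_smul_smul₀ hx]

end MeanValue

section Riccati

variable {𝕜 : Type*} [NontriviallyNormedField 𝕜] [NormedAlgebra ℝ 𝕜] {α α' : ℝ → 𝕜} {γ : 𝕜}

theorem tendsto_inv_smul_inv_of_hasDerivAt_of_isLittleO_sq
    (hα : ∀ᶠ τ in atBot, HasDerivAt α (α' τ) τ) (hα₀ : ∀ᶠ τ in atBot, α τ ≠ 0)
    (hode : (fun τ ↦ α' τ + γ * α τ ^ 2) =o[atBot] fun τ ↦ α τ ^ 2) :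
    Tendsto (fun τ ↦ τ⁻¹ • (α τ)⁻¹) atBot (𝓝 γ) := by
  have hderiv : ∀ᶠ τ in atBot, HasDerivAt (fun τ ↦ (α τ)⁻¹) (-α' τ / α τ ^ 2) τ := by
    filter_upwards [hα, hα₀] with τ hτ hτ₀ using hτ.fun_inv hτ₀
  have hlim : Tendsto (fun τ ↦ γ - (α' τ + γ * α τ ^ 2) / α τ ^ 2) atBot (𝓝 γ) := by
    simpa only [sub_zero] using hode.tendsto_div_nhds_zero.const_sub γ
  refine tendsto_inv_smul_atBot_of_hasDerivAt hderiv (hlim.congr' ?_)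
  filter_upwards [hα₀] with τ hτ₀
  field_simp
  ring

theorem stmt_5_general (hγ : γ ≠ 0)
    (hα : ∀ᶠ τ in atBot, HasDerivAt α (α' τ) τ) (hα₀ : ∀ᶠ τ in atBot, α τ ≠ 0)
    (hode : (fun τ ↦ α' τ + γ * α τ ^ 2) =o[atBot] fun τ ↦ α τ ^ 2) :
    Tendsto (fun τ ↦ τ • α τ) atBot (𝓝 γ⁻¹) := by
  simpa only [smul_inv₀, inv_inv] using
    (tendsto_inv_smul_inv_of_hasDerivAt_of_isLittleO_sq hα hα₀ hode).inv₀ hγ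

end Riccati

/-- ODE-integration step of the inwards quadratic bending theorem: a negative differentiable
function satisfying `α′ = −γα² + o(α²)` as `τ → −∞` has the asymptotics `τ·α(τ) → 1/γ`. -/
theorem stmt_5 (γ τs : ℝ) (hγ : 0 < γ) (hτs : τs < 0) (α : ℝ → ℝ)
    (hdiff : ∀ τ ≤ τs, DifferentiableAt ℝ α τ)
    (hneg : ∀ τ ≤ τs, α τ < 0)
    (hode : ∀ ε : ℝ, 0 < ε → ∃ τε ≤ τs, ∀ τ ≤ τε,
      |deriv α τ + γ * (α τ) ^ 2| ≤ ε * (α τ) ^ 2) :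
    Tendsto (fun τ => τ * α τ) atBot (nhds (1 / γ)) := by
  have hode' : (fun τ ↦ deriv α τ + γ * α τ ^ 2) =o[atBot] fun τ ↦ α τ ^ 2 := by
    refine .of_bound fun ε hε ↦ ?_
    obtain ⟨τε, -, hτε⟩ := hode ε hε
    filter_upwards [eventually_le_atBot τε] with τ hτ
    simpa only [Real.norm_eq_abs, abs_sq] using hτε τ hτ
  rw [one_div]
  exact stmt_5_general hγ.ne'
    ((eventually_le_atBot τs).mono fun τ hτ ↦ (hdiff τ hτ).hasDerivAt)
    ((eventually_le_atBot τs).mono fun τ hτ ↦ (hneg τ hτ).ne) hode'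
end

section
/- Let γ > 0, ε ≥ 0 and τ ≤ τ₀ be real numbers. Let α : [τ,τ₀] → ℝ be differentiable with α(s) < 0 for all s ∈ [τ,τ₀], and suppose |α′(s) + γ·α(s)²| ≤ ε·α(s)² for all s ∈ [τ,τ₀]. Then (γ − ε)·(τ₀ − τ) ≤ 1/α(τ₀) − 1/α(τ) ≤ (γ + ε)·(τ₀ − τ). -/
/-! The inequality says that `(1 / α)′ = -α′ / α²` takes its values in `[γ - ε, γ + ε]`, so the two
bounds are the mean value inequalities for `1 / α`. -/

open Set

section RiccatiComparison

variable {f : ℝ → ℝ} {a b c : ℝ}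

theorem mul_sub_le_inv_sub_inv_of_deriv_le_neg_mul_sq (hab : a ≤ b)
    (hf : ContinuousOn f (Icc a b)) (hf' : DifferentiableOn ℝ f (Ioo a b))
    (hf₀ : ∀ x ∈ Icc a b, f x ≠ 0) (hderiv : ∀ x ∈ Ioo a b, deriv f x ≤ -c * f x ^ 2) :
    c * (b - a) ≤ (f b)⁻¹ - (f a)⁻¹ := by
  have hf₀' : ∀ x ∈ Ioo a b, f x ≠ 0 := fun x hx => hf₀ x (Ioo_subset_Icc_self hx)
  have le_deriv_inv : ∀ x ∈ Ioo a b, c ≤ deriv f⁻¹ x := by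
    intro x hx
    have hfx : DifferentiableAt ℝ f x := hf'.differentiableAt (Ioo_mem_nhds hx.1 hx.2)
    rw [deriv_inv'' hfx (hf₀' x hx), le_div_iff₀ (sq_pos_of_ne_zero (hf₀' x hx))]
    linarith [hderiv x hx]
  rw [← interior_Icc] at hf' hf₀' le_deriv_inv
  exact (convex_Icc a b).mul_sub_le_image_sub_of_le_deriv (hf.inv₀ hf₀) (hf'.inv hf₀')
    le_deriv_inv a (left_mem_Icc.2 hab) b (right_mem_Icc.2 hab) hab

theorem inv_sub_inv_le_mul_sub_of_neg_mul_sq_le_deriv (hab : a ≤ b)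
    (hf : ContinuousOn f (Icc a b)) (hf' : DifferentiableOn ℝ f (Ioo a b))
    (hf₀ : ∀ x ∈ Icc a b, f x ≠ 0) (hderiv : ∀ x ∈ Ioo a b, -c * f x ^ 2 ≤ deriv f x) :
    (f b)⁻¹ - (f a)⁻¹ ≤ c * (b - a) := by
  have hderiv_neg : ∀ x ∈ Ioo a b, deriv (-f) x ≤ -(-c) * (-f) x ^ 2 := by
    intro x hx
    rw [deriv.neg, Pi.neg_apply, neg_sq]
    linarith [hderiv x hx]
  have hneg := mul_sub_le_inv_sub_inv_of_deriv_le_neg_mul_sq hab hf.neg hf'.neg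
    (fun x hx => neg_ne_zero.2 (hf₀ x hx)) hderiv_neg
  simp only [Pi.neg_apply, inv_neg] at hneg
  linarith

end RiccatiComparison

theorem stmt_6_general {γ ε τ τ₀ : ℝ} (hττ₀ : τ ≤ τ₀) {α : ℝ → ℝ}
    (hcont : ContinuousOn α (Icc τ τ₀)) (hdiff : DifferentiableOn ℝ α (Ioo τ τ₀))
    (hne : ∀ s ∈ Icc τ τ₀, α s ≠ 0)
    (hode : ∀ s ∈ Ioo τ τ₀, |deriv α s + γ * α s ^ 2| ≤ ε * α s ^ 2) :
    (γ - ε) * (τ₀ - τ) ≤ 1 / α τ₀ - 1 / α τ ∧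
      1 / α τ₀ - 1 / α τ ≤ (γ + ε) * (τ₀ - τ) := by
  have hupper : ∀ s ∈ Ioo τ τ₀, deriv α s ≤ -(γ - ε) * α s ^ 2 := fun s hs => by
    linarith [(abs_le.1 (hode s hs)).2]
  have hlower : ∀ s ∈ Ioo τ τ₀, -(γ + ε) * α s ^ 2 ≤ deriv α s := fun s hs => by
    linarith [(abs_le.1 (hode s hs)).1]
  simp only [one_div]
  exact ⟨mul_sub_le_inv_sub_inv_of_deriv_le_neg_mul_sq hττ₀ hcont hdiff hne hupper,
    inv_sub_inv_le_mul_sub_of_neg_mul_sq_le_deriv hττ₀ hcont hdiff hne hlower⟩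

/-- Backward integration of the Riccati-type differential inequality: if `α < 0` on `[τ, τ₀]`
and `|α′ + γα²| ≤ εα²` there, then `(γ−ε)(τ₀−τ) ≤ 1/α(τ₀) − 1/α(τ) ≤ (γ+ε)(τ₀−τ)`. -/
theorem stmt_6 (γ ε τ τ₀ : ℝ) (hγ : 0 < γ) (hε : 0 ≤ ε) (hττ₀ : τ ≤ τ₀)
    (α : ℝ → ℝ)
    (hdiff : ∀ s ∈ Set.Icc τ τ₀, DifferentiableAt ℝ α s)
    (hneg : ∀ s ∈ Set.Icc τ τ₀, α s < 0)
    (hode : ∀ s ∈ Set.Icc τ τ₀, |deriv α s + γ * (α s) ^ 2| ≤ ε * (α s) ^ 2) :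
    (γ - ε) * (τ₀ - τ) ≤ 1 / α τ₀ - 1 / α τ ∧
      1 / α τ₀ - 1 / α τ ≤ (γ + ε) * (τ₀ - τ) := by
  exact stmt_6_general hττ₀ (fun s hs => (hdiff s hs).continuousAt.continuousWithinAt)
    (fun s hs => (hdiff s (Ioo_subset_Icc_self hs)).differentiableWithinAt)
    (fun s hs => (hneg s hs).ne) (fun s hs => hode s (Ioo_subset_Icc_self hs))
end

section
/- Let γ > 0 and κ ∈ (0,1] with γκ ≤ 1/2, and let τ₀ ≤ −1. Let α : (−∞,τ₀] → ℝ be differentiable and let m : (−∞,τ₀] → (0,∞) satisfy m(τ) ≤ 1/(2γ|τ|) for all τ ≤ τ₀. Assume: (i) |α′(τ) + γ·α(τ)²| ≤ (γ²κ/2)·α(τ)² for every τ ≤ τ₀ at which |α(τ)| ≥ m(τ); and (ii) α(τ₀) ≠ 0 with |1/α(τ₀) − γτ₀| ≤ (γ²κ/2)·|τ₀|. Then for every τ ≤ τ₀ one has α(τ) < 0, |1/α(τ) − γτ| ≤ (γ²κ/2)·|τ|, and |α(τ) − 1/(γτ)| ≤ (3κ/4)/|τ|. -/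
/-!
The reciprocal of `α` turns the Riccati inequality `|α' + γα²| ≤ cα²` into `|(1/α - γτ)'| ≤ c`, so
as long as the inequality is available, the bound `|1/α - γτ| ≤ c|τ|` is inherited by earlier
times: going back from `t` to `s < t ≤ 0`, both sides grow by at most, respectively exactly,
`c(t - s)`. In turn this bound gives `|α| ≥ 1/((γ + c)|τ|)`, which is strictly above the level
`1/(q|τ|)` at which the inequality holds when `γ + c < q`; by continuity, `|α|` can therefore
never reach that level.
-/

open Set

section Continuation

variable {X Y : Type*} [ConditionallyCompleteLinearOrder X] [DenselyOrdered X]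
  [TopologicalSpace X] [OrderTopology X] [LinearOrder Y] [TopologicalSpace Y]
  [OrderClosedTopology Y]

theorem lt_of_forall_Icc_le_imp_lt {f g : X → Y} {b : X} (hf : ContinuousOn f (Iic b))
    (hg : ContinuousOn g (Iic b)) (hb : f b ≤ g b)
    (himprove : ∀ s ≤ b, (∀ t ∈ Icc s b, f t ≤ g t) → f s < g s) :
    ∀ s ≤ b, f s < g s := by
  intro s hs
  by_contra! hfail
  have hcompact : IsCompact {t ∈ Icc s b | g t ≤ f t} :=
    isCompact_Icc.of_isClosed_subset
      (isClosed_Icc.isClosed_le (hg.mono Icc_subset_Iic_self) (hf.mono Icc_subset_Iic_self))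
      (sep_subset _ _)
  obtain ⟨u, ⟨hu, hgu⟩, hlast⟩ := hcompact.exists_isGreatest ⟨s, left_mem_Icc.mpr hs, hfail⟩
  have hafter : ∀ t ∈ Ioc u b, f t ≤ g t := by
    intro t ht
    by_contra! hlt
    exact ht.1.not_ge (hlast ⟨⟨hu.1.trans ht.1.le, ht.2⟩, hlt.le⟩)
  have hfu : f u ≤ g u := by
    rcases hu.2.eq_or_lt with rfl | hub
    · exact hb
    · exact ContinuousWithinAt.closure_le (by simp [closure_Ioc hub.ne, hu.2])
        ((hf u hu.2).mono Ioc_subset_Iic_self) ((hg u hu.2).mono Ioc_subset_Iic_self) hafter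
  refine (himprove u hu.2 fun t ht ↦ ?_).not_ge hgu
  rcases ht.1.eq_or_lt with rfl | hut
  · exact hfu
  · exact hafter t ⟨hut, ht.2⟩

end Continuation

theorem norm_inv_sub_inv_le_div {K : Type*} [NormedDivisionRing K] {x y : K} {ε : ℝ}
    (hxy : ‖x - y‖ ≤ ε) (hε : ε < ‖y‖) : ‖x⁻¹ - y⁻¹‖ ≤ ε / (‖y‖ * (‖y‖ - ε)) := by
  have hε₀ : 0 ≤ ε := (norm_nonneg _).trans hxy
  have hx : ‖y‖ - ε ≤ ‖x‖ := by linarith [norm_le_norm_add_norm_sub x y]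
  have hgap : 0 < ‖y‖ - ε := sub_pos.mpr hε
  have hy₀ : y ≠ 0 := norm_pos_iff.mp (hε₀.trans_lt hε)
  have hx₀ : x ≠ 0 := norm_pos_iff.mp (hgap.trans_le hx)
  calc ‖x⁻¹ - y⁻¹‖ = ‖x - y‖ / (‖y‖ * ‖x‖) := by
        rw [← dist_eq_norm, dist_inv_inv₀ hx₀ hy₀, dist_eq_norm, mul_comm]
    _ ≤ ε / (‖y‖ * (‖y‖ - ε)) := by gcongr

section NearRiccatiSolution

variable {γ c q a τ : ℝ}

theorem neg_of_abs_inv_sub_mul_le (hcγ : c < γ) (hτ : τ < 0)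
    (h : |a⁻¹ - γ * τ| ≤ c * |τ|) : a < 0 := by
  rw [abs_of_neg hτ] at h
  exact inv_lt_zero.mp (by nlinarith [(abs_le.mp h).2])

theorem inv_mul_abs_lt_abs_of_abs_inv_sub_mul_le (hγ : 0 ≤ γ) (hq : γ + c < q) (ha : a ≠ 0)
    (hτ : τ ≠ 0) (h : |a⁻¹ - γ * τ| ≤ c * |τ|) : (q * |τ|)⁻¹ < |a| := by
  have hinv : |a|⁻¹ < q * |τ| := by
    calc |a|⁻¹ = |a⁻¹| := (abs_inv a).symm
      _ ≤ |γ * τ| + |a⁻¹ - γ * τ| := by linarith [abs_sub_abs_le_abs_sub a⁻¹ (γ * τ)]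
      _ ≤ γ * |τ| + c * |τ| := by rw [abs_mul, abs_of_nonneg hγ]; gcongr
      _ = (γ + c) * |τ| := by ring
      _ < q * |τ| := by gcongr
  exact inv_lt_of_inv_lt₀ (abs_pos.mpr ha) hinv

theorem abs_sub_inv_mul_le_of_abs_inv_sub_mul_le (hcγ : c < γ) (hτ : τ ≠ 0)
    (h : |a⁻¹ - γ * τ| ≤ c * |τ|) : |a - (γ * τ)⁻¹| ≤ c / (γ * (γ - c)) / |τ| := by
  have hτ' : 0 < |τ| := abs_pos.mpr hτ
  have hc : 0 ≤ c := nonneg_of_mul_nonneg_left ((abs_nonneg _).trans h) hτ'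
  have hγτ : |γ * τ| = γ * |τ| := by rw [abs_mul, abs_of_pos (hc.trans_lt hcγ)]
  have hlt : c * |τ| < |γ * τ| := by rw [hγτ]; gcongr
  calc |a - (γ * τ)⁻¹| ≤ c * |τ| / (|γ * τ| * (|γ * τ| - c * |τ|)) := by
        simpa only [inv_inv, Real.norm_eq_abs] using norm_inv_sub_inv_le_div (K := ℝ) h hlt
    _ = c / (γ * (γ - c)) / |τ| := by
        rw [hγτ, ← sub_mul]
        field_simp

end NearRiccatiSolution

section RiccatiInequality

variable {γ c q : ℝ} {α α' : ℝ → ℝ}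

theorem abs_inv_sub_mul_sub_le_of_riccati {S : Set ℝ} (hS : Convex ℝ S)
    (hderiv : ∀ t ∈ S, HasDerivWithinAt α (α' t) S t) (hne : ∀ t ∈ S, α t ≠ 0)
    (hode : ∀ t ∈ S, |α' t + γ * α t ^ 2| ≤ c * α t ^ 2) {s t : ℝ} (hs : s ∈ S) (ht : t ∈ S) :
    |((α s)⁻¹ - γ * s) - ((α t)⁻¹ - γ * t)| ≤ c * |s - t| := by
  have hderiv_inv : ∀ x ∈ S, HasDerivWithinAt (fun y ↦ (α y)⁻¹ - γ * y)
      (-α' x / α x ^ 2 - γ) S x := fun x hx ↦ by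
    simpa only [mul_one, id] using
      ((hderiv x hx).fun_inv (hne x hx)).fun_sub ((hasDerivWithinAt_id x S).const_mul γ)
  have hbound : ∀ x ∈ S, ‖-α' x / α x ^ 2 - γ‖ ≤ c := by
    intro x hx
    have hαx := hne x hx
    have hsq : 0 < α x ^ 2 := by positivity
    have heq : -α' x / α x ^ 2 - γ = -((α' x + γ * α x ^ 2) / α x ^ 2) := by field_simp; ring
    rw [heq, norm_neg, Real.norm_eq_abs, abs_div, abs_of_pos hsq, div_le_iff₀ hsq]
    exact hode x hx
  exact hS.norm_image_sub_le_of_norm_hasDerivWithin_le hderiv_inv hbound ht hs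

theorem abs_inv_sub_mul_le_of_riccati_of_le {s t : ℝ} (hst : s ≤ t) (ht : t ≤ 0)
    (hderiv : ∀ x ∈ Icc s t, HasDerivWithinAt α (α' x) (Icc s t) x)
    (hne : ∀ x ∈ Icc s t, α x ≠ 0)
    (hode : ∀ x ∈ Icc s t, |α' x + γ * α x ^ 2| ≤ c * α x ^ 2)
    (hend : |(α t)⁻¹ - γ * t| ≤ c * |t|) : |(α s)⁻¹ - γ * s| ≤ c * |s| := by
  have hdrift := abs_inv_sub_mul_sub_le_of_riccati (convex_Icc s t) hderiv hne hode
    (left_mem_Icc.mpr hst) (right_mem_Icc.mpr hst)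
  calc |(α s)⁻¹ - γ * s|
      ≤ |(α t)⁻¹ - γ * t| + |((α s)⁻¹ - γ * s) - ((α t)⁻¹ - γ * t)| := by
        linarith [abs_sub_abs_le_abs_sub ((α s)⁻¹ - γ * s) ((α t)⁻¹ - γ * t)]
    _ ≤ c * |t| + c * |s - t| := add_le_add hend hdrift
    _ = c * |s| := by
        rw [abs_of_nonpos ht, abs_of_nonpos (sub_nonpos.mpr hst), abs_of_nonpos (hst.trans ht)]
        ring

theorem abs_inv_sub_mul_le_of_riccati_above_threshold {τ₀ : ℝ} (hγ : 0 ≤ γ) (hq : γ + c < q)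
    (hτ₀ : τ₀ < 0) (hderiv : ∀ τ ≤ τ₀, HasDerivWithinAt α (α' τ) (Iic τ₀) τ)
    (hode : ∀ τ ≤ τ₀, (q * |τ|)⁻¹ ≤ |α τ| → |α' τ + γ * α τ ^ 2| ≤ c * α τ ^ 2)
    (hα₀ : α τ₀ ≠ 0) (hinit : |(α τ₀)⁻¹ - γ * τ₀| ≤ c * |τ₀|) :
    ∀ τ ≤ τ₀, α τ ≠ 0 ∧ |(α τ)⁻¹ - γ * τ| ≤ c * |τ| := by
  have hc : 0 ≤ c := nonneg_of_mul_nonneg_left ((abs_nonneg _).trans hinit) (abs_pos.mpr hτ₀.ne)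
  have hq₀ : 0 < q := by linarith
  have htime_ne : ∀ {τ}, τ ≤ τ₀ → τ ≠ 0 := fun hτ ↦ (hτ.trans_lt hτ₀).ne
  have hpropagate : ∀ s ≤ τ₀, (∀ t ∈ Icc s τ₀, (q * |t|)⁻¹ ≤ |α t|) →
      α s ≠ 0 ∧ |(α s)⁻¹ - γ * s| ≤ c * |s| := by
    intro s hs habove
    have hne : ∀ t ∈ Icc s τ₀, α t ≠ 0 := fun t ht ↦ by
      have htpos : 0 < |t| := abs_pos.mpr (htime_ne ht.2)
      exact abs_pos.mp (lt_of_lt_of_le (by positivity) (habove t ht))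
    exact ⟨hne s (left_mem_Icc.mpr hs), abs_inv_sub_mul_le_of_riccati_of_le hs hτ₀.le
      (fun t ht ↦ (hderiv t ht.2).mono Icc_subset_Iic_self) hne
      (fun t ht ↦ hode t ht.2 (habove t ht)) hinit⟩
  have hcont_threshold : ContinuousOn (fun τ ↦ (q * |τ|)⁻¹) (Iic τ₀) :=
    (by fun_prop : ContinuousOn (fun τ ↦ q * |τ|) (Iic τ₀)).inv₀
      fun τ hτ ↦ mul_ne_zero hq₀.ne' (abs_ne_zero.mpr (htime_ne hτ))
  have hcont : ContinuousOn (fun τ ↦ |α τ|) (Iic τ₀) :=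
    ContinuousOn.abs fun τ hτ ↦ (hderiv τ hτ).continuousWithinAt
  have habove : ∀ τ ≤ τ₀, (q * |τ|)⁻¹ < |α τ| :=
    lt_of_forall_Icc_le_imp_lt hcont_threshold hcont
      (inv_mul_abs_lt_abs_of_abs_inv_sub_mul_le hγ hq hα₀ hτ₀.ne hinit).le fun s hs h ↦
        have ⟨hαs, hclose⟩ := hpropagate s hs h
        inv_mul_abs_lt_abs_of_abs_inv_sub_mul_le hγ hq hαs (htime_ne hs) hclose
  exact fun τ hτ ↦ hpropagate τ hτ fun t ht ↦ (habove t ht.2).le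

end RiccatiInequality

theorem stmt_7_general {γ κ q τ₀ : ℝ} (hγ : 0 < γ) (hγκ : γ * κ < 2)
    (hq : γ + γ ^ 2 * κ / 2 < q) (hτ₀ : τ₀ < 0) {α α' : ℝ → ℝ}
    (hderiv : ∀ τ ≤ τ₀, HasDerivWithinAt α (α' τ) (Iic τ₀) τ)
    (hode : ∀ τ ≤ τ₀, 1 / (q * |τ|) ≤ |α τ| →
      |α' τ + γ * α τ ^ 2| ≤ γ ^ 2 * κ / 2 * α τ ^ 2)
    (hα₀ : α τ₀ ≠ 0) (hinit : |1 / α τ₀ - γ * τ₀| ≤ γ ^ 2 * κ / 2 * |τ₀|) :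
    ∀ τ ≤ τ₀, α τ < 0 ∧ |1 / α τ - γ * τ| ≤ γ ^ 2 * κ / 2 * |τ| ∧
      |α τ - 1 / (γ * τ)| ≤ κ / (2 - γ * κ) / |τ| := by
  simp only [one_div] at hode hinit ⊢
  intro τ hτ
  have hτneg : τ < 0 := hτ.trans_lt hτ₀
  have hcγ : γ ^ 2 * κ / 2 < γ := by nlinarith
  have hgap : 0 < 2 - γ * κ := sub_pos.mpr hγκ
  have hconst : γ ^ 2 * κ / 2 / (γ * (γ - γ ^ 2 * κ / 2)) = κ / (2 - γ * κ) := by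
    rw [show γ - γ ^ 2 * κ / 2 = γ * (2 - γ * κ) / 2 by ring]
    field_simp
  have hclose := (abs_inv_sub_mul_le_of_riccati_above_threshold hγ.le hq hτ₀ hderiv hode hα₀
    hinit τ hτ).2
  exact ⟨neg_of_abs_inv_sub_mul_le hcγ hτneg hclose, hclose,
    hconst ▸ abs_sub_inv_mul_le_of_abs_inv_sub_mul_le hcγ hτneg.ne hclose⟩

/-- Continuation argument: the Riccati-type differential inequality, available only where `|α|`
lies above the threshold `m`, together with the initial bound `|1/α(τ₀) − γτ₀| ≤ (γ²κ/2)|τ₀|`,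
propagates to all earlier times and keeps `α` negative. -/
theorem stmt_7 (γ κ τ₀ : ℝ) (hγ : 0 < γ) (hκ : 0 < κ) (hκ1 : κ ≤ 1) (hγκ : γ * κ ≤ 1 / 2)
    (hτ₀ : τ₀ ≤ -1) (α m : ℝ → ℝ)
    (hdiff : ∀ τ ≤ τ₀, DifferentiableAt ℝ α τ)
    (hmpos : ∀ τ ≤ τ₀, 0 < m τ)
    (hmsmall : ∀ τ ≤ τ₀, m τ ≤ 1 / (2 * γ * |τ|))
    (hode : ∀ τ ≤ τ₀, m τ ≤ |α τ| →
      |deriv α τ + γ * (α τ) ^ 2| ≤ γ ^ 2 * κ / 2 * (α τ) ^ 2)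
    (hα₀ : α τ₀ ≠ 0)
    (hinit : |1 / α τ₀ - γ * τ₀| ≤ γ ^ 2 * κ / 2 * |τ₀|) :
    ∀ τ ≤ τ₀, α τ < 0 ∧ |1 / α τ - γ * τ| ≤ γ ^ 2 * κ / 2 * |τ| ∧
      |α τ - 1 / (γ * τ)| ≤ 3 * κ / 4 / |τ| := by
  have hconst : κ / (2 - γ * κ) ≤ 3 * κ / 4 := by
    rw [div_le_iff₀ (by linarith)]
    nlinarith
  intro τ hτ
  obtain ⟨hneg, hclose, hexpand⟩ := stmt_7_general hγ (by linarith) (q := 2 * γ) (by nlinarith)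
    (by linarith) (fun t ht ↦ (hdiff t ht).hasDerivAt.hasDerivWithinAt)
    (fun t ht habove ↦ hode t ht ((hmsmall t ht).trans habove)) hα₀ hinit τ hτ
  exact ⟨hneg, hclose, hexpand.trans (by gcongr)⟩
end

section
/- Let Ω ⊆ ℝ × (−∞,0) be open and let V : Ω → ℝ be a positive C² function satisfying, at every (x,t) ∈ Ω, the equation V_t = ((1 + V_t²)·V_xx + (1 + V_x²)·V_tt − 2·V_x·V_t·V_xt)/(1 + V_x² + V_t²) − 1/V. Define v(y,τ) := e^{τ/2}·V(e^{−τ/2}·y, −e^{−τ}) on Ω′ := {(y,τ) ∈ ℝ² : (e^{−τ/2}·y, −e^{−τ}) ∈ Ω}. Then v satisfies the renormalized translator equation v_τ = v_yy/(1 + v_y²) − (y/2)·v_y + v/2 − 1/v + e^τ·N[v] at every point of Ω′. -/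
/-!
With `E = exp (τ / 2)`, the partial derivatives of a weighted pullback
`E ^ k * f (y / E, -1 / E ^ 2)` are combinations of weighted pullbacks of the partial derivatives
of `f`: each `∂_y` lowers the weight by one and each `∂_τ` produces terms of weight `k`, `k - 1` and
`k - 2`. The renormalized profile `v` is the weight one pullback of `V`, so its derivatives are
explicit. In particular `v_y = V_x` and `v_τ + (y / 2) v_y - v / 2 = V_t / E`, and the second order
terms `v_yy / (1 + v_y ^ 2) + E ^ 2 * N[v]` collapse to `1 / E` times those of the equation for `V`.
Hence the renormalized equation at a point is `1 / E` times the original one at the corresponding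
point.
-/

noncomputable section

/-- Partial derivative in the first variable. -/
def pdy (f : ℝ × ℝ → ℝ) (p : ℝ × ℝ) : ℝ := deriv (fun s => f (s, p.2)) p.1

/-- Partial derivative in the second variable. -/
def pdτ (f : ℝ × ℝ → ℝ) (p : ℝ × ℝ) : ℝ := deriv (fun s => f (p.1, s)) p.2

/-- The nonlinear term `N[v]` in the renormalized translator equation. -/
def Nop (v : ℝ × ℝ → ℝ) (p : ℝ × ℝ) : ℝ :=
  (pdy v p * (pdτ v p - v p / 2) - p.1 / 2) ^ 2 * pdy (pdy v) p /
      ((1 + (pdy v p) ^ 2) *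
        (1 + (pdy v p) ^ 2 + Real.exp p.2 * (pdτ v p + p.1 / 2 * pdy v p - v p / 2) ^ 2))
    + ((1 + (pdy v p) ^ 2) * pdτ (pdτ v) p
        - 2 * (pdy v p * (pdτ v p - v p / 2) - p.1 / 2) * pdτ (pdy v) p
        + 1 / 4 * (1 + (pdy v p) ^ 2) * (p.1 * pdy v p - v p)) /
      (1 + (pdy v p) ^ 2 + Real.exp p.2 * (pdτ v p + p.1 / 2 * pdy v p - v p / 2) ^ 2)

/-- The renormalized translator equation
`v_τ = v_yy/(1+v_y²) − (y/2)v_y + v/2 − 1/v + e^τ N[v]`. -/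
def RenormEq (v : ℝ × ℝ → ℝ) (p : ℝ × ℝ) : Prop :=
  pdτ v p = pdy (pdy v) p / (1 + (pdy v p) ^ 2) - p.1 / 2 * pdy v p + v p / 2 - 1 / v p
    + Real.exp p.2 * Nop v p

open Filter Topology

section PartialDerivatives

variable {f g : ℝ × ℝ → ℝ} {p : ℝ × ℝ}

lemma pdy_eq_fderiv (hf : DifferentiableAt ℝ f p) : pdy f p = fderiv ℝ f p (1, 0) :=
  (hf.hasFDerivAt.comp_hasDerivAt p.1
    ((hasDerivAt_id p.1).prodMk (hasDerivAt_const p.1 p.2))).deriv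

lemma pdτ_eq_fderiv (hf : DifferentiableAt ℝ f p) : pdτ f p = fderiv ℝ f p (0, 1) :=
  (hf.hasFDerivAt.comp_hasDerivAt p.2
    ((hasDerivAt_const p.2 p.1).prodMk (hasDerivAt_id p.2))).deriv

lemma pdy_congr (h : f =ᶠ[𝓝 p] g) : pdy f p = pdy g p :=
  EventuallyEq.deriv_eq (((Continuous.prodMk_left p.2).tendsto p.1).eventually h)

lemma pdτ_congr (h : f =ᶠ[𝓝 p] g) : pdτ f p = pdτ g p :=
  EventuallyEq.deriv_eq (((Continuous.prodMk_right p.1).tendsto p.2).eventually h)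

lemma hasDerivAt_comp_curve {γ : ℝ → ℝ × ℝ} {γ' : ℝ × ℝ} {s : ℝ}
    (hf : DifferentiableAt ℝ f (γ s)) (hγ : HasDerivAt γ γ' s) :
    HasDerivAt (fun u => f (γ u)) (γ'.1 * pdy f (γ s) + γ'.2 * pdτ f (γ s)) s := by
  refine (hf.hasFDerivAt.comp_hasDerivAt s hγ).congr_deriv ?_
  have hγ' : γ' = γ'.1 • ((1, 0) : ℝ × ℝ) + γ'.2 • ((0, 1) : ℝ × ℝ) := by ext <;> simp
  rw [pdy_eq_fderiv hf, pdτ_eq_fderiv hf]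
  conv_lhs => rw [hγ', map_add, map_smul, map_smul, smul_eq_mul, smul_eq_mul]

lemma eventually_differentiableAt (hf : ContDiffAt ℝ 1 f p) :
    ∀ᶠ z in 𝓝 p, DifferentiableAt ℝ f z :=
  (hf.eventually (by simp)).mono fun _ hz => hz.differentiableAt one_ne_zero

lemma pdy_eventuallyEq_fderiv (hf : ContDiffAt ℝ 1 f p) :
    pdy f =ᶠ[𝓝 p] fun z => fderiv ℝ f z (1, 0) :=
  (eventually_differentiableAt hf).mono fun _ hz => pdy_eq_fderiv hz

lemma pdτ_eventuallyEq_fderiv (hf : ContDiffAt ℝ 1 f p) :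
    pdτ f =ᶠ[𝓝 p] fun z => fderiv ℝ f z (0, 1) :=
  (eventually_differentiableAt hf).mono fun _ hz => pdτ_eq_fderiv hz

lemma contDiffAt_pdy {n : WithTop ℕ∞} (hf : ContDiffAt ℝ (n + 1) f p) :
    ContDiffAt ℝ n (pdy f) p :=
  ((hf.fderiv_right le_rfl).clm_apply contDiffAt_const).congr_of_eventuallyEq
    (pdy_eventuallyEq_fderiv (hf.of_le le_add_self))

lemma contDiffAt_pdτ {n : WithTop ℕ∞} (hf : ContDiffAt ℝ (n + 1) f p) :
    ContDiffAt ℝ n (pdτ f) p :=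
  ((hf.fderiv_right le_rfl).clm_apply contDiffAt_const).congr_of_eventuallyEq
    (pdτ_eventuallyEq_fderiv (hf.of_le le_add_self))

lemma differentiableAt_pdy (hf : ContDiffAt ℝ 2 f p) : DifferentiableAt ℝ (pdy f) p :=
  (contDiffAt_pdy (n := 1) (by rwa [one_add_one_eq_two])).differentiableAt one_ne_zero

lemma differentiableAt_pdτ (hf : ContDiffAt ℝ 2 f p) : DifferentiableAt ℝ (pdτ f) p :=
  (contDiffAt_pdτ (n := 1) (by rwa [one_add_one_eq_two])).differentiableAt one_ne_zero

lemma pdy_pdτ_comm (hf : ContDiffAt ℝ 2 f p) : pdy (pdτ f) p = pdτ (pdy f) p := by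
  have hf₁ : ContDiffAt ℝ 1 f p := hf.of_le one_le_two
  have hf' : DifferentiableAt ℝ (fderiv ℝ f) p :=
    (hf.fderiv_right (m := 1) (by norm_num)).differentiableAt one_ne_zero
  have hdir (w : ℝ × ℝ) : DifferentiableAt ℝ (fun z => fderiv ℝ f z w) p :=
    hf'.clm_apply (differentiableAt_const w)
  have hsymm : IsSymmSndFDerivAt ℝ f p := hf.isSymmSndFDerivAt (by simp)
  rw [pdy_congr (pdτ_eventuallyEq_fderiv hf₁), pdτ_congr (pdy_eventuallyEq_fderiv hf₁),
    pdy_eq_fderiv (hdir _), pdτ_eq_fderiv (hdir _),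
    fderiv_clm_apply hf' (differentiableAt_const _),
    fderiv_clm_apply hf' (differentiableAt_const _)]
  simpa using hsymm (1, 0) (0, 1)

end PartialDerivatives

section WeightedPullback

/-- The change of variables `(y, τ) ↦ (x, t)` from renormalized to original coordinates. -/
def parabolicMap (q : ℝ × ℝ) : ℝ × ℝ := (Real.exp (-q.2 / 2) * q.1, -Real.exp (-q.2))

/-- The pullback of `f` to renormalized coordinates, multiplied by the `k`-th power of the parabolic
scale `exp (τ / 2)`. -/
def weightedPullback (k : ℤ) (f : ℝ × ℝ → ℝ) (q : ℝ × ℝ) : ℝ :=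
  Real.exp (q.2 / 2) ^ k * f (parabolicMap q)

lemma exp_neg_half (τ : ℝ) : Real.exp (-τ / 2) = (Real.exp (τ / 2))⁻¹ := by
  rw [neg_div, Real.exp_neg]

lemma exp_eq_exp_half_sq (τ : ℝ) : Real.exp τ = Real.exp (τ / 2) ^ 2 := by
  rw [← Real.exp_nat_mul]
  congr 1
  push_cast
  ring

lemma hasDerivAt_exp_half_zpow (k : ℤ) (τ : ℝ) :
    HasDerivAt (fun s => Real.exp (s / 2) ^ k) (k / 2 * Real.exp (τ / 2) ^ k) τ := by
  have hE := (Real.exp_pos (τ / 2)).ne'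
  have hexp : HasDerivAt (fun s => Real.exp (s / 2)) (Real.exp (τ / 2) * (1 / 2)) τ :=
    ((hasDerivAt_id τ).div_const 2).exp
  refine ((hasDerivAt_zpow k _ (.inl hE)).comp τ hexp).congr_deriv ?_
  rw [zpow_sub_one₀ hE]
  field_simp

lemma continuous_parabolicMap : Continuous parabolicMap := by
  unfold parabolicMap
  fun_prop

lemma hasDerivAt_parabolicMap_left (y τ : ℝ) :
    HasDerivAt (fun s => parabolicMap (s, τ)) ((Real.exp (τ / 2))⁻¹, 0) y := by
  have hx : HasDerivAt (fun s => Real.exp (-τ / 2) * s) (Real.exp (τ / 2))⁻¹ y :=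
    ((hasDerivAt_id y).const_mul _).congr_deriv (by rw [mul_one, exp_neg_half])
  exact hx.prodMk (hasDerivAt_const y (-Real.exp (-τ)))

lemma hasDerivAt_parabolicMap_right (y τ : ℝ) :
    HasDerivAt (fun s => parabolicMap (y, s))
      (-(y / 2) * (Real.exp (τ / 2))⁻¹, (Real.exp (τ / 2) ^ 2)⁻¹) τ := by
  have hx : HasDerivAt (fun s => Real.exp (-s / 2) * y) (-(y / 2) * (Real.exp (τ / 2))⁻¹) τ :=
    ((((hasDerivAt_neg' τ).div_const 2).exp).mul_const y).congr_deriv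
      (by rw [exp_neg_half]; ring)
  have ht : HasDerivAt (fun s => -Real.exp (-s)) (Real.exp (τ / 2) ^ 2)⁻¹ τ :=
    ((hasDerivAt_neg' τ).exp.fun_neg).congr_deriv
      (by rw [Real.exp_neg, exp_eq_exp_half_sq]; ring)
  exact hx.prodMk ht

variable {f : ℝ × ℝ → ℝ} {q : ℝ × ℝ}

lemma pdy_weightedPullback (k : ℤ) (hf : DifferentiableAt ℝ f (parabolicMap q)) :
    pdy (weightedPullback k f) q = weightedPullback (k - 1) (pdy f) q := by
  have h := (hasDerivAt_comp_curve (γ := fun s => parabolicMap (s, q.2)) hf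
    (hasDerivAt_parabolicMap_left q.1 q.2)).const_mul (Real.exp (q.2 / 2) ^ k)
  refine h.deriv.trans ?_
  rw [weightedPullback, zpow_sub_one₀ (Real.exp_pos _).ne']
  ring

lemma hasDerivAt_weightedPullback_right (k : ℤ) (hf : DifferentiableAt ℝ f (parabolicMap q)) :
    HasDerivAt (fun s => weightedPullback k f (q.1, s))
      (k / 2 * weightedPullback k f q - q.1 / 2 * weightedPullback (k - 1) (pdy f) q
        + weightedPullback (k - 2) (pdτ f) q) q.2 := by
  have h := (hasDerivAt_exp_half_zpow k q.2).mul
    (hasDerivAt_comp_curve (γ := fun s => parabolicMap (q.1, s)) hf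
      (hasDerivAt_parabolicMap_right q.1 q.2))
  refine h.congr_deriv ?_
  have hE := (Real.exp_pos (q.2 / 2)).ne'
  simp only [weightedPullback, zpow_sub_one₀ hE, zpow_sub₀ hE, zpow_ofNat]
  ring

lemma pdτ_weightedPullback (k : ℤ) (hf : DifferentiableAt ℝ f (parabolicMap q)) :
    pdτ (weightedPullback k f) q =
      k / 2 * weightedPullback k f q - q.1 / 2 * weightedPullback (k - 1) (pdy f) q
        + weightedPullback (k - 2) (pdτ f) q :=
  (hasDerivAt_weightedPullback_right k hf).deriv

lemma eventually_differentiableAt_parabolicMap (hf : ContDiffAt ℝ 1 f (parabolicMap q)) :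
    ∀ᶠ r in 𝓝 q, DifferentiableAt ℝ f (parabolicMap r) :=
  (continuous_parabolicMap.tendsto q).eventually (eventually_differentiableAt hf)

lemma pdy_weightedPullback_eventuallyEq (k : ℤ) (hf : ContDiffAt ℝ 1 f (parabolicMap q)) :
    pdy (weightedPullback k f) =ᶠ[𝓝 q] weightedPullback (k - 1) (pdy f) :=
  (eventually_differentiableAt_parabolicMap hf).mono fun _ hr => pdy_weightedPullback k hr

lemma pdτ_weightedPullback_eventuallyEq (k : ℤ) (hf : ContDiffAt ℝ 1 f (parabolicMap q)) :
    pdτ (weightedPullback k f) =ᶠ[𝓝 q] fun r =>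
      k / 2 * weightedPullback k f r - r.1 / 2 * weightedPullback (k - 1) (pdy f) r
        + weightedPullback (k - 2) (pdτ f) r :=
  (eventually_differentiableAt_parabolicMap hf).mono fun _ hr => pdτ_weightedPullback k hr

lemma pdy_pdy_weightedPullback (k : ℤ) (hf : ContDiffAt ℝ 2 f (parabolicMap q)) :
    pdy (pdy (weightedPullback k f)) q = weightedPullback (k - 2) (pdy (pdy f)) q := by
  rw [pdy_congr (pdy_weightedPullback_eventuallyEq k (hf.of_le one_le_two)),
    pdy_weightedPullback (k - 1) (differentiableAt_pdy hf), sub_sub, one_add_one_eq_two]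

lemma pdτ_pdy_weightedPullback (k : ℤ) (hf : ContDiffAt ℝ 2 f (parabolicMap q)) :
    pdτ (pdy (weightedPullback k f)) q = pdτ (weightedPullback (k - 1) (pdy f)) q :=
  pdτ_congr (pdy_weightedPullback_eventuallyEq k (hf.of_le one_le_two))

lemma pdτ_pdτ_weightedPullback (k : ℤ) (hf : ContDiffAt ℝ 2 f (parabolicMap q)) :
    pdτ (pdτ (weightedPullback k f)) q =
      k / 2 * pdτ (weightedPullback k f) q - q.1 / 2 * pdτ (pdy (weightedPullback k f)) q
        + pdτ (weightedPullback (k - 2) (pdτ f)) q := by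
  have hv := hasDerivAt_weightedPullback_right k (hf.differentiableAt two_ne_zero)
  have hy := hasDerivAt_weightedPullback_right (k - 1) (differentiableAt_pdy hf)
  have ht := hasDerivAt_weightedPullback_right (k - 2) (differentiableAt_pdτ hf)
  rw [pdτ_congr (pdτ_weightedPullback_eventuallyEq k (hf.of_le one_le_two)),
    pdτ_pdy_weightedPullback k hf, pdτ_weightedPullback k (hf.differentiableAt two_ne_zero),
    pdτ_weightedPullback (k - 1) (differentiableAt_pdy hf),
    pdτ_weightedPullback (k - 2) (differentiableAt_pdτ hf)]
  exact (((hv.const_mul (k / 2 : ℝ)).sub (hy.const_mul (q.1 / 2))).add ht).deriv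

end WeightedPullback

section Renormalization

/-- The right-hand side of the level set equation without its zeroth order term `-1 / V`. -/
def levelSetOperator (V : ℝ × ℝ → ℝ) (p : ℝ × ℝ) : ℝ :=
  ((1 + (pdτ V p) ^ 2) * pdy (pdy V) p + (1 + (pdy V p) ^ 2) * pdτ (pdτ V) p
    - 2 * pdy V p * pdτ V p * pdτ (pdy V) p) / (1 + (pdy V p) ^ 2 + (pdτ V p) ^ 2)

/-- The equation satisfied at `p` by the profile function of the level sets of a translator. -/
def LevelSetEq (V : ℝ × ℝ → ℝ) (p : ℝ × ℝ) : Prop :=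
  pdτ V p = levelSetOperator V p - 1 / V p

/-- The renormalized profile `v(y, τ) = e^{τ/2} V(e^{-τ/2} y, -e^{-τ})`. -/
def renormalize (V : ℝ × ℝ → ℝ) (q : ℝ × ℝ) : ℝ := Real.exp (q.2 / 2) * V (parabolicMap q)

lemma renormalize_eq_weightedPullback (V : ℝ × ℝ → ℝ) :
    renormalize V = weightedPullback 1 V := by
  funext q
  rw [renormalize, weightedPullback, zpow_one]

variable {V : ℝ × ℝ → ℝ} {q : ℝ × ℝ}

lemma pdy_renormalize (hV : DifferentiableAt ℝ V (parabolicMap q)) :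
    pdy (renormalize V) q = pdy V (parabolicMap q) := by
  simp [renormalize_eq_weightedPullback, pdy_weightedPullback 1 hV, weightedPullback]

lemma pdτ_renormalize (hV : DifferentiableAt ℝ V (parabolicMap q)) :
    pdτ (renormalize V) q = renormalize V q / 2 - q.1 / 2 * pdy V (parabolicMap q)
      + (Real.exp (q.2 / 2))⁻¹ * pdτ V (parabolicMap q) := by
  rw [renormalize_eq_weightedPullback, pdτ_weightedPullback 1 hV]
  simp only [weightedPullback, Int.reduceSub, zpow_neg, zpow_one, zpow_zero]
  push_cast
  ring

lemma pdy_pdy_renormalize (hV : ContDiffAt ℝ 2 V (parabolicMap q)) :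
    pdy (pdy (renormalize V)) q =
      (Real.exp (q.2 / 2))⁻¹ * pdy (pdy V) (parabolicMap q) := by
  rw [renormalize_eq_weightedPullback, pdy_pdy_weightedPullback 1 hV]
  simp only [weightedPullback, Int.reduceSub, zpow_neg, zpow_one]

lemma pdτ_pdy_renormalize (hV : ContDiffAt ℝ 2 V (parabolicMap q)) :
    pdτ (pdy (renormalize V)) q =
      -(q.1 / 2) * (Real.exp (q.2 / 2))⁻¹ * pdy (pdy V) (parabolicMap q)
        + (Real.exp (q.2 / 2) ^ 2)⁻¹ * pdτ (pdy V) (parabolicMap q) := by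
  rw [renormalize_eq_weightedPullback, pdτ_pdy_weightedPullback 1 hV,
    pdτ_weightedPullback _ (differentiableAt_pdy hV)]
  simp only [weightedPullback, Int.reduceSub, zpow_neg, zpow_ofNat]
  push_cast
  ring

lemma pdτ_pdτ_renormalize (hV : ContDiffAt ℝ 2 V (parabolicMap q)) :
    pdτ (pdτ (renormalize V)) q =
      pdτ (renormalize V) q / 2 - q.1 / 2 * pdτ (pdy (renormalize V)) q
        - (Real.exp (q.2 / 2))⁻¹ / 2 * pdτ V (parabolicMap q)
        - q.1 / 2 * (Real.exp (q.2 / 2) ^ 2)⁻¹ * pdτ (pdy V) (parabolicMap q)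
        + (Real.exp (q.2 / 2) ^ 3)⁻¹ * pdτ (pdτ V) (parabolicMap q) := by
  rw [renormalize_eq_weightedPullback, pdτ_pdτ_weightedPullback 1 hV,
    pdτ_weightedPullback _ (differentiableAt_pdτ hV)]
  simp only [weightedPullback, Int.reduceSub, Int.reduceNeg, zpow_neg, zpow_ofNat,
    pdy_pdτ_comm hV]
  push_cast
  ring

lemma pdτ_add_mul_pdy_sub_renormalize (hV : DifferentiableAt ℝ V (parabolicMap q)) :
    pdτ (renormalize V) q + q.1 / 2 * pdy (renormalize V) q - renormalize V q / 2 =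
      (Real.exp (q.2 / 2))⁻¹ * pdτ V (parabolicMap q) := by
  rw [pdy_renormalize hV, pdτ_renormalize hV]
  ring

lemma exp_mul_sq_renormalize (hV : DifferentiableAt ℝ V (parabolicMap q)) :
    Real.exp q.2 * (pdτ (renormalize V) q + q.1 / 2 * pdy (renormalize V) q
      - renormalize V q / 2) ^ 2 = pdτ V (parabolicMap q) ^ 2 := by
  rw [pdτ_add_mul_pdy_sub_renormalize hV, exp_eq_exp_half_sq, mul_pow, inv_pow,
    mul_inv_cancel_left₀ (pow_ne_zero 2 (Real.exp_pos _).ne')]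

lemma secondOrder_renormalize (hV : ContDiffAt ℝ 2 V (parabolicMap q)) :
    pdy (pdy (renormalize V)) q / (1 + pdy (renormalize V) q ^ 2)
        + Real.exp q.2 * Nop (renormalize V) q =
      (Real.exp (q.2 / 2))⁻¹ * levelSetOperator V (parabolicMap q) := by
  have hV₁ := hV.differentiableAt two_ne_zero
  rw [Nop, exp_mul_sq_renormalize hV₁, exp_eq_exp_half_sq, pdτ_pdτ_renormalize hV,
    pdτ_pdy_renormalize hV, pdy_pdy_renormalize hV, pdτ_renormalize hV₁, pdy_renormalize hV₁,
    levelSetOperator]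
  field_simp
  ring

theorem stmt_8_general (hV : ContDiffAt ℝ 2 V (parabolicMap q)) (hV₀ : V (parabolicMap q) ≠ 0) :
    RenormEq (renormalize V) q ↔ LevelSetEq V (parabolicMap q) := by
  have hE := (Real.exp_pos (q.2 / 2)).ne'
  have hinv : (Real.exp (q.2 / 2))⁻¹ * (1 / V (parabolicMap q)) = 1 / renormalize V q := by
    rw [renormalize, eq_div_iff (mul_ne_zero hE hV₀)]
    field_simp
  rw [LevelSetEq, ← mul_right_inj' (inv_ne_zero hE), mul_sub, hinv, ← secondOrder_renormalize hV,
    ← pdτ_add_mul_pdy_sub_renormalize (hV.differentiableAt two_ne_zero), RenormEq]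
  constructor <;> intro h <;> linear_combination h

end Renormalization

/-- If the profile function `V` of the level sets of a translator satisfies its elliptic
equation, then the renormalized profile `v(y,τ) = e^{τ/2} V(e^{−τ/2}y, −e^{−τ})` satisfies the
renormalized translator equation. -/
theorem stmt_8 (Ω : Set (ℝ × ℝ)) (hopen : IsOpen Ω) (hsub : ∀ p ∈ Ω, p.2 < (0 : ℝ))
    (V : ℝ × ℝ → ℝ) (hC2 : ∀ p ∈ Ω, ContDiffAt ℝ 2 V p) (hpos : ∀ p ∈ Ω, 0 < V p)
    (hPDE : ∀ p ∈ Ω,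
      pdτ V p = ((1 + (pdτ V p) ^ 2) * pdy (pdy V) p + (1 + (pdy V p) ^ 2) * pdτ (pdτ V) p
          - 2 * pdy V p * pdτ V p * pdτ (pdy V) p) / (1 + (pdy V p) ^ 2 + (pdτ V p) ^ 2)
        - 1 / V p) :
    ∀ q : ℝ × ℝ, (Real.exp (-q.2 / 2) * q.1, -Real.exp (-q.2)) ∈ Ω →
      RenormEq (fun r => Real.exp (r.2 / 2) * V (Real.exp (-r.2 / 2) * r.1, -Real.exp (-r.2)))
        q := by
  intro q hq
  exact (stmt_8_general (hC2 _ hq) (hpos _ hq).ne').2 (hPDE _ hq)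

end
end

section
/- Let Ω′ ⊆ ℝ² be open and let v₁, v₂ : Ω′ → ℝ be positive C² functions of (y,τ), each satisfying the renormalized translator equation on Ω′. Then the difference w := v₁ − v₂ satisfies, at every point of Ω′, w_τ = w_yy − (y/2)·w_y + w + E[w] + e^τ·(N[v₁] − N[v₂]), where E[w] := −((v₁)_y²/(1 + (v₁)_y²))·w_yy − (((v₁)_y + (v₂)_y)·(v₂)_yy/((1 + (v₁)_y²)·(1 + (v₂)_y²)))·w_y + ((2 − v₁·v₂)/(2·v₁·v₂))·w. -/
noncomputable section

/-!
Each term of the two equations is subtracted separately. Adding and subtracting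
`(v₂)_yy / (1 + (v₁)_y²)` splits the difference of the quasilinear terms into a multiple of `w_yy`
and, since `(v₁)_y² - (v₂)_y² = ((v₁)_y + (v₂)_y) w_y`, a multiple of `w_y`. The zeroth-order terms
differ by `w/2 + w/(v₁ v₂)`; since `𝔏 w` already contains `w`, this leaves
`w/(v₁ v₂) - w/2 = ((2 - v₁ v₂)/(2 v₁ v₂)) w` for `E[w]`.
-/

section Slices

variable {𝕜 E F G : Type*} [NontriviallyNormedField 𝕜] [NormedAddCommGroup E] [NormedSpace 𝕜 E]
  [NormedAddCommGroup F] [NormedSpace 𝕜 F] [NormedAddCommGroup G] [NormedSpace 𝕜 G]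
  {n : WithTop ℕ∞} {f : E × F → G} {p : E × F}

theorem contDiffAt_slice_fst (hf : ContDiffAt 𝕜 n f p) :
    ContDiffAt 𝕜 n (fun x => f (x, p.2)) p.1 :=
  hf.comp p.1 (f := fun x => (x, p.2)) (by fun_prop)

theorem contDiffAt_slice_snd (hf : ContDiffAt 𝕜 n f p) :
    ContDiffAt 𝕜 n (fun y => f (p.1, y)) p.2 :=
  hf.comp p.2 (f := fun y => (p.1, y)) (by fun_prop)

end Slices

section PartialDerivatives

variable {v₁ v₂ : ℝ × ℝ → ℝ} {p : ℝ × ℝ}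

theorem pdy_sub (h₁ : DifferentiableAt ℝ (fun s => v₁ (s, p.2)) p.1)
    (h₂ : DifferentiableAt ℝ (fun s => v₂ (s, p.2)) p.1) :
    pdy (fun q => v₁ q - v₂ q) p = pdy v₁ p - pdy v₂ p :=
  deriv_fun_sub h₁ h₂

theorem pdτ_sub (h₁ : DifferentiableAt ℝ (fun s => v₁ (p.1, s)) p.2)
    (h₂ : DifferentiableAt ℝ (fun s => v₂ (p.1, s)) p.2) :
    pdτ (fun q => v₁ q - v₂ q) p = pdτ v₁ p - pdτ v₂ p :=
  deriv_fun_sub h₁ h₂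

theorem pdy_pdy_eq_iteratedDeriv (v : ℝ × ℝ → ℝ) (p : ℝ × ℝ) :
    pdy (pdy v) p = iteratedDeriv 2 (fun s => v (s, p.2)) p.1 := by
  rw [iteratedDeriv_succ, iteratedDeriv_one]
  rfl

theorem pdy_pdy_sub (h₁ : ContDiffAt ℝ 2 (fun s => v₁ (s, p.2)) p.1)
    (h₂ : ContDiffAt ℝ 2 (fun s => v₂ (s, p.2)) p.1) :
    pdy (pdy fun q => v₁ q - v₂ q) p = pdy (pdy v₁) p - pdy (pdy v₂) p := by
  simp only [pdy_pdy_eq_iteratedDeriv]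
  exact iteratedDeriv_fun_sub h₁ h₂

end PartialDerivatives

section Algebra

variable {K : Type*} [Field K]

theorem div_one_add_sq_sub_div_one_add_sq {a b : K} (A B : K)
    (ha : 1 + a ^ 2 ≠ 0) (hb : 1 + b ^ 2 ≠ 0) :
    A / (1 + a ^ 2) - B / (1 + b ^ 2) =
      (A - B) + (-(a ^ 2 / (1 + a ^ 2)) * (A - B)
        - (a + b) * B / ((1 + a ^ 2) * (1 + b ^ 2)) * (a - b)) := by
  field_simp
  ring

theorem half_sub_one_div_sub_half_sub_one_div [NeZero (2 : K)] {x z : K}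
    (hx : x ≠ 0) (hz : z ≠ 0) :
    (x / 2 - 1 / x) - (z / 2 - 1 / z) = (x - z) + (2 - x * z) / (2 * x * z) * (x - z) := by
  have h2 : (2 : K) ≠ 0 := two_ne_zero
  field_simp
  ring

end Algebra

/-- The spatial operator `v_yy / (1 + v_y²) - (y/2) v_y + v/2 - 1/v` of the renormalized translator
equation, that is, its right-hand side without the term `e^τ N[v]`. -/
def renormOp (v : ℝ × ℝ → ℝ) (p : ℝ × ℝ) : ℝ :=
  pdy (pdy v) p / (1 + (pdy v p) ^ 2) - p.1 / 2 * pdy v p + v p / 2 - 1 / v p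

theorem renormEq_iff {v : ℝ × ℝ → ℝ} {p : ℝ × ℝ} :
    RenormEq v p ↔ pdτ v p = renormOp v p + Real.exp p.2 * Nop v p :=
  Iff.rfl

/-- The one-dimensional Ornstein–Uhlenbeck operator `𝔏 w = w_yy - (y/2) w_y + w`, acting in the
first variable. -/
def ornsteinUhlenbeck (w : ℝ × ℝ → ℝ) (p : ℝ × ℝ) : ℝ :=
  pdy (pdy w) p - p.1 / 2 * pdy w p + w p

/-- The error term `E[w]` measuring how far `renormOp v₁ - renormOp v₂` is from `𝔏 w`, as an
operator linear in `w` whose coefficients depend on `v₁` and `v₂`. -/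
def errorOp (v₁ v₂ w : ℝ × ℝ → ℝ) (p : ℝ × ℝ) : ℝ :=
  -((pdy v₁ p) ^ 2 / (1 + (pdy v₁ p) ^ 2)) * pdy (pdy w) p
    - (pdy v₁ p + pdy v₂ p) * pdy (pdy v₂) p
        / ((1 + (pdy v₁ p) ^ 2) * (1 + (pdy v₂ p) ^ 2)) * pdy w p
    + (2 - v₁ p * v₂ p) / (2 * v₁ p * v₂ p) * w p

section Difference

variable {v₁ v₂ : ℝ × ℝ → ℝ} {p : ℝ × ℝ}

theorem renormOp_sub_renormOp
    (hy₁ : ContDiffAt ℝ 2 (fun s => v₁ (s, p.2)) p.1)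
    (hy₂ : ContDiffAt ℝ 2 (fun s => v₂ (s, p.2)) p.1)
    (hv₁ : v₁ p ≠ 0) (hv₂ : v₂ p ≠ 0) :
    renormOp v₁ p - renormOp v₂ p =
      ornsteinUhlenbeck (fun q => v₁ q - v₂ q) p
        + errorOp v₁ v₂ (fun q => v₁ q - v₂ q) p := by
  have hquasilinear := div_one_add_sq_sub_div_one_add_sq (pdy (pdy v₁) p) (pdy (pdy v₂) p)
    (a := pdy v₁ p) (b := pdy v₂ p) (by positivity) (by positivity)
  have hzeroth := half_sub_one_div_sub_half_sub_one_div hv₁ hv₂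
  simp only [renormOp, ornsteinUhlenbeck, errorOp, pdy_pdy_sub hy₁ hy₂,
    pdy_sub (hy₁.differentiableAt two_ne_zero) (hy₂.differentiableAt two_ne_zero)]
  linear_combination hquasilinear + hzeroth

/-- The forcings `F₁`, `F₂` stand for the values of `e^τ N[v₁]`, `e^τ N[v₂]` at `p`. -/
theorem stmt_10_general {F₁ F₂ : ℝ}
    (hy₁ : ContDiffAt ℝ 2 (fun s => v₁ (s, p.2)) p.1)
    (hτ₁ : DifferentiableAt ℝ (fun s => v₁ (p.1, s)) p.2)
    (hv₁ : v₁ p ≠ 0) (heq₁ : pdτ v₁ p = renormOp v₁ p + F₁)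
    (hy₂ : ContDiffAt ℝ 2 (fun s => v₂ (s, p.2)) p.1)
    (hτ₂ : DifferentiableAt ℝ (fun s => v₂ (p.1, s)) p.2)
    (hv₂ : v₂ p ≠ 0) (heq₂ : pdτ v₂ p = renormOp v₂ p + F₂) :
    pdτ (fun q => v₁ q - v₂ q) p =
      ornsteinUhlenbeck (fun q => v₁ q - v₂ q) p
        + errorOp v₁ v₂ (fun q => v₁ q - v₂ q) p + (F₁ - F₂) := by
  rw [pdτ_sub hτ₁ hτ₂, heq₁, heq₂, ← renormOp_sub_renormOp hy₁ hy₂ hv₁ hv₂]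
  ring

end Difference

/-- Evolution equation for the difference `w = v₁ − v₂` of two solutions of the renormalized
translator equation: `w_τ = 𝔏w + E[w] + e^τ (N[v₁] − N[v₂])`. -/
theorem stmt_10 (Ω' : Set (ℝ × ℝ)) (hopen : IsOpen Ω')
    (v₁ v₂ : ℝ × ℝ → ℝ)
    (h1C2 : ∀ p ∈ Ω', ContDiffAt ℝ 2 v₁ p) (h1pos : ∀ p ∈ Ω', 0 < v₁ p)
    (h1eq : ∀ p ∈ Ω', RenormEq v₁ p)
    (h2C2 : ∀ p ∈ Ω', ContDiffAt ℝ 2 v₂ p) (h2pos : ∀ p ∈ Ω', 0 < v₂ p)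
    (h2eq : ∀ p ∈ Ω', RenormEq v₂ p) :
    ∀ p ∈ Ω',
      pdτ (fun q => v₁ q - v₂ q) p
        = (pdy (pdy (fun q => v₁ q - v₂ q)) p - p.1 / 2 * pdy (fun q => v₁ q - v₂ q) p
            + (v₁ p - v₂ p))
          + (-((pdy v₁ p) ^ 2 / (1 + (pdy v₁ p) ^ 2)) * pdy (pdy (fun q => v₁ q - v₂ q)) p
            - (pdy v₁ p + pdy v₂ p) * pdy (pdy v₂) p
                / ((1 + (pdy v₁ p) ^ 2) * (1 + (pdy v₂ p) ^ 2))
                * pdy (fun q => v₁ q - v₂ q) p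
            + (2 - v₁ p * v₂ p) / (2 * v₁ p * v₂ p) * (v₁ p - v₂ p))
          + Real.exp p.2 * (Nop v₁ p - Nop v₂ p) := by
  intro p hp
  rw [mul_sub (Real.exp p.2)]
  exact stmt_10_general
    (contDiffAt_slice_fst (h1C2 p hp))
    ((contDiffAt_slice_snd (h1C2 p hp)).differentiableAt two_ne_zero)
    (h1pos p hp).ne' (renormEq_iff.1 (h1eq p hp))
    (contDiffAt_slice_fst (h2C2 p hp))
    ((contDiffAt_slice_snd (h2C2 p hp)).differentiableAt two_ne_zero)
    (h2pos p hp).ne' (renormEq_iff.1 (h2eq p hp))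

end
end

section
/- Let d ≥ 1 be an integer, let c, C, R > 0 and θ₀ ∈ ℝ, and let w : B(0,R) → ℝ be a C² function on the open ball B(0,R) ⊆ ℝ². Write γ(r) := (r·cos θ₀, r·sin θ₀) and T := (−sin θ₀, cos θ₀). Assume that for all 0 < r < R: |w(γ(r))| ≤ C·r^{d+1} and |⟨∇w(γ(r)), T⟩| ≥ c·r^{d−1}, and that ‖∇²w(x)‖ ≤ C·|x|^{d−2} for all x with 0 < |x| < R. Then there exist r₀ ∈ (0,R), ε > 0, D < ∞ and a continuous function θ : (0,r₀] → ℝ such that for every r ∈ (0,r₀]: w(r·cos θ(r), r·sin θ(r)) = 0, |θ(r) − θ₀| ≤ D·r, and (r·cos θ(r), r·sin θ(r)) is the unique zero of w on the arc {(r·cos φ, r·sin φ) : |φ − θ₀| ≤ ε}. In particular θ(r) → θ₀ as r → 0. -/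
noncomputable section

open Real

/-- The point `(r cos θ, r sin θ)` of the Euclidean plane. -/
def polarPt (r θ : ℝ) : EuclideanSpace ℝ (Fin 2) :=
  (WithLp.equiv 2 (Fin 2 → ℝ)).symm ![r * Real.cos θ, r * Real.sin θ]

/-- The unit tangent vector `(−sin θ, cos θ)`. -/
def tangVec (θ : ℝ) : EuclideanSpace ℝ (Fin 2) :=
  (WithLp.equiv 2 (Fin 2 → ℝ)).symm ![-Real.sin θ, Real.cos θ]

/-! The angular derivative of `w` at `(r, θ₀)` has size at least `c r ^ d`. Turning the ray by an
angle `|φ| ≤ 1` multiplies it by `cos φ ≥ 1 / 2` and adds an error of at most `|φ|` times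
`r ^ 2 ‖∇²w‖ + r |∂ᵣw|`. The first summand is `O(r ^ d)` by hypothesis; so is the second, by
interpolating `∂ᵣw` on `[r / 2, r]` between the bound on `w` along the ray and the bound on the
Hessian. Hence there is one `ε` such that, on every arc of radius `r` and half-opening `ε`, `w`
expands angles by a factor at least `(c / 4) r ^ d`. Such a function has at most one zero on the
arc, and since `|w(r, θ₀)| ≤ C r ^ (d + 1)`, it has one at distance at most `(4 C / c) r` from `θ₀`.
Expansion also makes the zero depend continuously on `r`. -/

open Set Metric Filter Topology

section ExpandsOn

variable {X Y : Type*} [PseudoMetricSpace X] [PseudoMetricSpace Y]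

/-- On `s`, the map `g` multiplies distances by a factor at least `m`. For `m > 0` this is
`AntilipschitzWith m⁻¹` on `s`; stated with the factor `m` itself, it can be multiplied out, and
`m` may be any real number. -/
def ExpandsOn (m : ℝ) (g : X → Y) (s : Set X) : Prop :=
  ∀ ⦃x⦄, x ∈ s → ∀ ⦃y⦄, y ∈ s → m * dist x y ≤ dist (g x) (g y)

namespace ExpandsOn

theorem mono {m : ℝ} {g : X → Y} {s t : Set X} (hg : ExpandsOn m g t) (hst : s ⊆ t) :
    ExpandsOn m g s :=
  fun _ hx _ hy => hg (hst hx) (hst hy)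

theorem mono_factor {m m' : ℝ} {g : X → Y} {s : Set X} (hg : ExpandsOn m g s) (hm : m' ≤ m) :
    ExpandsOn m' g s :=
  fun _ hx _ hy => (mul_le_mul_of_nonneg_right hm dist_nonneg).trans (hg hx hy)

theorem injOn {X : Type*} [MetricSpace X] {m : ℝ} {g : X → Y} {s : Set X} (hg : ExpandsOn m g s)
    (hm : 0 < m) : InjOn g s := by
  intro x hx y hy hxy
  have h : m * dist x y ≤ 0 := by simpa only [hxy, dist_self] using hg hx hy
  exact dist_le_zero.mp (nonpos_of_mul_nonpos_right h hm)

theorem of_le_abs_deriv {g g' : ℝ → ℝ} {s : Set ℝ} {m : ℝ} (hs : Convex ℝ s)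
    (hg : ∀ x ∈ s, HasDerivAt g (g' x) x) (hm : ∀ x ∈ s, m ≤ |g' x|) : ExpandsOn m g s := by
  intro x hx y hy
  wlog hxy : x < y generalizing x y
  · rcases (not_lt.mp hxy).eq_or_lt with rfl | hyx
    · simp only [dist_self, mul_zero, le_refl]
    · simpa only [dist_comm] using this hy hx hyx
  have hsub : Icc x y ⊆ s := hs.ordConnected.out hx hy
  obtain ⟨ξ, hξ, hslope⟩ := exists_hasDerivAt_eq_slope g g' hxy
    (fun z hz => (hg z (hsub hz)).continuousAt.continuousWithinAt)
    (fun z hz => hg z (hsub (Ioo_subset_Icc_self hz)))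
  have hmξ := hm ξ (hsub (Ioo_subset_Icc_self hξ))
  rwa [hslope, abs_div, le_div_iff₀ (abs_pos.mpr (sub_pos.mpr hxy).ne'), ← Real.dist_eq,
    ← Real.dist_eq, dist_comm, dist_comm (g y)] at hmξ

theorem surjOn_closedBall {g : ℝ → ℝ} {m x δ : ℝ} (hg : ExpandsOn m g (closedBall x δ))
    (hm : 0 < m) (hcont : ContinuousOn g (closedBall x δ)) :
    SurjOn g (closedBall x δ) (closedBall (g x) (m * δ)) := by
  intro y hy
  have hδ : 0 ≤ δ := nonneg_of_mul_nonneg_right (dist_nonneg.trans hy) hm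
  have hleft : x - δ ∈ closedBall x δ := by simp [abs_of_nonneg hδ]
  have hright : x + δ ∈ closedBall x δ := by simp [abs_of_nonneg hδ]
  have hx : x ∈ closedBall x δ := mem_closedBall_self hδ
  have hexp_left : m * δ ≤ |g (x - δ) - g x| := by
    simpa [Real.dist_eq, abs_of_nonneg hδ] using hg hleft hx
  have hexp_right : m * δ ≤ |g (x + δ) - g x| := by
    simpa [Real.dist_eq, abs_of_nonneg hδ] using hg hright hx
  have hinj := hg.injOn hm
  rw [Real.closedBall_eq_Icc] at hcont hinj hleft hright hx hy ⊢
  have hle : x - δ ≤ x + δ := by linarith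
  rcases hcont.strictMonoOn_of_injOn_Icc' hle hinj with hmono | hanti
  · have h₁ := hmono.monotoneOn hleft hx (by linarith)
    have h₂ := hmono.monotoneOn hx hright (by linarith)
    rw [abs_of_nonpos (by linarith)] at hexp_left
    rw [abs_of_nonneg (by linarith)] at hexp_right
    exact intermediate_value_Icc hle hcont ⟨by linarith [hy.1], by linarith [hy.2]⟩
  · have h₁ := hanti.antitoneOn hleft hx (by linarith)
    have h₂ := hanti.antitoneOn hx hright (by linarith)
    rw [abs_of_nonneg (by linarith)] at hexp_left
    rw [abs_of_nonpos (by linarith)] at hexp_right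
    exact intermediate_value_Icc' hle hcont ⟨by linarith [hy.1], by linarith [hy.2]⟩

end ExpandsOn

theorem continuousWithinAt_of_level_of_mul_dist_le {Z : Type*} [TopologicalSpace Z] {F : Z → X → Y}
    {m : Z → ℝ} {θ : Z → X} {s : Set Z} {z : Z} {c : Y} (hz : z ∈ s)
    (hm : ContinuousWithinAt m s z) (hm₀ : 0 < m z) (hF : ContinuousWithinAt (F · (θ z)) s z)
    (hlevel : ∀ y ∈ s, F y (θ y) = c)
    (hexp : ∀ y ∈ s, m y * dist (θ y) (θ z) ≤ dist (F y (θ y)) (F y (θ z))) :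
    ContinuousWithinAt θ s z := by
  have hquot : Tendsto (fun y => dist c (F y (θ z)) / m y) (𝓝[s] z) (𝓝 0) := by
    have h := ((tendsto_const_nhds (x := c)).dist hF.tendsto).div hm hm₀.ne'
    rwa [hlevel z hz, dist_self, zero_div] at h
  refine tendsto_iff_dist_tendsto_zero.mpr
    (squeeze_zero' (Eventually.of_forall fun _ => dist_nonneg) ?_ hquot)
  filter_upwards [self_mem_nhdsWithin, hm.eventually (lt_mem_nhds hm₀)] with y hy hmy
  rw [le_div_iff₀' hmy]
  simpa only [hlevel y hy] using hexp y hy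

theorem exists_continuousOn_eq_zero_of_expandsOn {Z : Type*} [TopologicalSpace Z] {F : Z → ℝ → ℝ}
    {m δ : Z → ℝ} {s : Set Z} {t₀ ε : ℝ}
    (hm : ContinuousOn m s) (hm₀ : ∀ z ∈ s, 0 < m z) (hδ : ∀ z ∈ s, δ z ≤ ε)
    (hparam : ∀ t ∈ closedBall t₀ ε, ContinuousOn (F · t) s)
    (hcont : ∀ z ∈ s, ContinuousOn (F z) (closedBall t₀ ε))
    (hexp : ∀ z ∈ s, ExpandsOn (m z) (F z) (closedBall t₀ ε))
    (hcenter : ∀ z ∈ s, |F z t₀| ≤ m z * δ z) :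
    ∃ θ : Z → ℝ, ContinuousOn θ s ∧ ∀ z ∈ s, F z (θ z) = 0 ∧ |θ z - t₀| ≤ δ z ∧
      ∀ t, |t - t₀| ≤ ε → F z t = 0 → t = θ z := by
  have hsub : ∀ z ∈ s, closedBall t₀ (δ z) ⊆ closedBall t₀ ε := fun z hz =>
    closedBall_subset_closedBall (hδ z hz)
  have hzero : ∀ z ∈ s, ∃ t ∈ closedBall t₀ (δ z), F z t = 0 := fun z hz =>
    ((hexp z hz).mono (hsub z hz)).surjOn_closedBall (hm₀ z hz) ((hcont z hz).mono (hsub z hz))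
      (by simpa [Real.dist_eq] using hcenter z hz)
  choose! θ hθ hFθ using hzero
  have hθε : ∀ z ∈ s, θ z ∈ closedBall t₀ ε := fun z hz => hsub z hz (hθ z hz)
  refine ⟨θ, fun z hz => ?_, fun z hz => ⟨hFθ z hz, hθ z hz, fun t ht hFt => ?_⟩⟩
  · exact continuousWithinAt_of_level_of_mul_dist_le hz (hm z hz) (hm₀ z hz)
      (hparam _ (hθε z hz) z hz) hFθ
      (fun y hy => hexp y hy (hθε y hy) (hθε z hz))
  · exact (hexp z hz).injOn (hm₀ z hz) ht (hθε z hz) (hFt.trans (hFθ z hz).symm)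

end ExpandsOn

section Interpolation

variable {E : Type*} [NormedAddCommGroup E] [NormedSpace ℝ E]

theorem norm_deriv_le_of_norm_deriv_deriv_le {f f' f'' : ℝ → E} {a b M : ℝ} (hab : a < b)
    (hf : ∀ x ∈ Icc a b, HasDerivWithinAt f (f' x) (Icc a b) x)
    (hf' : ∀ x ∈ Icc a b, HasDerivWithinAt f' (f'' x) (Icc a b) x)
    (hM : ∀ x ∈ Icc a b, ‖f'' x‖ ≤ M) :
    ‖f' b‖ ≤ ‖f b - f a‖ / (b - a) + M * (b - a) := by
  have ha : a ∈ Icc a b := left_mem_Icc.mpr hab.le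
  have hb : b ∈ Icc a b := right_mem_Icc.mpr hab.le
  have hba : 0 < b - a := sub_pos.mpr hab
  have hM₀ : 0 ≤ M := (norm_nonneg _).trans (hM a ha)
  have hf'_sub : ∀ x ∈ Icc a b, ‖f' x - f' b‖ ≤ M * (b - a) := fun x hx => by
    refine ((convex_Icc a b).norm_image_sub_le_of_norm_hasDerivWithin_le hf' hM hb hx).trans ?_
    rw [Real.norm_eq_abs, abs_sub_comm, abs_of_nonneg (sub_nonneg.mpr hx.2)]
    gcongr
    exact hx.1
  have htaylor : ‖f b - f a - (b - a) • f' b‖ ≤ M * (b - a) * (b - a) := by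
    have hderiv : ∀ x ∈ Icc a b,
        HasDerivWithinAt (fun x => f x - x • f' b) (f' x - f' b) (Icc a b) x := fun x hx => by
      simpa only [id_eq, one_smul] using
        (hf x hx).fun_sub ((hasDerivWithinAt_id x _).smul_const (f' b))
    have h := (convex_Icc a b).norm_image_sub_le_of_norm_hasDerivWithin_le hderiv hf'_sub ha hb
    rw [Real.norm_of_nonneg hba.le] at h
    convert h using 2
    module
  have hmul : (b - a) * ‖f' b‖ ≤ ‖f b - f a‖ + M * (b - a) * (b - a) := by
    calc (b - a) * ‖f' b‖ = ‖(b - a) • f' b‖ := by rw [norm_smul, Real.norm_of_nonneg hba.le]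
      _ ≤ ‖f b - f a‖ + ‖f b - f a - (b - a) • f' b‖ := norm_le_insert _ _
      _ ≤ ‖f b - f a‖ + M * (b - a) * (b - a) := by gcongr
  rw [← le_div_iff₀' hba, add_div, mul_div_cancel_right₀ _ hba.ne'] at hmul
  exact hmul

theorem rpow_le_rpow_abs_mul_rpow {k r s : ℝ} (p : ℝ) (hk : 0 < k) (hr : 0 < r) (hs : 0 < s)
    (hsr : s ≤ k * r) (hrs : r ≤ k * s) : s ^ p ≤ k ^ |p| * r ^ p := by
  rcases le_total 0 p with hp | hp
  · rw [abs_of_nonneg hp, ← mul_rpow hk.le hr.le]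
    exact rpow_le_rpow hs.le hsr hp
  · rw [abs_of_nonpos hp, rpow_neg hk.le, inv_mul_eq_div, ← div_rpow hr.le hk.le]
    exact rpow_le_rpow_of_nonpos (div_pos hr hk) ((div_le_iff₀' hk).mpr hrs) hp

theorem norm_deriv_le_mul_rpow {f f' f'' : ℝ → E} {A B R p : ℝ}
    (hf : ∀ s ∈ Ioo 0 R, HasDerivAt f (f' s) s) (hf' : ∀ s ∈ Ioo 0 R, HasDerivAt f' (f'' s) s)
    (hA : ∀ s ∈ Ioo 0 R, ‖f s‖ ≤ A * s ^ p) (hB : ∀ s ∈ Ioo 0 R, ‖f'' s‖ ≤ B * s ^ (p - 2))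
    {r : ℝ} (hr : r ∈ Ioo 0 R) :
    ‖f' r‖ ≤ (4 * 2 ^ |p| * A + 2 ^ |p - 2| * B) * r ^ (p - 1) := by
  have hr₀ : 0 < r := hr.1
  have hIcc : Icc (r / 2) r ⊆ Ioo 0 R := Icc_subset_Ioo (half_pos hr₀) hr.2
  have hA₀ : 0 ≤ A :=
    nonneg_of_mul_nonneg_left ((norm_nonneg _).trans (hA r hr)) (rpow_pos_of_pos hr₀ p)
  have hB₀ : 0 ≤ B :=
    nonneg_of_mul_nonneg_left ((norm_nonneg _).trans (hB r hr)) (rpow_pos_of_pos hr₀ (p - 2))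
  have hpow : ∀ q : ℝ, ∀ s ∈ Icc (r / 2) r, s ^ q ≤ 2 ^ |q| * r ^ q := fun q s hs =>
    rpow_le_rpow_abs_mul_rpow q two_pos hr₀ (hIcc hs).1 (by linarith [hs.2]) (by linarith [hs.1])
  have hval : ∀ s ∈ Icc (r / 2) r, ‖f s‖ ≤ A * (2 ^ |p| * r ^ p) := fun s hs =>
    (hA s (hIcc hs)).trans (by gcongr; exact hpow p s hs)
  have hincr : ‖f r - f (r / 2)‖ ≤ 2 * (A * (2 ^ |p| * r ^ p)) := by
    have h₁ := hval r ⟨by linarith, le_rfl⟩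
    have h₂ := hval (r / 2) ⟨le_rfl, by linarith⟩
    linarith [norm_sub_le (f r) (f (r / 2))]
  have hinterp := norm_deriv_le_of_norm_deriv_deriv_le (half_lt_self hr₀)
    (fun s hs => (hf s (hIcc hs)).hasDerivWithinAt) (fun s hs => (hf' s (hIcc hs)).hasDerivWithinAt)
    (M := B * (2 ^ |p - 2| * r ^ (p - 2)))
    (fun s hs => (hB s (hIcc hs)).trans (by gcongr; exact hpow (p - 2) s hs))
  have hp₁ : r ^ p = r ^ (p - 1) * r := by rw [← rpow_add_one hr₀.ne']; ring_nf
  have hp₂ : r ^ (p - 1) = r ^ (p - 2) * r := by rw [← rpow_add_one hr₀.ne']; ring_nf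
  rw [sub_half] at hinterp
  calc ‖f' r‖ ≤ 2 * (A * (2 ^ |p| * r ^ p)) / (r / 2) + B * (2 ^ |p - 2| * r ^ (p - 2)) * (r / 2) :=
        hinterp.trans (by gcongr)
    _ = (4 * 2 ^ |p| * A + 2 ^ |p - 2| * B / 2) * r ^ (p - 1) := by
        rw [hp₁, hp₂]; field_simp; ring
    _ ≤ (4 * 2 ^ |p| * A + 2 ^ |p - 2| * B) * r ^ (p - 1) := by
        gcongr; exact half_le_self (by positivity)

end Interpolation

section PolarCoordinates

theorem norm_polarPt (r θ : ℝ) : ‖polarPt r θ‖ = |r| := by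
  rw [EuclideanSpace.norm_eq, ← Real.sqrt_sq_eq_abs]
  congr 1
  simp [polarPt, Fin.sum_univ_two, mul_pow, ← mul_add]

theorem norm_tangVec (θ : ℝ) : ‖tangVec θ‖ = 1 := by
  simp [EuclideanSpace.norm_eq, tangVec, Fin.sum_univ_two]

theorem tangVec_eq_cos_smul_sub_sin_smul (φ θ : ℝ) :
    tangVec φ = cos (φ - θ) • tangVec θ - sin (φ - θ) • polarPt 1 θ := by
  obtain ⟨α, rfl⟩ : ∃ α, φ = α + θ := ⟨φ - θ, by ring⟩
  ext i
  fin_cases i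
  · simp [polarPt, tangVec, sin_add]
    ring
  · simp [polarPt, tangVec, cos_add]

theorem hasDerivAt_polarPt_radius (r θ : ℝ) :
    HasDerivAt (fun s => polarPt s θ) (polarPt 1 θ) r := by
  have h : (fun s => polarPt s θ) = fun s : ℝ => s • polarPt 1 θ := by
    ext s i
    fin_cases i <;> simp [polarPt]
  rw [h]
  simpa using (hasDerivAt_id r).smul_const (polarPt 1 θ)

theorem hasDerivAt_polarPt_angle (r φ : ℝ) : HasDerivAt (polarPt r) (r • tangVec φ) φ := by
  have h : polarPt r = fun x => (r * cos x) • polarPt 1 0 + (r * sin x) • tangVec 0 := by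
    ext x i
    fin_cases i <;> simp [polarPt, tangVec]
  have htang : r • tangVec φ = (r * -sin φ) • polarPt 1 0 + (r * cos φ) • tangVec 0 := by
    ext i
    fin_cases i <;> simp [polarPt, tangVec]
  rw [h, htang]
  exact (((hasDerivAt_cos φ).const_mul r).smul_const (polarPt 1 0)).add
    (((hasDerivAt_sin φ).const_mul r).smul_const (tangVec 0))

theorem norm_comp_polarPt_sub_le {E : Type*} [NormedAddCommGroup E] [NormedSpace ℝ E]
    {F : EuclideanSpace ℝ (Fin 2) → E} {r M : ℝ}
    (hF : ∀ φ, DifferentiableAt ℝ F (polarPt r φ)) (hM : ∀ φ, ‖fderiv ℝ F (polarPt r φ)‖ ≤ M)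
    (φ ψ : ℝ) : ‖F (polarPt r φ) - F (polarPt r ψ)‖ ≤ M * |r| * |φ - ψ| := by
  refine convex_univ.norm_image_sub_le_of_norm_hasDerivWithin_le (f := fun x => F (polarPt r x))
    (fun x _ => ((hF x).hasFDerivAt.comp_hasDerivAt x
      (hasDerivAt_polarPt_angle r x)).hasDerivWithinAt)
    (fun x _ => ?_) (mem_univ ψ) (mem_univ φ)
  refine (ContinuousLinearMap.le_opNorm _ _).trans ?_
  rw [norm_smul, norm_tangVec, mul_one, Real.norm_eq_abs]
  exact mul_le_mul_of_nonneg_right (hM x) (abs_nonneg r)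

theorem cos_mul_abs_apply_tangVec_sub_le (L : EuclideanSpace ℝ (Fin 2) →L[ℝ] ℝ) (φ θ : ℝ) :
    cos (φ - θ) * |L (tangVec θ)| - |φ - θ| * |L (polarPt 1 θ)| ≤ |L (tangVec φ)| := by
  have hsin : |sin (φ - θ) * L (polarPt 1 θ)| ≤ |φ - θ| * |L (polarPt 1 θ)| := by
    rw [abs_mul]
    exact mul_le_mul_of_nonneg_right abs_sin_le_abs (abs_nonneg _)
  have hcos : cos (φ - θ) * |L (tangVec θ)| ≤ |cos (φ - θ) * L (tangVec θ)| := by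
    rw [abs_mul]
    exact mul_le_mul_of_nonneg_right (le_abs_self _) (abs_nonneg _)
  rw [tangVec_eq_cos_smul_sub_sin_smul φ θ, map_sub, map_smul, map_smul, smul_eq_mul, smul_eq_mul]
  linarith [abs_sub_abs_le_abs_sub (cos (φ - θ) * L (tangVec θ)) (sin (φ - θ) * L (polarPt 1 θ))]

end PolarCoordinates

section ZeroCurve

variable {w : EuclideanSpace ℝ (Fin 2) → ℝ}

theorem expandsOn_comp_polarPt {r θ₀ ε a b M : ℝ} (hr : 0 < r) (hε : ε ≤ 1)
    (hw : ∀ φ, DifferentiableAt ℝ w (polarPt r φ))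
    (hw' : ∀ φ, DifferentiableAt ℝ (fderiv ℝ w) (polarPt r φ))
    (htang : a ≤ |fderiv ℝ w (polarPt r θ₀) (tangVec θ₀)|)
    (hrad : |fderiv ℝ w (polarPt r θ₀) (polarPt 1 θ₀)| ≤ b)
    (hhess : ∀ φ, ‖fderiv ℝ (fderiv ℝ w) (polarPt r φ)‖ ≤ M) :
    ExpandsOn (r * (a / 2 - (M * r + b) * ε)) (fun φ => w (polarPt r φ)) (closedBall θ₀ ε) := by
  refine ExpandsOn.of_le_abs_deriv (convex_closedBall θ₀ ε)
    (fun φ _ => (hw φ).hasFDerivAt.comp_hasDerivAt φ (hasDerivAt_polarPt_angle r φ))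
    (fun φ hφ => ?_)
  have hφε : |φ - θ₀| ≤ ε := hφ
  have hM₀ : 0 ≤ M := le_trans (by positivity) (hhess φ)
  have hε₀ : 0 ≤ ε := (abs_nonneg _).trans hφε
  set L := fderiv ℝ w (polarPt r φ)
  set L₀ := fderiv ℝ w (polarPt r θ₀)
  have hcos : 1 / 2 ≤ cos (φ - θ₀) := by
    have hsq : (φ - θ₀) ^ 2 ≤ 1 := (sq_le_one_iff_abs_le_one _).mpr (hφε.trans hε)
    linarith [one_sub_sq_div_two_le_cos (x := φ - θ₀)]
  have hrotate : a / 2 - b * ε ≤ |L₀ (tangVec φ)| := by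
    have h₁ : 1 / 2 * |L₀ (tangVec θ₀)| ≤ cos (φ - θ₀) * |L₀ (tangVec θ₀)| := by gcongr
    have h₂ : |φ - θ₀| * |L₀ (polarPt 1 θ₀)| ≤ ε * b := by gcongr
    linarith [cos_mul_abs_apply_tangVec_sub_le L₀ φ θ₀]
  have hchange : |L₀ (tangVec φ) - L (tangVec φ)| ≤ M * r * ε := by
    have hop := (L₀ - L).le_opNorm (tangVec φ)
    rw [norm_tangVec, mul_one, norm_sub_rev] at hop
    refine (hop.trans (norm_comp_polarPt_sub_le hw' hhess φ θ₀)).trans ?_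
    rw [abs_of_pos hr]
    gcongr
  rw [map_smul, smul_eq_mul, abs_mul, abs_of_pos hr]
  gcongr
  linarith [abs_sub_abs_le_abs_sub (L₀ (tangVec φ)) (L (tangVec φ))]

variable {d c C R θ₀ : ℝ}

theorem abs_radial_deriv_le_mul_rpow (hC : 0 ≤ C)
    (hw : ∀ x, 0 < ‖x‖ → ‖x‖ < R → DifferentiableAt ℝ w x)
    (hw' : ∀ x, 0 < ‖x‖ → ‖x‖ < R → DifferentiableAt ℝ (fderiv ℝ w) x)
    (hval : ∀ r, 0 < r → r < R → |w (polarPt r θ₀)| ≤ C * r ^ (d + 1))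
    (hhess : ∀ x, 0 < ‖x‖ → ‖x‖ < R → ‖fderiv ℝ (fderiv ℝ w) x‖ ≤ C * ‖x‖ ^ (d - 2))
    {r : ℝ} (hr : r ∈ Ioo 0 R) :
    |fderiv ℝ w (polarPt r θ₀) (polarPt 1 θ₀)| ≤
      (4 * 2 ^ |d| * (C * R) + 2 ^ |d - 2| * C) * r ^ (d - 1) := by
  have hnorm : ∀ s ∈ Ioo 0 R, ‖polarPt s θ₀‖ = s := fun s hs => by
    rw [norm_polarPt, abs_of_pos hs.1]
  have hpos : ∀ s ∈ Ioo 0 R, 0 < ‖polarPt s θ₀‖ := fun s hs => (hnorm s hs).symm ▸ hs.1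
  have hlt : ∀ s ∈ Ioo 0 R, ‖polarPt s θ₀‖ < R := fun s hs => (hnorm s hs).symm ▸ hs.2
  refine norm_deriv_le_mul_rpow (f := fun s => w (polarPt s θ₀))
    (f' := fun s => fderiv ℝ w (polarPt s θ₀) (polarPt 1 θ₀))
    (f'' := fun s => fderiv ℝ (fderiv ℝ w) (polarPt s θ₀) (polarPt 1 θ₀) (polarPt 1 θ₀))
    (fun s hs => (hw _ (hpos s hs) (hlt s hs)).hasFDerivAt.comp_hasDerivAt s
      (hasDerivAt_polarPt_radius s θ₀))
    (fun s hs => ?_) (fun s hs => ?_) (fun s hs => ?_) hr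
  · have h := (hw' _ (hpos s hs) (hlt s hs)).hasFDerivAt.comp_hasDerivAt s
      (hasDerivAt_polarPt_radius s θ₀)
    simpa using h.clm_apply (hasDerivAt_const s (polarPt 1 θ₀))
  · calc ‖w (polarPt s θ₀)‖ ≤ C * (s ^ d * s) := by
          rw [← rpow_add_one hs.1.ne']; exact hval s hs.1 hs.2
      _ ≤ C * (s ^ d * R) := by
          have := rpow_pos_of_pos hs.1 d
          gcongr
          exact hs.2.le
      _ = C * R * s ^ d := by ring
  · have h := hhess _ (hpos s hs) (hlt s hs)
    rw [hnorm s hs] at h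
    refine (ContinuousLinearMap.le_opNorm₂ _ _ _).trans ?_
    simpa [norm_polarPt] using h

theorem exists_expandsOn_comp_polarPt (hc : 0 < c) (hC : 0 < C) (hR : 0 < R)
    (hw : ∀ x, 0 < ‖x‖ → ‖x‖ < R → DifferentiableAt ℝ w x)
    (hw' : ∀ x, 0 < ‖x‖ → ‖x‖ < R → DifferentiableAt ℝ (fderiv ℝ w) x)
    (hval : ∀ r, 0 < r → r < R → |w (polarPt r θ₀)| ≤ C * r ^ (d + 1))
    (hgrad : ∀ r, 0 < r → r < R → c * r ^ (d - 1) ≤ |fderiv ℝ w (polarPt r θ₀) (tangVec θ₀)|)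
    (hhess : ∀ x, 0 < ‖x‖ → ‖x‖ < R → ‖fderiv ℝ (fderiv ℝ w) x‖ ≤ C * ‖x‖ ^ (d - 2)) :
    ∃ ε > 0, ∀ r ∈ Ioo 0 R,
      ExpandsOn (c / 4 * r ^ d) (fun φ => w (polarPt r φ)) (closedBall θ₀ ε) := by
  obtain ⟨K, hK, hrad⟩ : ∃ K > 0, ∀ r ∈ Ioo 0 R,
      |fderiv ℝ w (polarPt r θ₀) (polarPt 1 θ₀)| ≤ K * r ^ (d - 1) :=
    ⟨_, by positivity, fun r hr => abs_radial_deriv_le_mul_rpow hC.le hw hw' hval hhess hr⟩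
  have hCK : 0 < 4 * (C + K) := mul_pos four_pos (add_pos hC hK)
  obtain ⟨ε, hε₀, hε⟩ : ∃ ε > 0, ε ≤ min 1 (c / (4 * (C + K))) :=
    ⟨_, lt_min one_pos (div_pos hc hCK), le_rfl⟩
  have hεc : (C + K) * ε ≤ c / 4 := by
    have h := (le_div_iff₀ hCK).mp (hε.trans (min_le_right _ _))
    linarith
  refine ⟨ε, hε₀, fun r hr => ?_⟩
  have hr₀ : 0 < r := hr.1
  have hnorm : ∀ φ, ‖polarPt r φ‖ = r := fun φ => by rw [norm_polarPt, abs_of_pos hr₀]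
  have hpos : ∀ φ, 0 < ‖polarPt r φ‖ := fun φ => (hnorm φ).symm ▸ hr.1
  have hlt : ∀ φ, ‖polarPt r φ‖ < R := fun φ => (hnorm φ).symm ▸ hr.2
  have hexp := expandsOn_comp_polarPt hr₀ (hε.trans (min_le_left _ _))
    (fun φ => hw _ (hpos φ) (hlt φ)) (fun φ => hw' _ (hpos φ) (hlt φ)) (hgrad r hr.1 hr.2)
    (hrad r hr) (fun φ => by simpa only [hnorm] using hhess _ (hpos φ) (hlt φ))
  refine hexp.mono_factor ?_
  have hp₁ : r ^ d = r ^ (d - 1) * r := by rw [← rpow_add_one hr₀.ne']; ring_nf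
  have hp₂ : r ^ (d - 1) = r ^ (d - 2) * r := by rw [← rpow_add_one hr₀.ne']; ring_nf
  calc c / 4 * r ^ d = r * ((c / 2 - c / 4) * r ^ (d - 1)) := by rw [hp₁]; ring
    _ ≤ r * ((c / 2 - (C + K) * ε) * r ^ (d - 1)) := by gcongr
    _ = r * (c * r ^ (d - 1) / 2 - (C * r ^ (d - 2) * r + K * r ^ (d - 1)) * ε) := by
        rw [hp₂]; ring

theorem tendsto_nhdsGT_of_abs_sub_le_mul {θ : ℝ → ℝ} {r₀ D : ℝ} (hr₀ : 0 < r₀)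
    (hθ : ∀ r ∈ Ioc 0 r₀, |θ r - θ₀| ≤ D * r) : Tendsto θ (𝓝[>] 0) (𝓝 θ₀) := by
  have hlim : Tendsto (fun r => D * r) (𝓝[>] 0) (𝓝 0) :=
    tendsto_nhdsWithin_of_tendsto_nhds (by simpa using (continuous_const_mul D).tendsto 0)
  refine tendsto_iff_dist_tendsto_zero.mpr
    (squeeze_zero' (Eventually.of_forall fun _ => dist_nonneg) ?_ hlim)
  filter_upwards [Ioc_mem_nhdsGT hr₀] with r hr using hθ r hr

theorem stmt_12_general (hc : 0 < c) (hC : 0 < C) (hR : 0 < R)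
    (hw : ∀ x, 0 < ‖x‖ → ‖x‖ < R → DifferentiableAt ℝ w x)
    (hw' : ∀ x, 0 < ‖x‖ → ‖x‖ < R → DifferentiableAt ℝ (fderiv ℝ w) x)
    (hval : ∀ r, 0 < r → r < R → |w (polarPt r θ₀)| ≤ C * r ^ (d + 1))
    (hgrad : ∀ r, 0 < r → r < R → c * r ^ (d - 1) ≤ |fderiv ℝ w (polarPt r θ₀) (tangVec θ₀)|)
    (hhess : ∀ x, 0 < ‖x‖ → ‖x‖ < R → ‖fderiv ℝ (fderiv ℝ w) x‖ ≤ C * ‖x‖ ^ (d - 2)) :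
    ∃ r₀ : ℝ, 0 < r₀ ∧ r₀ < R ∧ ∃ ε : ℝ, 0 < ε ∧ ∃ D : ℝ, ∃ θ : ℝ → ℝ,
      ContinuousOn θ (Ioc 0 r₀) ∧
      (∀ r ∈ Ioc (0 : ℝ) r₀,
        w (polarPt r (θ r)) = 0 ∧ |θ r - θ₀| ≤ D * r ∧
        ∀ φ : ℝ, |φ - θ₀| ≤ ε → w (polarPt r φ) = 0 → polarPt r φ = polarPt r (θ r)) ∧
      Tendsto θ (𝓝[>] 0) (𝓝 θ₀) := by
  obtain ⟨ε, hε, hexp⟩ := exists_expandsOn_comp_polarPt hc hC hR hw hw' hval hgrad hhess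
  obtain ⟨D, hD, hcD⟩ : ∃ D > 0, c / 4 * D = C := ⟨4 * C / c, by positivity, by field_simp⟩
  obtain ⟨r₀, hr₀, hr₀_le⟩ : ∃ r₀ > 0, r₀ ≤ min (R / 2) (ε / D) :=
    ⟨min (R / 2) (ε / D), by positivity, le_rfl⟩
  have hr₀R : r₀ < R := (hr₀_le.trans (min_le_left _ _)).trans_lt (half_lt_self hR)
  have hIoo : Ioc 0 r₀ ⊆ Ioo 0 R := fun r hr => ⟨hr.1, hr.2.trans_lt hr₀R⟩
  have hwcont : ∀ r ∈ Ioc 0 r₀, ∀ φ, ContinuousAt w (polarPt r φ) := fun r hr φ =>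
    (hw _ (by simpa [norm_polarPt] using hr.1.ne')
      (by simpa [norm_polarPt, abs_of_pos hr.1] using (hIoo hr).2)).continuousAt
  obtain ⟨θ, hθcont, hθ⟩ := exists_continuousOn_eq_zero_of_expandsOn (s := Ioc 0 r₀)
    (F := fun r φ => w (polarPt r φ)) (m := fun r => c / 4 * r ^ d) (δ := fun r => D * r)
    (t₀ := θ₀) (ε := ε)
    (fun r hr => ((continuousAt_rpow_const r d (.inl hr.1.ne')).const_mul _).continuousWithinAt)
    (fun r hr => mul_pos (by positivity) (rpow_pos_of_pos hr.1 d))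
    (fun r hr => (le_div_iff₀' hD).mp (hr.2.trans (hr₀_le.trans (min_le_right _ _))))
    (fun φ _ r hr => ((hwcont r hr φ).comp (f := (polarPt · φ))
      (hasDerivAt_polarPt_radius r φ).continuousAt).continuousWithinAt)
    (fun r hr φ _ => ((hwcont r hr φ).comp
      (hasDerivAt_polarPt_angle r φ).continuousAt).continuousWithinAt)
    (fun r hr => hexp r (hIoo hr))
    (fun r hr => (hval r hr.1 (hIoo hr).2).trans_eq (by rw [rpow_add_one hr.1.ne', ← hcD]; ring))
  refine ⟨r₀, hr₀, hr₀R, ε, hε, D, θ, hθcont, fun r hr => ?_,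
    tendsto_nhdsGT_of_abs_sub_le_mul hr₀ fun r hr => (hθ r hr).2.1⟩
  obtain ⟨hzero, hbound, hunique⟩ := hθ r hr
  exact ⟨hzero, hbound, fun φ hφ hφ₀ => congrArg (polarPt r) (hunique φ hφ hφ₀)⟩

end ZeroCurve

/-- From a zero ray of the leading Taylor polynomial of a nodal function one obtains a genuine
zero curve emanating from the origin at the same angle, on which all nearby zeros lie. -/
theorem stmt_12 (d : ℕ) (hd : 1 ≤ d) (c C R θ₀ : ℝ) (hc : 0 < c) (hC : 0 < C) (hR : 0 < R)
    (w : EuclideanSpace ℝ (Fin 2) → ℝ)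
    (hw : ContDiffOn ℝ 2 w (Metric.ball 0 R))
    (hval : ∀ r : ℝ, 0 < r → r < R → |w (polarPt r θ₀)| ≤ C * r ^ ((d : ℝ) + 1))
    (hgrad : ∀ r : ℝ, 0 < r → r < R →
      c * r ^ ((d : ℝ) - 1) ≤ |fderiv ℝ w (polarPt r θ₀) (tangVec θ₀)|)
    (hhess : ∀ x : EuclideanSpace ℝ (Fin 2), 0 < ‖x‖ → ‖x‖ < R →
      ‖fderiv ℝ (fderiv ℝ w) x‖ ≤ C * ‖x‖ ^ ((d : ℝ) - 2)) :
    ∃ r₀ : ℝ, 0 < r₀ ∧ r₀ < R ∧ ∃ ε : ℝ, 0 < ε ∧ ∃ D : ℝ, ∃ θ : ℝ → ℝ,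
      ContinuousOn θ (Set.Ioc 0 r₀) ∧
      (∀ r ∈ Set.Ioc (0 : ℝ) r₀,
        w (polarPt r (θ r)) = 0 ∧ |θ r - θ₀| ≤ D * r ∧
        ∀ φ : ℝ, |φ - θ₀| ≤ ε → w (polarPt r φ) = 0 → polarPt r φ = polarPt r (θ r)) ∧
      Filter.Tendsto θ (nhdsWithin 0 (Set.Ioi 0)) (nhds θ₀) := by
  have hw₂ : ∀ x : EuclideanSpace ℝ (Fin 2), ‖x‖ < R → ContDiffAt ℝ 2 w x := fun x hx =>
    hw.contDiffAt (isOpen_ball.mem_nhds (mem_ball_zero_iff.mpr hx))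
  exact stmt_12_general hc hC hR (fun x _ hx => (hw₂ x hx).differentiableAt (by norm_num))
    (fun x _ hx => ((hw₂ x hx).fderiv_right (m := 1) (by norm_num)).differentiableAt (by norm_num))
    hval hgrad hhess

end
end

section
/- Let Ω ⊆ ℝ³ be open with 0 ∈ Ω, and let u₁, u₂ : Ω → ℝ be smooth solutions of the graphical translator equation div(∇u/√(1 + |∇u|²)) − 1/√(1 + |∇u|²) = 0 on Ω, with ∇u₁(0) = 0. Let w := u₁ − u₂ and let d ≥ 2 be an integer such that all partial derivatives of w of order at most d − 1 vanish at 0. Then the degree-d term of the Taylor expansion of w at 0 is a harmonic polynomial; equivalently, for every x ∈ ℝ³, the sum over i = 1, 2, 3 of D^d w(0)[e_i, e_i, x, …, x] equals 0, where D^d w(0) denotes the d-th iterated differential of w at 0 (a symmetric d-linear form) and e₁, e₂, e₃ is the standard basis of ℝ³. -/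
noncomputable section

/-- Divergence of a vector field on `ℝ³`. -/
def divg (F : EuclideanSpace ℝ (Fin 3) → EuclideanSpace ℝ (Fin 3))
    (x : EuclideanSpace ℝ (Fin 3)) : ℝ :=
  ∑ i : Fin 3, fderiv ℝ F x (EuclideanSpace.single i 1) i

/-- The upward-moving graphical translator equation
`div(∇u/√(1+|∇u|²)) − 1/√(1+|∇u|²) = 0`. -/
def TranslatorEq (u : EuclideanSpace ℝ (Fin 3) → ℝ) (x : EuclideanSpace ℝ (Fin 3)) : Prop :=
  divg (fun y => (Real.sqrt (1 + ‖gradient u y‖ ^ 2))⁻¹ • gradient u y) x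
    - (Real.sqrt (1 + ‖gradient u x‖ ^ 2))⁻¹ = 0

/-!
The difference `w` of two solutions satisfies a linear equation `P(D²w) = Dw(V)` with smooth
coefficients, where `P` at `y` is `A ↦ (1 + |p|²) tr A - A(p, p)` with `p = ∇u₁(y)`. Differentiate
it `d - 2` times at a point where `w` vanishes to order `d`. In the Leibniz expansion, every term in
which a coefficient of `P` is differentiated, and every term on the right-hand side, contains a
derivative of `w` of order less than `d`; what is left is `P` at that point applied to `D^d w`. If
`∇u₁` vanishes there, this `P` is the trace.
-/

open scoped Topology Gradient InnerProductSpace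
open Filter

section LeadingTerm

-- Lets the instances on `(E →L[𝕜] E →L[𝕜] F) →L[𝕜] F` be found.
set_option maxSynthPendingDepth 3

variable {𝕜 E F G : Type*} [NontriviallyNormedField 𝕜] [NormedAddCommGroup E] [NormedSpace 𝕜 E]
  [NormedAddCommGroup F] [NormedSpace 𝕜 F] [NormedAddCommGroup G] [NormedSpace 𝕜 G]
  {L : E → F →L[𝕜] G} {g : E → F} {x : E} {n : ℕ}

lemma norm_iteratedFDeriv_clm_apply_of_contDiffAt
    (hL : ContDiffAt 𝕜 n L x) (hg : ContDiffAt 𝕜 n g x) :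
    ‖iteratedFDeriv 𝕜 n (fun y => L y (g y)) x‖ ≤
      ∑ k ∈ Finset.range (n + 1),
        n.choose k * ‖iteratedFDeriv 𝕜 k L x‖ * ‖iteratedFDeriv 𝕜 (n - k) g x‖ := by
  obtain ⟨s, hs, hso, hxs⟩ :=
    eventually_nhds_iff.1 ((hL.eventually (by simp)).and (hg.eventually (by simp)))
  have hbound := norm_iteratedFDerivWithin_clm_apply (fun y hy => (hs y hy).1.contDiffWithinAt)
    (fun y hy => (hs y hy).2.contDiffWithinAt) hso.uniqueDiffOn hxs le_rfl
  simpa only [iteratedFDerivWithin_of_isOpen _ hso hxs] using hbound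

lemma iteratedFDeriv_clm_apply_eq_zero
    (hL : ContDiffAt 𝕜 n L x) (hg : ContDiffAt 𝕜 n g x)
    (hLg : ∀ k ≤ n, iteratedFDeriv 𝕜 k L x = 0 ∨ iteratedFDeriv 𝕜 (n - k) g x = 0) :
    iteratedFDeriv 𝕜 n (fun y => L y (g y)) x = 0 := by
  refine norm_le_zero_iff.1 ((norm_iteratedFDeriv_clm_apply_of_contDiffAt hL hg).trans_eq ?_)
  refine Finset.sum_eq_zero fun k hk => ?_
  rcases hLg k (Finset.mem_range_succ_iff.1 hk) with h | h <;> simp [h]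

lemma iteratedFDeriv_clm_apply_eq_comp_left
    (hL : ContDiffAt 𝕜 n L x) (hg : ContDiffAt 𝕜 n g x)
    (hvanish : ∀ k < n, iteratedFDeriv 𝕜 k g x = 0) :
    iteratedFDeriv 𝕜 n (fun y => L y (g y)) x =
      (L x).compContinuousMultilinearMap (iteratedFDeriv 𝕜 n g x) := by
  have hsplit : (fun y => L y (g y)) = (L x ∘ g) + fun y => (L y - L x) (g y) := by
    ext y
    simp
  have hL' : ContDiffAt 𝕜 n (fun y => L y - L x) x := hL.sub contDiffAt_const
  have hremainder : iteratedFDeriv 𝕜 n (fun y => (L y - L x) (g y)) x = 0 := by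
    refine iteratedFDeriv_clm_apply_eq_zero hL' hg fun k hk => ?_
    rcases k.eq_zero_or_pos with rfl | hpos
    · left
      ext
      simp
    · exact Or.inr (hvanish _ (by lia))
  rw [hsplit, iteratedFDeriv_add_apply (hg.continuousLinearMap_comp (L x)) (hL'.clm_apply hg),
    hremainder, (L x).iteratedFDeriv_comp_left hg le_rfl, add_zero]

lemma iteratedFDeriv_fderiv_eq_zero_iff :
    iteratedFDeriv 𝕜 n (fderiv 𝕜 g) x = 0 ↔ iteratedFDeriv 𝕜 (n + 1) g x = 0 := by
  rw [← norm_eq_zero, norm_iteratedFDeriv_fderiv, norm_eq_zero]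

theorem principalPart_comp_iteratedFDeriv_eq_zero
    {P : E → (E →L[𝕜] E →L[𝕜] F) →L[𝕜] F} {V : E → E} {w : E → F}
    (hP : ContDiffAt 𝕜 n P x) (hV : ContDiffAt 𝕜 n V x) (hw : ContDiffAt 𝕜 (n + 2 : ℕ) w x)
    (heq : ∀ᶠ y in 𝓝 x, P y (fderiv 𝕜 (fderiv 𝕜 w) y) = fderiv 𝕜 w y (V y))
    (hvanish : ∀ k < n + 2, iteratedFDeriv 𝕜 k w x = 0) :
    (P x).compContinuousMultilinearMap (iteratedFDeriv 𝕜 n (fderiv 𝕜 (fderiv 𝕜 w)) x) = 0 := by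
  have hw₁ : ContDiffAt 𝕜 (n + 1 : ℕ) (fderiv 𝕜 w) x := hw.fderiv_right (by norm_cast)
  have hw₂ : ContDiffAt 𝕜 n (fderiv 𝕜 (fderiv 𝕜 w)) x := hw₁.fderiv_right (by norm_cast)
  calc
    _ = iteratedFDeriv 𝕜 n (fun y => P y (fderiv 𝕜 (fderiv 𝕜 w) y)) x :=
      (iteratedFDeriv_clm_apply_eq_comp_left hP hw₂ fun k hk =>
        iteratedFDeriv_fderiv_eq_zero_iff.2 <| iteratedFDeriv_fderiv_eq_zero_iff.2 <|
          hvanish (k + 2) (by lia)).symm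
    _ = iteratedFDeriv 𝕜 n (fun y => fderiv 𝕜 w y (V y)) x :=
      (EventuallyEq.iteratedFDeriv 𝕜 heq n).self_of_nhds
    _ = 0 :=
      iteratedFDeriv_clm_apply_eq_zero (hw₁.of_le (by norm_cast; lia)) hV fun k hk =>
        Or.inl <| iteratedFDeriv_fderiv_eq_zero_iff.2 <| hvanish (k + 1) (by lia)

end LeadingTerm

section Symmetry

variable {𝕜 E F : Type*} [NontriviallyNormedField 𝕜] [NormedAddCommGroup E] [NormedSpace 𝕜 E]
  [NormedAddCommGroup F] [NormedSpace 𝕜 F] {f : E → F} {x : E} {n : ℕ}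

lemma iteratedFDeriv_cons (hf : ContDiffAt 𝕜 (n + 1 : ℕ) f x) (a : E) (m : Fin n → E) :
    iteratedFDeriv 𝕜 (n + 1) f x (Fin.cons a m) =
      fderiv 𝕜 (fun y => iteratedFDeriv 𝕜 n f y m) x a := by
  have hdiff := hf.differentiableAt_iteratedFDeriv (m := n) (mod_cast n.lt_succ_self)
  simpa only [Fin.cons_zero, Fin.tail_cons] using
    hdiff.iteratedFDeriv_succ_apply_left' (m := Fin.cons a m)

lemma iteratedFDeriv_cons_cons (hf : ContDiffAt 𝕜 (n + 2 : ℕ) f x) (a b : E) (m : Fin n → E) :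
    iteratedFDeriv 𝕜 (n + 2) f x (Fin.cons a (Fin.cons b m)) =
      fderiv 𝕜 (fderiv 𝕜 (iteratedFDeriv 𝕜 n f)) x a b m := by
  have hcons (y : E) : iteratedFDeriv 𝕜 (n + 1) f y (Fin.cons b m) =
      fderiv 𝕜 (iteratedFDeriv 𝕜 n f) y b m := by
    rw [iteratedFDeriv_succ_apply_left, Fin.cons_zero, Fin.tail_cons]
  have hdiff : DifferentiableAt 𝕜 (fderiv 𝕜 (iteratedFDeriv 𝕜 n f)) x :=
    ((hf.iteratedFDeriv_right (m := 2) (by norm_cast; lia)).fderiv_right (m := 1)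
      (by norm_num)).differentiableAt (by simp)
  have hderiv :=
    (hdiff.hasFDerivAt.clm_apply (hasFDerivAt_const b x)).continuousMultilinear_apply_const m
  rw [iteratedFDeriv_cons hf, funext hcons, hderiv.fderiv]
  simp

variable [IsRCLikeNormedField 𝕜]

lemma iteratedFDeriv_cons_cons_comm (hf : ContDiffAt 𝕜 (n + 2 : ℕ) f x) (a b : E)
    (m : Fin n → E) :
    iteratedFDeriv 𝕜 (n + 2) f x (Fin.cons a (Fin.cons b m)) =
      iteratedFDeriv 𝕜 (n + 2) f x (Fin.cons b (Fin.cons a m)) := by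
  have hC2 : ContDiffAt 𝕜 2 (iteratedFDeriv 𝕜 n f) x :=
    hf.iteratedFDeriv_right (by norm_cast; lia)
  rw [iteratedFDeriv_cons_cons hf, iteratedFDeriv_cons_cons hf,
    hC2.isSymmSndFDerivAt (by simp) a b]

lemma iteratedFDeriv_snoc (hf : ContDiffAt 𝕜 (n + 1 : ℕ) f x) (m : Fin n → E) (a : E) :
    iteratedFDeriv 𝕜 (n + 1) f x (Fin.snoc m a) =
      iteratedFDeriv 𝕜 (n + 1) f x (Fin.cons a m) := by
  induction n generalizing x with
  | zero => simp [Fin.snoc_zero]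
  | succ n ih =>
    obtain ⟨b, m, rfl⟩ : ∃ b m', m = Fin.cons b m' :=
      ⟨m 0, Fin.tail m, (Fin.cons_self_tail m).symm⟩
    have hcycle : (fun y => iteratedFDeriv 𝕜 (n + 1) f y (Fin.snoc m a)) =ᶠ[𝓝 x]
        fun y => iteratedFDeriv 𝕜 (n + 1) f y (Fin.cons a m) := by
      filter_upwards [hf.eventually (by simp)] with y hy
      exact ih (hy.of_le (by norm_cast; lia)) m
    rw [← Fin.cons_snoc_eq_snoc_cons, iteratedFDeriv_cons hf, hcycle.fderiv_eq,
      ← iteratedFDeriv_cons hf, iteratedFDeriv_cons_cons_comm hf]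

lemma iteratedFDeriv_fderiv_fderiv_apply (hf : ContDiffAt 𝕜 (n + 2 : ℕ) f x)
    (m : Fin n → E) (a b : E) :
    iteratedFDeriv 𝕜 n (fderiv 𝕜 (fderiv 𝕜 f)) x m a b =
      iteratedFDeriv 𝕜 (n + 2) f x (Fin.cons a (Fin.cons b m)) := by
  rw [← iteratedFDeriv_snoc hf, ← Fin.cons_snoc_eq_snoc_cons, ← iteratedFDeriv_snoc hf]
  simp [iteratedFDeriv_succ_apply_right]

end Symmetry

section Gradient

variable {E : Type*} [NormedAddCommGroup E] [InnerProductSpace ℝ E]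

lemma hasFDerivAt_inv_sqrt_one_add_norm_sq {F : Type*} [NormedAddCommGroup F] [NormedSpace ℝ F]
    {g : F → E} {g' : F →L[ℝ] E} {x : F} (hg : HasFDerivAt g g' x) :
    HasFDerivAt (fun y => (√(1 + ‖g y‖ ^ 2))⁻¹)
      (-(√(1 + ‖g x‖ ^ 2) ^ 3)⁻¹ • (innerSL ℝ (g x)).comp g') x := by
  have hpos : 0 < √(1 + ‖g x‖ ^ 2) := by positivity
  have hsqrt := (hg.norm_sq.const_add 1).sqrt (by positivity)
  refine ((hasDerivAt_inv hpos.ne').comp_hasFDerivAt x hsqrt).congr_fderiv ?_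
  ext v
  simp only [ContinuousLinearMap.comp_apply, _root_.smul_apply, innerSL_apply_apply, smul_eq_mul,
    nsmul_eq_mul, Nat.cast_ofNat]
  field_simp

lemma trace_fderiv_inv_sqrt_one_add_norm_sq_smul [FiniteDimensional ℝ E] {g : E → E} {x : E}
    (hg : DifferentiableAt ℝ g x) :
    LinearMap.trace ℝ E (fderiv ℝ (fun y => (√(1 + ‖g y‖ ^ 2))⁻¹ • g y) x) =
      (√(1 + ‖g x‖ ^ 2))⁻¹ * LinearMap.trace ℝ E (fderiv ℝ g x) -
        (√(1 + ‖g x‖ ^ 2) ^ 3)⁻¹ * ⟪g x, fderiv ℝ g x (g x)⟫_ℝ := by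
  have hflux := (hasFDerivAt_inv_sqrt_one_add_norm_sq hg.hasFDerivAt).fun_smul hg.hasFDerivAt
  rw [hflux.fderiv]
  simp [LinearMap.trace_smulRight, sub_eq_add_neg]

variable [CompleteSpace E] {u : E → ℝ} {x : E}

lemma contDiffAt_gradient {m n : WithTop ℕ∞} (hu : ContDiffAt ℝ n u x) (hmn : m + 1 ≤ n) :
    ContDiffAt ℝ m (∇ u) x :=
  (InnerProductSpace.toDual ℝ E).symm.contDiff.contDiffAt.comp x (hu.fderiv_right hmn)

lemma inner_fderiv_gradient (v w : E) :
    ⟪v, fderiv ℝ (∇ u) x w⟫_ℝ = fderiv ℝ (fderiv ℝ u) x w v := by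
  have hgradient : ∇ u = (InnerProductSpace.toDual ℝ E).symm ∘ fderiv ℝ u := rfl
  rw [hgradient, LinearIsometryEquiv.comp_fderiv, real_inner_comm]
  exact InnerProductSpace.toDual_symm_apply

end Gradient

section Translator

set_option maxSynthPendingDepth 3

variable {E ι : Type*} [NormedAddCommGroup E] [InnerProductSpace ℝ E] [Fintype ι]

/-- Evaluation of a bilinear form on the diagonal, `A ↦ A(v, v)`. -/
def evalDiag (v : E) : (E →L[ℝ] E →L[ℝ] ℝ) →L[ℝ] ℝ :=
  (ContinuousLinearMap.apply ℝ ℝ v).comp (ContinuousLinearMap.apply ℝ (E →L[ℝ] ℝ) v)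

lemma evalDiag_apply (v : E) (A : E →L[ℝ] E →L[ℝ] ℝ) : evalDiag v A = A v v := rfl

/-- The trace of a bilinear form with respect to the inner product. -/
def bilinTrace (b : OrthonormalBasis ι ℝ E) : (E →L[ℝ] E →L[ℝ] ℝ) →L[ℝ] ℝ :=
  ∑ i, evalDiag (b i)

lemma bilinTrace_apply (b : OrthonormalBasis ι ℝ E) (A : E →L[ℝ] E →L[ℝ] ℝ) :
    bilinTrace b A = ∑ i, A (b i) (b i) := by
  simp [bilinTrace, evalDiag_apply]

/-- The principal part `A ↦ (1 + |p|²) tr A - A(p, p)` of the graphical translator equation, as a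
functional of the Hessian `A` at a point where the gradient is `p`. -/
def translatorPrincipalPart (b : OrthonormalBasis ι ℝ E) (p : E) :
    (E →L[ℝ] E →L[ℝ] ℝ) →L[ℝ] ℝ :=
  (1 + ‖p‖ ^ 2) • bilinTrace b - evalDiag p

lemma translatorPrincipalPart_apply (b : OrthonormalBasis ι ℝ E) (p : E)
    (A : E →L[ℝ] E →L[ℝ] ℝ) :
    translatorPrincipalPart b p A = (1 + ‖p‖ ^ 2) * bilinTrace b A - A p p := rfl

lemma contDiff_translatorPrincipalPart (b : OrthonormalBasis ι ℝ E) {n : WithTop ℕ∞} :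
    ContDiff ℝ n (translatorPrincipalPart b) := by
  have hnorm : ContDiff ℝ n fun p : E => ‖p‖ ^ 2 := contDiff_norm_sq ℝ
  unfold translatorPrincipalPart evalDiag
  fun_prop

lemma translatorPrincipalPart_sub (b : OrthonormalBasis ι ℝ E) {p r : E}
    {A B : E →L[ℝ] E →L[ℝ] ℝ} (hBsymm : ∀ v w, B v w = B w v)
    (hA : translatorPrincipalPart b p A = 1 + ‖p‖ ^ 2)
    (hB : translatorPrincipalPart b r B = 1 + ‖r‖ ^ 2) :
    translatorPrincipalPart b p (A - B) =
      B (p + r) (p - r) + (1 - bilinTrace b B) * ⟪p + r, p - r⟫_ℝ := by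
  have hinner : ⟪p + r, p - r⟫_ℝ = ‖p‖ ^ 2 - ‖r‖ ^ 2 := by
    rw [inner_add_left, inner_sub_right, inner_sub_right, real_inner_self_eq_norm_sq,
      real_inner_self_eq_norm_sq, real_inner_comm r p]
    ring
  have hBdiff : B (p + r) (p - r) = B p p - B r r := by
    simp only [map_add, map_sub, _root_.add_apply, hBsymm r p]
    ring
  rw [translatorPrincipalPart_apply] at hA hB
  rw [hinner, hBdiff, translatorPrincipalPart_apply, map_sub, _root_.sub_apply, _root_.sub_apply]
  linear_combination hA - hB

variable [CompleteSpace E]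

/-- The graphical translator equation `div (∇u / √(1 + |∇u|²)) = 1 / √(1 + |∇u|²)` over a
finite-dimensional inner product space, the divergence being the trace of the derivative. -/
def IsGraphicalTranslatorAt (u : E → ℝ) (x : E) : Prop :=
  LinearMap.trace ℝ E (fderiv ℝ (fun y => (√(1 + ‖∇ u y‖ ^ 2))⁻¹ • ∇ u y) x) =
    (√(1 + ‖∇ u x‖ ^ 2))⁻¹

lemma translatorEq_iff_isGraphicalTranslatorAt {u : EuclideanSpace ℝ (Fin 3) → ℝ}
    {x : EuclideanSpace ℝ (Fin 3)} : TranslatorEq u x ↔ IsGraphicalTranslatorAt u x := by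
  rw [TranslatorEq, sub_eq_zero, divg, IsGraphicalTranslatorAt,
    LinearMap.trace_eq_sum_inner _ (EuclideanSpace.basisFun (Fin 3) ℝ)]
  simp [EuclideanSpace.inner_single_left]

/-- The first-order coefficient `B(s, ·)♯ + (1 - tr B) s` of the linear equation satisfied by the
difference of two translators, where `s` is the sum of their gradients and `B` the Hessian of the
second one. -/
def translatorDrift (b : OrthonormalBasis ι ℝ E) (s : E) (B : E →L[ℝ] E →L[ℝ] ℝ) : E :=
  (InnerProductSpace.toDual ℝ E).symm (B s) + (1 - bilinTrace b B) • s

lemma contDiffAt_translatorDrift (b : OrthonormalBasis ι ℝ E) {n : WithTop ℕ∞} {s : E → E}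
    {B : E → E →L[ℝ] E →L[ℝ] ℝ} {x : E} (hs : ContDiffAt ℝ n s x) (hB : ContDiffAt ℝ n B x) :
    ContDiffAt ℝ n (fun y => translatorDrift b (s y) (B y)) x := by
  have hdual : ContDiffAt ℝ n (fun y => (InnerProductSpace.toDual ℝ E).symm (B y (s y))) x :=
    (InnerProductSpace.toDual ℝ E).symm.contDiff.contDiffAt.comp x (hB.clm_apply hs)
  unfold translatorDrift
  fun_prop

lemma inner_translatorDrift (b : OrthonormalBasis ι ℝ E) (s v : E) (B : E →L[ℝ] E →L[ℝ] ℝ) :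
    ⟪translatorDrift b s B, v⟫_ℝ = B s v + (1 - bilinTrace b B) * ⟪s, v⟫_ℝ := by
  rw [translatorDrift, inner_add_left, InnerProductSpace.toDual_symm_apply, real_inner_smul_left]

namespace IsGraphicalTranslatorAt

lemma translatorPrincipalPart_eq (b : OrthonormalBasis ι ℝ E) {u : E → ℝ} {x : E}
    (h : IsGraphicalTranslatorAt u x) (hu : ContDiffAt ℝ 2 u x) :
    translatorPrincipalPart b (∇ u x) (fderiv ℝ (fderiv ℝ u) x) = 1 + ‖∇ u x‖ ^ 2 := by
  have : FiniteDimensional ℝ E := .of_basis b.toBasis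
  have hgrad : DifferentiableAt ℝ (∇ u) x :=
    (contDiffAt_gradient (m := 1) hu (by norm_num)).differentiableAt (by simp)
  have htrace : LinearMap.trace ℝ E (fderiv ℝ (∇ u) x) =
      bilinTrace b (fderiv ℝ (fderiv ℝ u) x) := by
    rw [LinearMap.trace_eq_sum_inner _ b, bilinTrace_apply]
    exact Finset.sum_congr rfl fun i _ => inner_fderiv_gradient _ _
  rw [IsGraphicalTranslatorAt, trace_fderiv_inv_sqrt_one_add_norm_sq_smul hgrad, htrace,
    inner_fderiv_gradient] at h
  field_simp at h
  rw [Real.sq_sqrt (by positivity)] at h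
  rw [translatorPrincipalPart_apply, h]

lemma translatorPrincipalPart_fderiv_fderiv_sub (b : OrthonormalBasis ι ℝ E) {u₁ u₂ : E → ℝ}
    {x : E} (h₁ : IsGraphicalTranslatorAt u₁ x) (h₂ : IsGraphicalTranslatorAt u₂ x)
    (hu₁ : ContDiffAt ℝ 2 u₁ x) (hu₂ : ContDiffAt ℝ 2 u₂ x) :
    translatorPrincipalPart b (∇ u₁ x) (fderiv ℝ (fderiv ℝ fun y => u₁ y - u₂ y) x) =
      fderiv ℝ (fun y => u₁ y - u₂ y) x
        (translatorDrift b (∇ u₁ x + ∇ u₂ x) (fderiv ℝ (fderiv ℝ u₂) x)) := by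
  have hfderiv : fderiv ℝ (fun y => u₁ y - u₂ y) =ᶠ[𝓝 x] fderiv ℝ u₁ - fderiv ℝ u₂ := by
    filter_upwards [hu₁.eventually (by simp), hu₂.eventually (by simp)] with y hy₁ hy₂
    exact fderiv_fun_sub (hy₁.differentiableAt (by simp)) (hy₂.differentiableAt (by simp))
  have hdiff {u : E → ℝ} (hu : ContDiffAt ℝ 2 u x) : DifferentiableAt ℝ (fderiv ℝ u) x :=
    (hu.fderiv_right (m := 1) (by norm_num)).differentiableAt (by simp)
  rw [hfderiv.fderiv_eq, fderiv_sub (hdiff hu₁) (hdiff hu₂),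
    translatorPrincipalPart_sub b (hu₂.isSymmSndFDerivAt (by simp))
      (h₁.translatorPrincipalPart_eq b hu₁) (h₂.translatorPrincipalPart_eq b hu₂),
    ← inner_translatorDrift, inner_sub_right, real_inner_comm, inner_gradient_left,
    real_inner_comm, inner_gradient_left, hfderiv.self_of_nhds, Pi.sub_apply, _root_.sub_apply]

end IsGraphicalTranslatorAt

theorem stmt_13_general (b : OrthonormalBasis ι ℝ E) {u₁ u₂ : E → ℝ} {x : E} {d : ℕ} (hd : 2 ≤ d)
    (hu₁ : ContDiffAt ℝ d u₁ x) (hu₂ : ContDiffAt ℝ d u₂ x)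
    (h₁ : ∀ᶠ y in 𝓝 x, IsGraphicalTranslatorAt u₁ y)
    (h₂ : ∀ᶠ y in 𝓝 x, IsGraphicalTranslatorAt u₂ y)
    (hcrit : ∇ u₁ x = 0)
    (hvanish : ∀ k < d, iteratedFDeriv ℝ k (fun y => u₁ y - u₂ y) x = 0) (m : Fin d → E) :
    ∑ i, iteratedFDeriv ℝ d (fun y => u₁ y - u₂ y) x
      (fun j => if (j : ℕ) < 2 then b i else m j) = 0 := by
  obtain ⟨n, rfl⟩ := Nat.exists_eq_add_of_le' hd
  have hargs (i : ι) : (fun j : Fin (n + 2) => if (j : ℕ) < 2 then b i else m j) =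
      Fin.cons (b i) (Fin.cons (b i) fun j => m j.succ.succ) := by
    ext j : 1
    refine Fin.cases ?_ (Fin.cases ?_ fun j => ?_) j <;> simp
  have hC2 {u : E → ℝ} (hu : ContDiffAt ℝ (n + 2 : ℕ) u x) : ContDiffAt ℝ 2 u x :=
    hu.of_le (mod_cast Nat.le_add_left 2 n)
  have hgrad {u : E → ℝ} (hu : ContDiffAt ℝ (n + 2 : ℕ) u x) : ContDiffAt ℝ n (∇ u) x :=
    contDiffAt_gradient hu (by norm_cast; lia)
  have hhess : ContDiffAt ℝ n (fderiv ℝ (fderiv ℝ u₂)) x :=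
    (hu₂.fderiv_right (m := (n + 1 : ℕ)) (by norm_cast)).fderiv_right (by norm_cast)
  have hlinear : ∀ᶠ y in 𝓝 x,
      translatorPrincipalPart b (∇ u₁ y) (fderiv ℝ (fderiv ℝ fun y => u₁ y - u₂ y) y) =
        fderiv ℝ (fun y => u₁ y - u₂ y) y
          (translatorDrift b (∇ u₁ y + ∇ u₂ y) (fderiv ℝ (fderiv ℝ u₂) y)) := by
    filter_upwards [h₁, h₂, (hC2 hu₁).eventually (by simp), (hC2 hu₂).eventually (by simp)]
      with y h₁ h₂ hu₁ hu₂
    exact h₁.translatorPrincipalPart_fderiv_fderiv_sub b h₂ hu₁ hu₂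
  have hleading := principalPart_comp_iteratedFDeriv_eq_zero
    ((contDiff_translatorPrincipalPart b).contDiffAt.comp x (hgrad hu₁))
    (contDiffAt_translatorDrift b ((hgrad hu₁).add (hgrad hu₂)) hhess) (hu₁.sub hu₂) hlinear hvanish
  simp only [hargs, ← iteratedFDeriv_fderiv_fderiv_apply (hu₁.sub hu₂)]
  simpa [hcrit, translatorPrincipalPart_apply, bilinTrace_apply] using
    congrArg (· fun j => m j.succ.succ) hleading

end Translator

/-- If two smooth graphical translators agree to order `d` at a common critical point, then the
degree-`d` term of the Taylor expansion of their difference is a harmonic polynomial. -/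
theorem stmt_13 (Ω : Set (EuclideanSpace ℝ (Fin 3))) (hopen : IsOpen Ω)
    (h0 : (0 : EuclideanSpace ℝ (Fin 3)) ∈ Ω)
    (u₁ u₂ : EuclideanSpace ℝ (Fin 3) → ℝ)
    (h1smooth : ContDiffOn ℝ (⊤ : ℕ∞) u₁ Ω) (h2smooth : ContDiffOn ℝ (⊤ : ℕ∞) u₂ Ω)
    (h1eq : ∀ x ∈ Ω, TranslatorEq u₁ x) (h2eq : ∀ x ∈ Ω, TranslatorEq u₂ x)
    (hcrit : gradient u₁ 0 = 0)
    (d : ℕ) (hd : 2 ≤ d)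
    (hvanish : ∀ k : ℕ, k < d → iteratedFDeriv ℝ k (fun x => u₁ x - u₂ x) 0 = 0) :
    ∀ x : EuclideanSpace ℝ (Fin 3),
      ∑ i : Fin 3,
        iteratedFDeriv ℝ d (fun y => u₁ y - u₂ y) 0
          (fun j : Fin d => if (j : ℕ) < 2 then EuclideanSpace.single i 1 else x) = 0 := by
  intro x
  have hnhds := hopen.mem_nhds h0
  simpa using stmt_13_general (EuclideanSpace.basisFun (Fin 3) ℝ) hd
    ((h1smooth.contDiffAt hnhds).of_le (mod_cast le_top))
    ((h2smooth.contDiffAt hnhds).of_le (mod_cast le_top))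
    (eventually_of_mem hnhds fun y hy => translatorEq_iff_isGraphicalTranslatorAt.1 (h1eq y hy))
    (eventually_of_mem hnhds fun y hy => translatorEq_iff_isGraphicalTranslatorAt.1 (h2eq y hy))
    hcrit hvanish fun _ => x

end
end

section
/- Let c > 0, C₁ ≥ 0 and τ₀ ≤ −1. Let F : (−∞,τ₀] → ℝ be differentiable with e^{−cτ²/2}·F(τ) → 0 as τ → −∞, let G : (−∞,τ₀] → [0,∞), and let h : (−∞,τ₀] → [0,∞) be nondecreasing. Assume that for every τ ≤ τ₀ the quantity S(τ) := sup_{τ′ ≤ τ} |τ′|^{−1/2}·G(τ′) is finite and that F′(τ) ≤ −c·|τ|·F(τ) + C₁·|τ|^{−1}·(G(τ) + h(τ)²). Then for every τ ≤ τ₀, F(τ) ≤ (C₁/c)·(|τ|^{−3/2}·S(τ) + |τ|^{−2}·h(τ)²). -/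
open Filter

/-- The running supremum `S(τ) = sup_{τ′ ≤ τ} |τ′|^{−1/2} G(τ′)`. -/
noncomputable def runSupS (G : ℝ → ℝ) (τ : ℝ) : ℝ :=
  sSup ((fun τ' => |τ'| ^ (-(1 : ℝ) / 2) * G τ') '' Set.Iic τ)

/-!
The function `exp (-c s² / 2)` is an integrating factor for `F' ≤ c s F + …`. Dividing the forcing
term by `c |s|` leaves a quantity which, for all `s ≤ T`, is at most the asserted bound `K` at time
`T`, because the powers of `|s|` that remain after extracting the supremum are negative. Hence
`exp (-c s² / 2) (F s - K)` is nonincreasing on `(-∞, T]`. It tends to `0` at `-∞`, so it is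
nonpositive at `T`.
-/

section Comparison

open Set Topology

variable {F F' : ℝ → ℝ}

lemma antitoneOn_exp_mul_of_deriv_add_mul_nonpos {A a : ℝ → ℝ} {D : Set ℝ} (hD : Convex ℝ D)
    (hA : ∀ s ∈ D, HasDerivWithinAt A (a s) D s) (hF : ∀ s ∈ D, HasDerivWithinAt F (F' s) D s)
    (hineq : ∀ s ∈ D, F' s + a s * F s ≤ 0) :
    AntitoneOn (fun s => Real.exp (A s) * F s) D := by
  have hderiv (s) (hs : s ∈ D) := (hA s hs).exp.mul (hF s hs)
  refine antitoneOn_of_hasDerivWithinAt_nonpos hD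
    (fun s hs => (hderiv s hs).continuousWithinAt)
    (fun s hs => (hderiv s (interior_subset hs)).mono interior_subset) fun s hs => ?_
  calc Real.exp (A s) * a s * F s + Real.exp (A s) * F' s
      = Real.exp (A s) * (F' s + a s * F s) := by ring
    _ ≤ 0 := mul_nonpos_of_nonneg_of_nonpos (Real.exp_nonneg _) (hineq s (interior_subset hs))

lemma le_of_antitoneOn_Iic_of_tendsto_atBot {α β : Type*} [Preorder α] [IsCodirectedOrder α]
    [Preorder β] [TopologicalSpace β] [ClosedIciTopology β] {f : α → β} {T : α} {l : β}
    (hf : AntitoneOn f (Iic T)) (hlim : Tendsto f atBot (𝓝 l)) : f T ≤ l :=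
  have : Nonempty α := ⟨T⟩
  ge_of_tendsto hlim <| (eventually_le_atBot T).mono fun _ hs => hf hs self_mem_Iic hs

lemma tendsto_exp_neg_mul_sq_div_two_atBot {c : ℝ} (hc : 0 < c) :
    Tendsto (fun s : ℝ => Real.exp (-c * s ^ 2 / 2)) atBot (𝓝 0) := by
  refine ((tendsto_rpow_abs_mul_exp_neg_mul_sq_cocompact (half_pos hc) 0).mono_left
    atBot_le_cocompact).congr fun s => ?_
  rw [Real.rpow_zero, one_mul]
  ring_nf

lemma le_of_deriv_le_mul_sub_of_tendsto_gaussian {c K T : ℝ} (hc : 0 < c)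
    (hF : ∀ s ≤ T, HasDerivWithinAt F (F' s) (Iic T) s)
    (hFlim : Tendsto (fun s => Real.exp (-c * s ^ 2 / 2) * F s) atBot (𝓝 0))
    (hineq : ∀ s ≤ T, F' s ≤ c * s * (F s - K)) : F T ≤ K := by
  have hexponent (s : ℝ) : HasDerivAt (fun s => -c * s ^ 2 / 2) (-c * s) s :=
    (((hasDerivAt_pow 2 s).const_mul (-c)).div_const 2).congr_deriv (by norm_num; ring)
  have hanti : AntitoneOn (fun s => Real.exp (-c * s ^ 2 / 2) * (F s - K)) (Iic T) :=
    antitoneOn_exp_mul_of_deriv_add_mul_nonpos (convex_Iic T)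
      (fun s _ => (hexponent s).hasDerivWithinAt) (fun s hs => (hF s hs).sub_const K)
      fun s hs => by linarith [hineq s hs]
  have hlim : Tendsto (fun s => Real.exp (-c * s ^ 2 / 2) * (F s - K)) atBot (𝓝 0) := by
    simpa only [mul_sub, zero_mul, sub_zero] using
      hFlim.sub ((tendsto_exp_neg_mul_sq_div_two_atBot hc).mul_const K)
  have hnonpos := le_of_antitoneOn_Iic_of_tendsto_atBot hanti hlim
  exact sub_nonpos.mp (nonpos_of_mul_nonpos_right hnonpos (Real.exp_pos _))

end Comparison

lemma rpow_add_mul_le_rpow_mul {t r a b g S : ℝ} (ht : 0 < t) (htr : t ≤ r) (ha : a ≤ 0)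
    (hS : 0 ≤ S) (hg : r ^ b * g ≤ S) : r ^ (a + b) * g ≤ t ^ a * S := by
  have hr : 0 < r := ht.trans_le htr
  calc r ^ (a + b) * g = r ^ a * (r ^ b * g) := by rw [Real.rpow_add hr, mul_assoc]
    _ ≤ r ^ a * S := by gcongr
    _ ≤ t ^ a * S := mul_le_mul_of_nonneg_right (Real.rpow_le_rpow_of_nonpos ht htr ha) hS

lemma inv_mul_add_le_mul_rpow_add_rpow {t r g S k H : ℝ} (ht : 0 < t) (htr : t ≤ r)
    (hS : 0 ≤ S) (hg : r ^ (-(1 : ℝ) / 2) * g ≤ S) (hH : 0 ≤ H) (hk : k ≤ H) :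
    r⁻¹ * (g + k) ≤ r * (t ^ (-(3 : ℝ) / 2) * S + t ^ (-(2 : ℝ)) * H) := by
  have hr : 0 < r := ht.trans_le htr
  have hgS : r ^ (-(2 : ℝ)) * g ≤ t ^ (-(3 : ℝ) / 2) * S := by
    convert rpow_add_mul_le_rpow_mul (a := -3 / 2) ht htr (by norm_num) hS hg using 3
    norm_num
  have hkH : r ^ (-(2 : ℝ)) * k ≤ t ^ (-(2 : ℝ)) * H := by
    simpa only [add_zero] using
      rpow_add_mul_le_rpow_mul (a := -2) (b := 0) ht htr (by norm_num) hH (by simpa using hk)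
  have hinv : r⁻¹ = r * r ^ (-(2 : ℝ)) := by
    rw [← Real.rpow_one_add' hr.le (by norm_num), ← Real.rpow_neg_one]
    norm_num
  calc r⁻¹ * (g + k) = r * (r ^ (-(2 : ℝ)) * g + r ^ (-(2 : ℝ)) * k) := by rw [hinv]; ring
    _ ≤ r * (t ^ (-(3 : ℝ) / 2) * S + t ^ (-(2 : ℝ)) * H) := by gcongr

lemma rpow_mul_le_runSupS {G : ℝ → ℝ} {T s : ℝ}
    (hbdd : BddAbove ((fun s => |s| ^ (-(1 : ℝ) / 2) * G s) '' Set.Iic T)) (hs : s ≤ T) :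
    |s| ^ (-(1 : ℝ) / 2) * G s ≤ runSupS G T :=
  le_csSup hbdd (Set.mem_image_of_mem _ hs)

theorem stmt_14_general {c C₁ T : ℝ} (hc : 0 < c) (hC₁ : 0 ≤ C₁) (hT : T < 0)
    {F F' G h : ℝ → ℝ}
    (hF : ∀ s ≤ T, HasDerivWithinAt F (F' s) (Set.Iic T) s)
    (hFlim : Tendsto (fun s => Real.exp (-c * s ^ 2 / 2) * F s) atBot (nhds 0))
    (hG : 0 ≤ G T)
    (hh : ∀ s ≤ T, |h s| ≤ |h T|)
    (hbdd : BddAbove ((fun s => |s| ^ (-(1 : ℝ) / 2) * G s) '' Set.Iic T))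
    (hineq : ∀ s ≤ T, F' s ≤ -c * |s| * F s + C₁ * |s|⁻¹ * (G s + h s ^ 2)) :
    F T ≤ C₁ / c * (|T| ^ (-(3 : ℝ) / 2) * runSupS G T + |T| ^ (-(2 : ℝ)) * h T ^ 2) := by
  set B := |T| ^ (-(3 : ℝ) / 2) * runSupS G T + |T| ^ (-(2 : ℝ)) * h T ^ 2
  have hS : 0 ≤ runSupS G T :=
    (mul_nonneg (by positivity) hG).trans (rpow_mul_le_runSupS hbdd le_rfl)
  refine le_of_deriv_le_mul_sub_of_tendsto_gaussian hc hF hFlim fun s hs => ?_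
  have hs_neg : s < 0 := hs.trans_lt hT
  have hforcing : |s|⁻¹ * (G s + h s ^ 2) ≤ |s| * B :=
    inv_mul_add_le_mul_rpow_add_rpow (abs_pos.mpr hT.ne)
      (abs_le_abs_of_nonpos hT.le hs) hS (rpow_mul_le_runSupS hbdd hs)
      (sq_nonneg _) (sq_le_sq.mpr (hh s hs))
  calc F' s ≤ -c * |s| * F s + C₁ * (|s|⁻¹ * (G s + h s ^ 2)) := by
        simpa only [mul_assoc] using hineq s hs
    _ ≤ -c * |s| * F s + C₁ * (|s| * B) := by gcongr
    _ = c * s * (F s - C₁ / c * B) := by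
        rw [abs_of_neg hs_neg]
        field_simp
        ring

/-- Gaussian-weighted differential-inequality argument from the energy estimate in the tip
region. -/
theorem stmt_14 (c C₁ τ₀ : ℝ) (hc : 0 < c) (hC₁ : 0 ≤ C₁) (hτ₀ : τ₀ ≤ -1)
    (F G h : ℝ → ℝ)
    (hFdiff : ∀ τ ≤ τ₀, DifferentiableAt ℝ F τ)
    (hFlim : Tendsto (fun τ => Real.exp (-c * τ ^ 2 / 2) * F τ) atBot (nhds 0))
    (hG : ∀ τ ≤ τ₀, 0 ≤ G τ)
    (hh : ∀ τ ≤ τ₀, 0 ≤ h τ)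
    (hmono : MonotoneOn h (Set.Iic τ₀))
    (hSfin : ∀ τ ≤ τ₀, BddAbove ((fun τ' => |τ'| ^ (-(1 : ℝ) / 2) * G τ') '' Set.Iic τ))
    (hineq : ∀ τ ≤ τ₀,
      deriv F τ ≤ -c * |τ| * F τ + C₁ * |τ|⁻¹ * (G τ + (h τ) ^ 2)) :
    ∀ τ ≤ τ₀,
      F τ ≤ C₁ / c * (|τ| ^ (-(3 : ℝ) / 2) * runSupS G τ + |τ| ^ (-(2 : ℝ)) * (h τ) ^ 2) := by
  intro τ hτ
  exact stmt_14_general hc hC₁ (by linarith)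
    (fun s hs => (hFdiff s (hs.trans hτ)).hasDerivAt.hasDerivWithinAt) hFlim (hG τ hτ)
    (fun s hs => abs_le_abs_of_nonneg (hh s (hs.trans hτ)) (hmono (hs.trans hτ) hτ hs))
    (hSfin τ hτ) (fun s hs => hineq s (hs.trans hτ))
end
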